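/- Let d ≥ 3, p ∈ (1,∞) and s ∈ [1,∞), with p' = p/(p−1) and s' = s/(s−1). Then for any T > 0 there exists a divergence-free vector field u ∈ L^1(0,T;W^{1,p'}(𝕋^d;ℝ^d)) ∩ L^{s'}(0,T;L^{p'}(𝕋^d;ℝ^d)) such that uniqueness of weak solutions of the transport equation ∂_tρ + u·∇ρ = 0 fails in the class L^s(0,T;L^p(𝕋^d)): there exist two weak solutions in L^s(0,T;L^p(𝕋^d)) with the same initial data that do not coincide. -/

import Mathlib

open MeasureTheory ENNReal

noncomputable section

/-- Points of `ℝ^d` (representing the torus `𝕋^d = ℝ^d/ℤ^d` via periodic functions). -/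
abbrev Vec (d : ℕ) := Fin d → ℝ

/-- One fundamental domain `[0,1]^d` of the torus. -/
def fundCube (d : ℕ) : Set (Vec d) := Set.Icc 0 1

/-- `ℤ^d`-periodicity of a function on `ℝ^d`. -/
def ZPer {d : ℕ} {α : Type*} (f : Vec d → α) : Prop :=
  ∀ (x : Vec d) (k : Fin d → ℤ), f (x + fun i => (k i : ℝ)) = f x

/-- Generic `L^p` "norm" (`p ∈ [1,∞]` as `ℝ≥0∞`) of an `ℝ≥0∞`-valued function. -/
def eLpGen {α : Type*} [MeasurableSpace α] (μ : Measure α) (p : ℝ≥0∞)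
    (g : α → ℝ≥0∞) : ℝ≥0∞ :=
  if p = ∞ then essSup g μ
  else (∫⁻ a, g a ^ p.toReal ∂μ) ^ (1 / p.toReal)

/-- Spatial `L^p` norm over one fundamental domain of the torus. -/
def spLp {d : ℕ} {E : Type*} [NormedAddCommGroup E] (p : ℝ≥0∞)
    (f : Vec d → E) : ℝ≥0∞ :=
  eLpGen (volume.restrict (fundCube d)) p (fun x => (‖f x‖₊ : ℝ≥0∞))

/-- `W^{1,q}` norm of a vector field on the torus: `‖u‖_{L^q} + ‖∇u‖_{L^q}`. -/
def W1qNorm {d : ℕ} (q : ℝ≥0∞) (u : Vec d → Vec d) : ℝ≥0∞ :=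
  spLp q u + spLp q (fderiv ℝ u)

/-- `L^s(0,T;L^p(𝕋^d))` norm. -/
def LsLpT {d : ℕ} {E : Type*} [NormedAddCommGroup E] (T : ℝ) (s p : ℝ≥0∞)
    (f : ℝ → Vec d → E) : ℝ≥0∞ :=
  eLpGen (volume.restrict (Set.Ioo 0 T)) s (fun t => spLp p (f t))

/-- `L^s(0,T;W^{1,q}(𝕋^d))` norm. -/
def LsW1qT {d : ℕ} (T : ℝ) (s q : ℝ≥0∞) (u : ℝ → Vec d → Vec d) : ℝ≥0∞ :=
  eLpGen (volume.restrict (Set.Ioo 0 T)) s (fun t => W1qNorm q (u t))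

/-- Gradient of a scalar function on `ℝ^d`. -/
def gradV {d : ℕ} (f : Vec d → ℝ) (x : Vec d) : Vec d :=
  fun i => fderiv ℝ f x (Pi.single i 1)

/-- Divergence of a vector field on `ℝ^d`. -/
def divV {d : ℕ} (v : Vec d → Vec d) (x : Vec d) : ℝ :=
  ∑ i, fderiv ℝ (fun y => v y i) x (Pi.single i 1)

/-- Laplacian of a scalar function on `ℝ^d`. -/
def laplV {d : ℕ} (f : Vec d → ℝ) : Vec d → ℝ := divV (gradV f)

/-- Euclidean dot product on `ℝ^d`. -/
def dotV {d : ℕ} (a b : Vec d) : ℝ := ∑ i, a i * b i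

/-- `C^N` norm over one fundamental domain. -/
def CkN {d : ℕ} (N : ℕ) (φ : Vec d → ℝ) : ℝ :=
  ∑ i ∈ Finset.range (N + 1), sSup ((fun x => ‖iteratedFDeriv ℝ i φ x‖) '' fundCube d)

/-- `W^{m,r}` norm over one fundamental domain. -/
def SobN {d : ℕ} {E : Type*} [NormedAddCommGroup E] [NormedSpace ℝ E]
    (m : ℕ) (r : ℝ≥0∞) (f : Vec d → E) : ℝ≥0∞ :=
  ∑ i ∈ Finset.range (m + 1), spLp r (iteratedFDeriv ℝ i f)

/-- Test functions for the weak formulation on `[0,T) × 𝕋^d`: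
smooth, `ℤ^d`-periodic in space, vanishing for `t` near `T` (compact support in `[0,T)`). -/
def IsTest (d : ℕ) (T : ℝ) (φ : ℝ → Vec d → ℝ) : Prop :=
  ContDiff ℝ (⊤ : ℕ∞) (Function.uncurry φ) ∧ (∀ t, ZPer (φ t)) ∧
    ∃ T', T' < T ∧ ∀ t, T' ≤ t → ∀ x, φ t x = 0

/-- `ρ` is a weak solution on `(0,T) × 𝕋^d` of `∂_t ρ + u·∇ρ = 0` with initial data `ρ₀`. -/
def IsWeakSolution (d : ℕ) (T : ℝ) (u : ℝ → Vec d → Vec d)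
    (ρ : ℝ → Vec d → ℝ) (ρ₀ : Vec d → ℝ) : Prop :=
  ∀ φ : ℝ → Vec d → ℝ, IsTest d T φ →
    ∫ x in fundCube d, ρ₀ x * φ 0 x =
      ∫ t in Set.Ioo 0 T, ∫ x in fundCube d,
        ρ t x * (deriv (fun τ => φ τ x) t + fderiv ℝ (φ t) x (u t x))

/-- `u` is divergence free in the sense of distributions on `(0,T) × 𝕋^d`. -/
def WeaklyDivFree (d : ℕ) (T : ℝ) (u : ℝ → Vec d → Vec d) : Prop :=
  ∀ φ : ℝ → Vec d → ℝ, ContDiff ℝ (⊤ : ℕ∞) (Function.uncurry φ) →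
    (∀ t, ZPer (φ t)) →
    ∫ t in Set.Ioo 0 T, ∫ x in fundCube d, fderiv ℝ (φ t) x (u t x) = 0

end

/-!
Convex integration with concentration in space and in time. A smooth solution of
`∂_t ρ + div (ρ u) = div R` with zero initial density is corrected by a density and a velocity that
oscillate in a coordinate plane, are concentrated on thin sets, and have a product of average `-R`.
The density correction is small in `L^s L^p` because `R` is small in `L¹`. For `s = 1` this gives no
smallness of the velocity correction in `L^{s'} L^{p'}`, so the velocity is divided by a large
factor and the density multiplied by the same factor, which the decay of `R` can absorb. The
gradient of the velocity is large, but only on so small a set of times that it is small in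
`L¹ L^{p'}`. A correction removes one component of a defect `R` pointing in two coordinate
directions, and the two are treated alternately. In the limit `R → 0` in `L¹`, which leaves a weak
solution with zero initial density; outside a small set of times it is uniformly close to the first
density of the sequence, hence different from the solution `0`.
-/

noncomputable section

namespace TransportNonuniqueness

variable {d : ℕ}

/-! ### Smooth functions of time and a point of the torus -/

/-- The algebra of smooth functions of `(t, x)` that are `ℤ^d`-periodic in `x`, that is, of smooth
functions on `ℝ × 𝕋^d`. -/
def smoothPeriodic (d : ℕ) : Subalgebra ℝ (ℝ × Vec d → ℝ) where
  carrier := {f | ContDiff ℝ (⊤ : ℕ∞) f ∧ ∀ t, ZPer fun x => f (t, x)}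
  mul_mem' hf hg := ⟨hf.1.mul hg.1, fun t x k => congr_arg₂ (· * ·) (hf.2 t x k) (hg.2 t x k)⟩
  add_mem' hf hg := ⟨hf.1.add hg.1, fun t x k => congr_arg₂ (· + ·) (hf.2 t x k) (hg.2 t x k)⟩
  algebraMap_mem' _ := ⟨contDiff_const, fun _ _ _ => rfl⟩

/-- Elements of `smoothPeriodic d`, applied as functions. -/
abbrev SmoothPer (d : ℕ) : Type := smoothPeriodic d

namespace SmoothPer

instance : CoeFun (SmoothPer d) fun _ => ℝ × Vec d → ℝ := ⟨Subtype.val⟩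

theorem contDiff (f : SmoothPer d) : ContDiff ℝ (⊤ : ℕ∞) f := f.2.1

theorem continuous (f : SmoothPer d) : Continuous f := f.contDiff.continuous

theorem differentiable (f : SmoothPer d) : Differentiable ℝ f :=
  f.contDiff.differentiable (by simp)

theorem zper (f : SmoothPer d) (t : ℝ) : ZPer fun x => f (t, x) := f.2.2 t

@[ext]
theorem ext {f g : SmoothPer d} (h : ∀ z, f z = g z) : f = g := Subtype.ext (funext h)

theorem fderiv_periodic (f : SmoothPer d) (t : ℝ) : ZPer fun x => fderiv ℝ f (t, x) := by
  intro x k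
  have hshift : (fun z => f (z + ((0 : ℝ), fun i => (k i : ℝ)))) = f := by
    funext z
    simpa [Prod.add_def] using f.zper z.1 z.2 k
  simpa [hshift] using
    (fderiv_comp_add_right (𝕜 := ℝ) (f := f) (x := (t, x)) ((0 : ℝ), fun i => (k i : ℝ))).symm

end SmoothPer

/-- The derivative in the direction `v` of `ℝ × ℝ^d`, as a derivation of `smoothPeriodic d`. -/
def dirDeriv (v : ℝ × Vec d) : Derivation ℝ (SmoothPer d) (SmoothPer d) :=
  Derivation.mk'
    { toFun f := ⟨fun z => fderiv ℝ f z v,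
        (f.contDiff.fderiv_right (m := (⊤ : ℕ∞)) (by simp)).clm_apply contDiff_const,
        fun t x k => congr_arg (· v) (f.fderiv_periodic t x k)⟩
      map_add' f g := SmoothPer.ext fun z => by
        simp [fderiv_add (f.differentiable z) (g.differentiable z)]
      map_smul' c f := SmoothPer.ext fun z => by
        simp [fderiv_const_smul (f.differentiable z)] }
    fun f g => SmoothPer.ext fun z => by
      simp [fderiv_mul (f.differentiable z) (g.differentiable z)]

theorem dirDeriv_apply (v : ℝ × Vec d) (f : SmoothPer d) (z : ℝ × Vec d) :
    dirDeriv v f z = fderiv ℝ f z v := rfl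

theorem dirDeriv_comm (v w : ℝ × Vec d) (f : SmoothPer d) :
    dirDeriv v (dirDeriv w f) = dirDeriv w (dirDeriv v f) := by
  ext z
  have hsymm : IsSymmSndFDerivAt ℝ f z :=
    f.contDiff.contDiffAt.isSymmSndFDerivAt (by
      simpa using WithTop.coe_le_coe.2 (le_top (a := (2 : ℕ∞))))
  have hdiff : DifferentiableAt ℝ (fderiv ℝ f) z :=
    (f.contDiff.fderiv_right (m := (⊤ : ℕ∞)) (by simp)).differentiable (by simp) z
  have key (a b : ℝ × Vec d) : dirDeriv a (dirDeriv b f) z = fderiv ℝ (fderiv ℝ f) z a b := by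
    change fderiv ℝ (fun y => fderiv ℝ f y b) z a = _
    simp [fderiv_clm_apply hdiff (differentiableAt_const b)]
  rw [key, key, hsymm.eq]

/-- The time derivative `∂_t`. -/
abbrev Dt : Derivation ℝ (SmoothPer d) (SmoothPer d) := dirDeriv (1, 0)

/-- The space derivative `∂_i`. -/
abbrev Dx (i : Fin d) : Derivation ℝ (SmoothPer d) (SmoothPer d) := dirDeriv (0, Pi.single i 1)

/-- A smooth function of time, seen as a function of time and space. -/
def ofTime (g : ℝ → ℝ) (hg : ContDiff ℝ (⊤ : ℕ∞) g) : SmoothPer d :=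
  ⟨fun z => g z.1, hg.comp contDiff_fst, fun _ _ _ => rfl⟩

/-- A smooth `1`-periodic function of the `j`-th coordinate, seen as a function of time and
space. -/
def ofCoord (j : Fin d) (q : ℝ → ℝ) (hq : ContDiff ℝ (⊤ : ℕ∞) q) (hper : q.Periodic 1) :
    SmoothPer d :=
  ⟨fun z => q (z.2 j), hq.comp ((contDiff_apply ℝ ℝ j).comp contDiff_snd), fun _ x k => by
    simpa using hper.int_mul (k j) (x j)⟩

theorem dirDeriv_ofTime (v : ℝ × Vec d) (g : ℝ → ℝ) (hg : ContDiff ℝ (⊤ : ℕ∞) g)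
    (z : ℝ × Vec d) : dirDeriv v (ofTime g hg) z = v.1 * deriv g z.1 := by
  have h : HasFDerivAt (fun z : ℝ × Vec d => g z.1) _ z :=
    (hg.differentiable (by simp) z.1).hasFDerivAt.comp z hasFDerivAt_fst
  change fderiv ℝ (fun z : ℝ × Vec d => g z.1) z v = _
  rw [h.fderiv, ContinuousLinearMap.comp_apply]
  exact fderiv_eq_smul_deriv v.1

theorem dirDeriv_ofCoord (v : ℝ × Vec d) (j : Fin d) (q : ℝ → ℝ) (hq : ContDiff ℝ (⊤ : ℕ∞) q)
    (hper : q.Periodic 1) (z : ℝ × Vec d) :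
    dirDeriv v (ofCoord j q hq hper) z = v.2 j * deriv q (z.2 j) := by
  have h : HasFDerivAt (fun z : ℝ × Vec d => q (z.2 j)) _ z :=
    (hq.differentiable (by simp) (z.2 j)).hasFDerivAt.comp z
      ((ContinuousLinearMap.proj (R := ℝ) (φ := fun _ : Fin d => ℝ) j).comp
        (ContinuousLinearMap.snd ℝ ℝ (Vec d))).hasFDerivAt
  change fderiv ℝ (fun z : ℝ × Vec d => q (z.2 j)) z v = _
  rw [h.fderiv, ContinuousLinearMap.comp_apply]
  exact fderiv_eq_smul_deriv (v.2 j)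

theorem Dx_ofTime (i : Fin d) (g : ℝ → ℝ) (hg : ContDiff ℝ (⊤ : ℕ∞) g) :
    Dx i (ofTime g hg) = 0 := by
  ext z
  simp [dirDeriv_ofTime]

theorem Dt_ofCoord (j : Fin d) (q : ℝ → ℝ) (hq : ContDiff ℝ (⊤ : ℕ∞) q) (hper : q.Periodic 1) :
    Dt (ofCoord j q hq hper) = 0 := by
  ext z
  simp [dirDeriv_ofCoord]

theorem Dx_ofCoord_self (j : Fin d) (q : ℝ → ℝ) (hq : ContDiff ℝ (⊤ : ℕ∞) q)
    (hper : q.Periodic 1) (z : ℝ × Vec d) : Dx j (ofCoord j q hq hper) z = deriv q (z.2 j) := by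
  simp [dirDeriv_ofCoord]

theorem Dx_ofCoord_of_ne {i j : Fin d} (hij : i ≠ j) (q : ℝ → ℝ) (hq : ContDiff ℝ (⊤ : ℕ∞) q)
    (hper : q.Periodic 1) : Dx i (ofCoord j q hq hper) = 0 := by
  ext z
  simp [dirDeriv_ofCoord, hij.symm]

theorem exists_add_int_mem_fundCube (x : Vec d) :
    ∃ k : Fin d → ℤ, (x + fun i => (k i : ℝ)) ∈ fundCube d := by
  refine ⟨fun i => -⌊x i⌋, fun i => ?_, fun i => ?_⟩ <;>
    simp [(Int.fract_lt_one (x i)).le, ← sub_eq_add_neg]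

namespace SmoothPer

/-- The real power `f ^ α` of a positive function. -/
def rpow (f : SmoothPer d) (hf : ∀ z, 0 < f z) (α : ℝ) : SmoothPer d :=
  ⟨fun z => f z ^ α, f.contDiff.rpow_const_of_ne fun z => (hf z).ne', fun t x k =>
    congr_arg (· ^ α) (f.zper t x k)⟩

theorem exists_bound (f : SmoothPer d) (T : ℝ) :
    ∃ H : ℝ, ∀ t ∈ Set.Icc 0 T, ∀ x, |f (t, x)| ≤ H := by
  obtain ⟨H, hH⟩ := (isCompact_Icc.prod isCompact_Icc :
    IsCompact (Set.Icc (0 : ℝ) T ×ˢ fundCube d)).exists_bound_of_continuousOn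
      f.continuous.continuousOn
  refine ⟨H, fun t ht x => ?_⟩
  obtain ⟨k, hk⟩ := exists_add_int_mem_fundCube x
  exact (congr_arg (|·|) (f.zper t x k)).ge.trans (hH (t, _) ⟨ht, hk⟩)

theorem exists_common_bound (S : Finset (SmoothPer d)) (T : ℝ) :
    ∃ H : ℝ, 1 ≤ H ∧ ∀ f ∈ S, ∀ t ∈ Set.Icc 0 T, ∀ x, |f (t, x)| ≤ H := by
  choose H hH using fun f : SmoothPer d => f.exists_bound T
  obtain ⟨K, hK⟩ := (S.finite_toSet.image H).bddAbove
  exact ⟨max K 1, le_max_right _ _, fun f hf t ht x => (hH f t ht x).trans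
    ((hK (Set.mem_image_of_mem H hf)).trans (le_max_left _ _))⟩

theorem exists_pos_le (f : SmoothPer d) (hf : ∀ z, 0 < f z) (T : ℝ) :
    ∃ c : ℝ, 0 < c ∧ ∀ t ∈ Set.Icc 0 T, ∀ x, c ≤ f (t, x) := by
  obtain ⟨H, hH1, hH⟩ := exists_common_bound {f.rpow hf (-1)} T
  refine ⟨H⁻¹, by positivity, fun t ht x => ?_⟩
  have h : |f (t, x) ^ (-1 : ℝ)| ≤ H := hH _ (Finset.mem_singleton_self _) t ht x
  rw [Real.rpow_neg_one, abs_of_pos (inv_pos.2 (hf _))] at h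
  exact inv_le_of_inv_le₀ (hf _) h

end SmoothPer

/-! ### Concentrated periodic profiles -/

theorem contDiff_deriv {f : ℝ → ℝ} (hf : ContDiff ℝ (⊤ : ℕ∞) f) :
    ContDiff ℝ (⊤ : ℕ∞) (deriv f) :=
  (contDiff_infty_iff_deriv.1 hf).2

/-- The `1`-periodic function that equals `y ↦ f (μ y)` on `[0, 1)`. -/
def concentrate (μ : ℝ) (f : ℝ → ℝ) (y : ℝ) : ℝ := f (μ * Int.fract y)

/-- The `1`-periodic indicator function of `[0, 1/μ) + ℤ`, which carries the functions
concentrated by the factor `μ`. -/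
def spike (μ y : ℝ) : ℝ := if Int.fract y < μ⁻¹ then 1 else 0

theorem spike_nonneg (μ y : ℝ) : 0 ≤ spike μ y := by unfold spike; split_ifs <;> norm_num

theorem spike_le_one (μ y : ℝ) : spike μ y ≤ 1 := by unfold spike; split_ifs <;> norm_num

theorem spike_sq (μ y : ℝ) : spike μ y ^ 2 = spike μ y := by unfold spike; split_ifs <;> norm_num

theorem measurable_spike (μ : ℝ) : Measurable (spike μ) :=
  .ite (measurableSet_lt measurable_fract measurable_const) measurable_const measurable_const

theorem concentrate_periodic (μ : ℝ) (f : ℝ → ℝ) : (concentrate μ f).Periodic 1 := fun y => by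
  simp [concentrate]

theorem spike_periodic (μ : ℝ) : (spike μ).Periodic 1 := fun y => by simp [spike]

section Concentrate

variable {μ : ℝ} {f : ℝ → ℝ}

theorem exists_concentrate_eventuallyEq (hμ : 1 ≤ μ) (y₀ : ℝ) :
    ∃ n : ℤ, ∀ f : ℝ → ℝ, tsupport f ⊆ Set.Ioo 0 1 →
      concentrate μ f =ᶠ[nhds y₀] fun y => f (μ * (y - n)) := by
  refine ⟨⌊y₀⌋, fun f hf => ?_⟩
  have hfloor := Int.lt_floor_add_one y₀
  rcases (Int.floor_le y₀).lt_or_eq with h | h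
  · filter_upwards [Ioo_mem_nhds h hfloor] with y hy
    have : ⌊y⌋ = ⌊y₀⌋ := Int.floor_eq_iff.2 ⟨hy.1.le, hy.2⟩
    rw [concentrate, Int.fract, this]
  · have vanish (c : ℝ) (hc : μ * (y₀ - c) ∉ Set.Ioo 0 1) :
        ∀ᶠ y in nhds y₀, f (μ * (y - c)) = 0 :=
      (by fun_prop : Continuous fun y => μ * (y - c)).continuousAt.eventually
        (notMem_tsupport_iff_eventuallyEq.1 fun h => hc (hf h))
    filter_upwards [vanish ⌊y₀⌋ (by simp [h]), vanish (⌊y₀⌋ - 1) (by simp [h, hμ]),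
      Ioo_mem_nhds (sub_one_lt y₀) hfloor] with y hright hleft hy
    rcases le_or_gt (⌊y₀⌋ : ℝ) y with hle | hlt
    · have : ⌊y⌋ = ⌊y₀⌋ := Int.floor_eq_iff.2 ⟨hle, hy.2⟩
      rw [concentrate, Int.fract, this]
    · have : ⌊y⌋ = ⌊y₀⌋ - 1 :=
        Int.floor_eq_iff.2 ⟨by push_cast; linarith [hy.1], by simpa using hlt⟩
      rw [concentrate, Int.fract, this, hright, Int.cast_sub, Int.cast_one, hleft]

theorem contDiff_concentrate (hμ : 1 ≤ μ) (hf : ContDiff ℝ (⊤ : ℕ∞) f)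
    (hs : tsupport f ⊆ Set.Ioo 0 1) : ContDiff ℝ (⊤ : ℕ∞) (concentrate μ f) := by
  refine contDiff_iff_contDiffAt.2 fun y₀ => ?_
  obtain ⟨n, hn⟩ := exists_concentrate_eventuallyEq hμ y₀
  exact (hf.comp (contDiff_const.mul
    (contDiff_id.sub contDiff_const))).contDiffAt.congr_of_eventuallyEq (hn f hs)

theorem deriv_concentrate (hμ : 1 ≤ μ) (hf : Differentiable ℝ f)
    (hs : tsupport f ⊆ Set.Ioo 0 1) (y : ℝ) :
    deriv (concentrate μ f) y = μ * concentrate μ (deriv f) y := by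
  obtain ⟨n, hn⟩ := exists_concentrate_eventuallyEq hμ y
  have h : HasDerivAt (fun y : ℝ => f (μ * (y - n))) (deriv f (μ * (y - n)) * (μ * 1)) y :=
    (hf _).hasDerivAt.comp y (((hasDerivAt_id y).sub_const _).const_mul μ)
  rw [(hn f hs).deriv_eq, h.deriv, (hn _ (tsupport_deriv_subset.trans hs)).self_of_nhds]
  ring

theorem abs_concentrate_le (hμ : 0 < μ) {M : ℝ} (hM : ∀ y, |f y| ≤ M)
    (hs : tsupport f ⊆ Set.Ioo 0 1) (y : ℝ) : |concentrate μ f y| ≤ M * spike μ y := by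
  unfold spike concentrate
  split_ifs with h
  · simpa using hM _
  · have : 1 ≤ μ * Int.fract y := (inv_le_iff_one_le_mul₀' hμ).1 (not_lt.1 h)
    have : f (μ * Int.fract y) = 0 :=
      image_eq_zero_of_notMem_tsupport fun hmem => this.not_gt (hs hmem).2
    simp [this]

theorem intervalIntegral_concentrate (hμ : 1 ≤ μ) (hf : Continuous f)
    (hs : tsupport f ⊆ Set.Ioo 0 1) :
    ∫ y in (0 : ℝ)..1, concentrate μ f y = μ⁻¹ * ∫ y in (0 : ℝ)..1, f y := by
  have hfract : ∫ y in (0 : ℝ)..1, concentrate μ f y = ∫ y in (0 : ℝ)..1, f (μ * y) := by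
    refine intervalIntegral.integral_congr_ae ?_
    filter_upwards [(Set.countable_singleton (1 : ℝ)).ae_notMem volume] with y hy1 hy
    rw [Set.uIoc_of_le zero_le_one] at hy
    rw [concentrate, Int.fract_eq_self.2 ⟨hy.1.le, hy.2.lt_of_ne hy1⟩]
  have htail : ∫ y in (1 : ℝ)..μ, f y = 0 := by
    refine intervalIntegral.integral_zero_ae (.of_forall fun y hy => ?_)
    rw [Set.uIoc_of_le hμ] at hy
    exact image_eq_zero_of_notMem_tsupport fun hmem => hy.1.not_gt (hs hmem).2
  rw [hfract, intervalIntegral.integral_comp_mul_left f (zero_lt_one.trans_le hμ).ne', mul_zero,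
    mul_one, ← intervalIntegral.integral_add_adjacent_intervals (hf.intervalIntegrable 0 1)
      (hf.intervalIntegrable 1 μ), htail, add_zero, smul_eq_mul]

end Concentrate

section MeanPrimitive

variable {g : ℝ → ℝ}

/-- The primitive of `g - 1` vanishing at `0`; it is periodic when `g` is `1`-periodic with
mean `1`. -/
def meanPrimitive (g : ℝ → ℝ) (y : ℝ) : ℝ := ∫ z in (0 : ℝ)..y, (g z - 1)

theorem meanPrimitive_zero (g : ℝ → ℝ) : meanPrimitive g 0 = 0 := intervalIntegral.integral_same

theorem deriv_meanPrimitive (hg : Continuous g) (y : ℝ) : deriv (meanPrimitive g) y = g y - 1 :=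
  ((hg.sub continuous_const).integral_hasStrictDerivAt 0 y).hasDerivAt.deriv

theorem contDiff_meanPrimitive (hg : ContDiff ℝ (⊤ : ℕ∞) g) :
    ContDiff ℝ (⊤ : ℕ∞) (meanPrimitive g) := by
  suffices ContDiff ℝ ((⊤ : ℕ∞) + 1) (meanPrimitive g) by simpa using this
  refine contDiff_succ_iff_deriv.2 ⟨fun y => ((hg.continuous.sub
    continuous_const).integral_hasStrictDerivAt 0 y).hasDerivAt.differentiableAt, by simp, ?_⟩
  rw [funext (deriv_meanPrimitive hg.continuous)]
  exact hg.sub contDiff_const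

theorem meanPrimitive_periodic (hg : Continuous g) (hper : g.Periodic 1)
    (hint : ∫ y in (0 : ℝ)..1, g y = 1) : (meanPrimitive g).Periodic 1 := by
  intro y
  have hc : Continuous fun z => g z - 1 := hg.sub continuous_const
  have hp : Function.Periodic (fun z => g z - 1) 1 := fun z => congr_arg (· - 1) (hper z)
  have hmean : ∫ z in (0 : ℝ)..1, (g z - 1) = 0 := by
    rw [intervalIntegral.integral_sub (hg.intervalIntegrable _ _) (by simp), hint]
    simp
  rw [meanPrimitive, ← intervalIntegral.integral_add_adjacent_intervals
    (hc.intervalIntegrable 0 y) (hc.intervalIntegrable y (y + 1)),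
    hp.intervalIntegral_add_eq y 0, zero_add, hmean, add_zero, meanPrimitive]

theorem abs_meanPrimitive_le (hg : Continuous g) (hper : g.Periodic 1)
    (hint : ∫ y in (0 : ℝ)..1, g y = 1) (hnonneg : 0 ≤ g) (y : ℝ) : |meanPrimitive g y| ≤ 1 := by
  have hfract : meanPrimitive g y = meanPrimitive g (Int.fract y) := by
    rw [Int.fract, ← mul_one (⌊y⌋ : ℝ)]
    exact ((meanPrimitive_periodic hg hper hint).sub_int_mul_eq ⌊y⌋).symm
  have h0 := Int.fract_nonneg y
  have h1 := (Int.fract_lt_one y).le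
  have hleft : 0 ≤ ∫ z in (0 : ℝ)..Int.fract y, g z :=
    intervalIntegral.integral_nonneg h0 fun z _ => hnonneg z
  have hright : 0 ≤ ∫ z in Int.fract y..1, g z :=
    intervalIntegral.integral_nonneg h1 fun z _ => hnonneg z
  have hadd := intervalIntegral.integral_add_adjacent_intervals (μ := volume)
    (hg.intervalIntegrable 0 (Int.fract y)) (hg.intervalIntegrable _ 1)
  rw [hfract, meanPrimitive, intervalIntegral.integral_sub (hg.intervalIntegrable _ _) (by simp),
    intervalIntegral.integral_const, sub_zero, smul_eq_mul, mul_one, abs_le]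
  constructor <;> linarith

end MeanPrimitive

/-- A bump function on `(0, 1)` whose derivative has unit `L²` norm, together with a common bound
for its derivatives of order at most two. -/
structure Profile where
  toFun : ℝ → ℝ
  contDiff : ContDiff ℝ (⊤ : ℕ∞) toFun
  tsupport_subset : tsupport toFun ⊆ Set.Ioo 0 1
  integral_deriv_sq : ∫ y in (0 : ℝ)..1, deriv toFun y ^ 2 = 1
  bound : ℝ
  one_le_bound : 1 ≤ bound
  abs_le : ∀ y, |toFun y| ≤ bound
  abs_deriv_le : ∀ y, |deriv toFun y| ≤ bound
  abs_deriv_deriv_le : ∀ y, |deriv (deriv toFun) y| ≤ bound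

theorem exists_smooth_bump_integral_deriv_sq_eq_one :
    ∃ ψ : ℝ → ℝ, ContDiff ℝ (⊤ : ℕ∞) ψ ∧ tsupport ψ ⊆ Set.Ioo 0 1 ∧
      ∫ y in (0 : ℝ)..1, deriv ψ y ^ 2 = 1 := by
  let b : ContDiffBump (1 / 2 : ℝ) := ⟨1 / 8, 1 / 4, by norm_num, by norm_num⟩
  have hb : ContDiff ℝ (⊤ : ℕ∞) b := b.contDiff
  have hsupp : tsupport b ⊆ Set.Ioo 0 1 := by
    rw [b.tsupport_eq, Real.closedBall_eq_Icc]
    exact Set.Icc_subset_Ioo (by norm_num [b]) (by norm_num [b])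
  have hI : 0 < ∫ y in (0 : ℝ)..1, deriv b y ^ 2 := by
    obtain ⟨c, hc, hslope⟩ := exists_deriv_eq_slope b (show (0 : ℝ) < 1 / 2 by norm_num)
      hb.continuous.continuousOn (hb.differentiable (by simp)).differentiableOn
    have h0 : b (0 : ℝ) = 0 := image_eq_zero_of_notMem_tsupport fun h => (hsupp h).1.false
    have h1 : b (1 / 2 : ℝ) = 1 := b.one_of_mem_closedBall (by simp; norm_num [b])
    rw [h0, h1] at hslope
    exact intervalIntegral.integral_pos (by norm_num)
      ((contDiff_deriv hb).continuous.pow 2).continuousOn (fun _ _ => by positivity)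
      ⟨c, ⟨hc.1.le, by linarith [hc.2]⟩, by rw [hslope]; norm_num⟩
  set I := ∫ y in (0 : ℝ)..1, deriv b y ^ 2
  refine ⟨fun y => (√I)⁻¹ * b y, contDiff_const.mul hb, fun y hy => hsupp ?_, ?_⟩
  · exact closure_mono (Function.support_mul_subset_right _ _) hy
  · simp only [deriv_const_mul_field', mul_pow, inv_pow, Real.sq_sqrt hI.le,
      intervalIntegral.integral_const_mul]
    exact inv_mul_cancel₀ hI.ne'

theorem exists_abs_le_of_tsupport_subset_Ioo {f : ℝ → ℝ} {a b : ℝ} (hf : Continuous f)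
    (hs : tsupport f ⊆ Set.Ioo a b) : ∃ C, ∀ y, |f y| ≤ C :=
  hf.bounded_above_of_compact_support
    (.of_isClosed_subset isCompact_Icc (isClosed_tsupport f)
      (hs.trans Set.Ioo_subset_Icc_self))

theorem nonempty_profile : Nonempty Profile := by
  obtain ⟨ψ, hψ, hs, hint⟩ := exists_smooth_bump_integral_deriv_sq_eq_one
  have hs₁ : tsupport (deriv ψ) ⊆ Set.Ioo 0 1 := tsupport_deriv_subset.trans hs
  have hψ₁ := contDiff_deriv hψ
  obtain ⟨C₀, h₀⟩ := exists_abs_le_of_tsupport_subset_Ioo hψ.continuous hs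
  obtain ⟨C₁, h₁⟩ := exists_abs_le_of_tsupport_subset_Ioo hψ₁.continuous hs₁
  obtain ⟨C₂, h₂⟩ := exists_abs_le_of_tsupport_subset_Ioo (contDiff_deriv hψ₁).continuous
    (tsupport_deriv_subset.trans hs₁)
  have hC (C a : ℝ) (h : a ≤ C) (hmem : C ∈ ({1, C₀, C₁, C₂} : Finset ℝ)) :
      a ≤ ({1, C₀, C₁, C₂} : Finset ℝ).max' ⟨1, by simp⟩ := h.trans (Finset.le_max' _ _ hmem)
  exact ⟨⟨ψ, hψ, hs, hint, _, hC 1 1 le_rfl (by simp), fun y => hC C₀ _ (h₀ y) (by simp),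
    fun y => hC C₁ _ (h₁ y) (by simp), fun y => hC C₂ _ (h₂ y) (by simp)⟩⟩

namespace Profile

variable (P : Profile)

theorem tsupport_deriv_subset : tsupport (deriv P.toFun) ⊆ Set.Ioo 0 1 :=
  _root_.tsupport_deriv_subset.trans P.tsupport_subset

theorem contDiff_deriv : ContDiff ℝ (⊤ : ℕ∞) (deriv P.toFun) :=
  TransportNonuniqueness.contDiff_deriv P.contDiff

/-- The nonnegative kernel `μ (ψ'(μ ·))²` of mean one, concentrated on a set of measure `1/μ`. -/
def kernel (μ y : ℝ) : ℝ := μ * concentrate μ (deriv P.toFun) y ^ 2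

variable {μ : ℝ}

theorem contDiff_kernel (hμ : 1 ≤ μ) : ContDiff ℝ (⊤ : ℕ∞) (P.kernel μ) :=
  contDiff_const.mul ((contDiff_concentrate hμ P.contDiff_deriv P.tsupport_deriv_subset).pow 2)

theorem kernel_nonneg (hμ : 0 ≤ μ) : 0 ≤ P.kernel μ := fun _ => mul_nonneg hμ (sq_nonneg _)

theorem kernel_le (hμ : 0 < μ) (y : ℝ) : P.kernel μ y ≤ P.bound ^ 2 * (μ * spike μ y) :=
  calc
    P.kernel μ y ≤ μ * (P.bound * spike μ y) ^ 2 := by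
      rw [kernel, ← sq_abs]
      gcongr
      exact abs_concentrate_le hμ P.abs_deriv_le P.tsupport_deriv_subset y
    _ = P.bound ^ 2 * (μ * spike μ y) := by
      rw [mul_pow, spike_sq]
      ring

theorem kernel_periodic (μ : ℝ) : (P.kernel μ).Periodic 1 := fun y => by
  simp only [kernel, concentrate_periodic μ _ y]

theorem intervalIntegral_kernel (hμ : 1 ≤ μ) : ∫ y in (0 : ℝ)..1, P.kernel μ y = 1 := by
  have hs : tsupport (fun y => deriv P.toFun y ^ 2) ⊆ Set.Ioo 0 1 :=
    (closure_mono (Function.support_pow (deriv P.toFun) two_ne_zero).le).trans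
      P.tsupport_deriv_subset
  have h : ∫ y in (0 : ℝ)..1, concentrate μ (deriv P.toFun) y ^ 2 = μ⁻¹ := by
    refine (intervalIntegral_concentrate hμ (P.contDiff_deriv.continuous.pow 2) hs).trans ?_
    exact (congr_arg (μ⁻¹ * ·) P.integral_deriv_sq).trans (mul_one _)
  simp only [kernel, intervalIntegral.integral_const_mul]
  rw [h, mul_inv_cancel₀ (zero_lt_one.trans_le hμ).ne']

theorem bound_pos : 0 < P.bound := zero_lt_one.trans_le P.one_le_bound

theorem meanPrimitive_kernel_periodic (hμ : 1 ≤ μ) : (meanPrimitive (P.kernel μ)).Periodic 1 :=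
  meanPrimitive_periodic (P.contDiff_kernel hμ).continuous (P.kernel_periodic μ)
    (P.intervalIntegral_kernel hμ)

theorem abs_meanPrimitive_kernel_le (hμ : 1 ≤ μ) (y : ℝ) : |meanPrimitive (P.kernel μ) y| ≤ 1 :=
  abs_meanPrimitive_le (P.contDiff_kernel hμ).continuous (P.kernel_periodic μ)
    (P.intervalIntegral_kernel hμ) (P.kernel_nonneg (zero_le_one.trans hμ)) y

end Profile

/-! ### Averaging against fast oscillations -/

theorem setLIntegral_comp_mul_of_periodic {F : ℝ → ℝ≥0∞} (hF : Measurable F) (hp : F.Periodic 1)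
    {σ : ℝ} (hσ : 0 < σ) (k : ℕ) :
    ∫⁻ y in Set.Ico (k / σ) ((k + 1) / σ), F (σ * y) =
      ENNReal.ofReal σ⁻¹ * ∫⁻ y in Set.Ico 0 1, F y := by
  have hshift : ∫⁻ y in Set.Ico (k : ℝ) (k + 1), F y = ∫⁻ y in Set.Ico 0 1, F y := by
    rw [← (measurePreserving_add_right volume (k : ℝ)).setLIntegral_comp_preimage
      measurableSet_Ico hF, Set.preimage_add_const_Ico, sub_self, add_sub_cancel_left]
    exact lintegral_congr fun y => by simpa using hp.nat_mul k y
  rw [← Set.preimage_const_mul_Ico₀ _ _ hσ, ← setLIntegral_map measurableSet_Ico hF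
    (measurable_const_mul σ), Real.map_volume_mul_left hσ.ne', Measure.restrict_smul,
    lintegral_smul_measure, hshift, abs_of_pos (inv_pos.2 hσ), smul_eq_mul]

theorem setLIntegral_mul_comp_le_of_mem_cell {f F : ℝ → ℝ≥0∞} (hf : Measurable f)
    (hF : Measurable F) (hp : F.Periodic 1) {σ : ℝ} (hσ : 0 < σ) (k : ℕ) {c : ℝ≥0∞}
    (hosc : ∀ y ∈ Set.Ico (k / σ) ((k + 1) / σ), ∀ y' ∈ Set.Ico (k / σ) ((k + 1) / σ),
      f y ≤ c * f y') :
    ∫⁻ y in Set.Ico (k / σ) ((k + 1) / σ), f y * F (σ * y) ≤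
      c * (∫⁻ y in Set.Ico (k / σ) ((k + 1) / σ), f y) * ∫⁻ y in Set.Ico 0 1, F y := by
  set S := Set.Ico (k / σ) ((k + 1) / σ) with hS
  have hvol : volume S = ENNReal.ofReal σ⁻¹ := by
    rw [hS, Real.volume_Ico, ← sub_div, add_sub_cancel_left, one_div]
  have hF' : Measurable fun y => F (σ * y) := hF.comp (measurable_const_mul σ)
  have hpoint : ∀ y' ∈ S,
      ∫⁻ y in S, f y * F (σ * y) ≤ (c * f y') * ∫⁻ y in S, F (σ * y) := fun y' hy' => by
    rw [← lintegral_const_mul _ hF']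
    exact setLIntegral_mono (hF'.const_mul _) fun y hy => mul_le_mul_left (hosc y hy y' hy') _
  have haverage := setLIntegral_mono (μ := volume) ((hf.const_mul _).mul_const _) hpoint
  rw [setLIntegral_const, lintegral_mul_const _ (hf.const_mul _), lintegral_const_mul _ hf, hvol,
    setLIntegral_comp_mul_of_periodic hF hp hσ k] at haverage
  have hne : ENNReal.ofReal σ⁻¹ ≠ 0 := by simp [hσ]
  rw [← ENNReal.mul_le_mul_iff_left hne ENNReal.ofReal_ne_top]
  exact haverage.trans_eq (by ring)

theorem setLIntegral_mul_comp_le {f F : ℝ → ℝ≥0∞} (hf : Measurable f) (hF : Measurable F)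
    (hp : F.Periodic 1) {σ : ℝ} (hσ : 0 < σ) (N : ℕ) {c : ℝ≥0∞}
    (hosc : ∀ y ∈ Set.Ico 0 (N / σ), ∀ y' ∈ Set.Ico 0 (N / σ), |y - y'| ≤ σ⁻¹ → f y ≤ c * f y') :
    ∫⁻ y in Set.Ico 0 (N / σ), f y * F (σ * y) ≤
      c * (∫⁻ y in Set.Ico 0 (N / σ), f y) * ∫⁻ y in Set.Ico 0 1, F y := by
  induction N with
  | zero => simp
  | succ N ih =>
    have hle : (N : ℝ) / σ ≤ (N + 1) / σ := by gcongr; simp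
    have hlen : ((N : ℝ) + 1) / σ = N / σ + σ⁻¹ := by rw [add_div, one_div]
    rw [Nat.cast_succ] at hosc ⊢
    rw [← Set.Ico_union_Ico_eq_Ico (by positivity) hle,
      lintegral_union measurableSet_Ico (Set.Ico_disjoint_Ico_same),
      lintegral_union measurableSet_Ico (Set.Ico_disjoint_Ico_same)]
    have hinit := ih fun y hy y' hy' =>
      hosc y ⟨hy.1, hy.2.trans_le hle⟩ y' ⟨hy'.1, hy'.2.trans_le hle⟩
    have hlast := setLIntegral_mul_comp_le_of_mem_cell hf hF hp hσ N (c := c) fun y hy y' hy' =>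
      have hpos : 0 ≤ (N : ℝ) / σ := by positivity
      hosc y ⟨hpos.trans hy.1, hy.2⟩ y' ⟨hpos.trans hy'.1, hy'.2⟩
        (abs_le.2 ⟨by linarith [hy.1, hy'.2], by linarith [hy.2, hy'.1]⟩)
    exact (add_le_add hinit hlast).trans_eq (by ring)

theorem measurable_insertNth {n : ℕ} (j : Fin (n + 1)) :
    Measurable fun z : ℝ × Vec n => j.insertNth (α := fun _ => ℝ) z.1 z.2 :=
  (MeasurableEquiv.piFinSuccAbove (fun _ => ℝ) j).symm.measurable

theorem insertNth_mem_fundCube {n : ℕ} {j : Fin (n + 1)} {y : ℝ} {x : Vec n} :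
    j.insertNth (α := fun _ => ℝ) y x ∈ fundCube (n + 1) ↔ y ∈ Set.Icc 0 1 ∧ x ∈ fundCube n :=
  Fin.insertNth_mem_Icc (q₁ := 0) (q₂ := 1)

theorem measurableSet_fundCube : MeasurableSet (fundCube d) := measurableSet_Icc

theorem volume_fundCube (d : ℕ) : volume (fundCube d) = 1 := by
  rw [fundCube, Real.volume_Icc_pi]
  simp

instance : IsProbabilityMeasure (volume.restrict (fundCube d)) := ⟨by simp [volume_fundCube]⟩

theorem setLIntegral_fundCube_succ {n : ℕ} (j : Fin (n + 1)) {g : Vec (n + 1) → ℝ≥0∞}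
    (hg : Measurable g) :
    ∫⁻ x in fundCube (n + 1), g x =
      ∫⁻ x in fundCube n, ∫⁻ y in Set.Ico 0 1, g (j.insertNth (α := fun _ => ℝ) y x) := by
  let e := (MeasurableEquiv.piFinSuccAbove (fun _ : Fin (n + 1) => ℝ) j).symm
  have hpre : e ⁻¹' fundCube (n + 1) = Set.Icc 0 1 ×ˢ fundCube n :=
    Set.ext fun _ => insertNth_mem_fundCube
  have he : MeasurePreserving e volume volume :=
    (volume_preserving_piFinSuccAbove (fun _ : Fin (n + 1) => ℝ) j).symm
  rw [← he.setLIntegral_comp_preimage measurableSet_fundCube hg, hpre, Measure.volume_eq_prod,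
    ← Measure.prod_restrict, ← Function.comp_def,
    lintegral_prod_symm (g ∘ e) (hg.comp e.measurable).aemeasurable,
    Measure.restrict_congr_set Ico_ae_eq_Icc]
  rfl

theorem setLIntegral_fundCube_mul_comp_le (j : Fin d) {f : Vec d → ℝ≥0∞} {F : ℝ → ℝ≥0∞}
    (hf : Measurable f) (hF : Measurable F) (hp : F.Periodic 1) {σ : ℕ} (hσ : 0 < σ) {c : ℝ≥0∞}
    (hosc : ∀ x ∈ fundCube d, ∀ x' ∈ fundCube d, dist x x' ≤ (σ : ℝ)⁻¹ → f x ≤ c * f x') :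
    ∫⁻ x in fundCube d, f x * F (σ * x j) ≤
      c * (∫⁻ x in fundCube d, f x) * ∫⁻ y in Set.Ico 0 1, F y := by
  obtain ⟨n, rfl⟩ : ∃ n, d = n + 1 := ⟨d - 1, by have := j.pos; omega⟩
  have hσ' : (0 : ℝ) < σ := by exact_mod_cast hσ
  have hslice : Measurable fun x : Vec n =>
      ∫⁻ y in Set.Ico (0 : ℝ) 1, f (j.insertNth (α := fun _ => ℝ) y x) :=
    ((hf.comp (measurable_insertNth j)).comp measurable_swap).lintegral_prod_right'
  have hFj : Measurable fun x : Vec (n + 1) => F (σ * x j) :=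
    hF.comp ((measurable_pi_apply j).const_mul _)
  rw [setLIntegral_fundCube_succ j (g := fun x => f x * F (σ * x j)) (hf.mul hFj),
    setLIntegral_fundCube_succ j hf, ← lintegral_const_mul _ hslice,
    ← lintegral_mul_const _ (hslice.const_mul _)]
  refine setLIntegral_mono ((hslice.const_mul _).mul_const _) fun x hx => ?_
  have hline := setLIntegral_mul_comp_le (f := fun y => f (j.insertNth (α := fun _ => ℝ) y x))
    (hf.comp ((measurable_insertNth j).comp measurable_prodMk_right)) hF hp hσ' σ (c := c)
  rw [div_self hσ'.ne'] at hline
  simp only [Fin.insertNth_apply_same]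
  exact hline fun y hy y' hy' hyy' => hosc _
    (insertNth_mem_fundCube.2 ⟨Set.Ico_subset_Icc_self hy, hx⟩) _
    (insertNth_mem_fundCube.2 ⟨Set.Ico_subset_Icc_self hy', hx⟩)
    (by simpa [Real.dist_eq] using hyy')

theorem setLIntegral_Ioo_mul_comp_le {T : ℝ} (hT : 0 < T) {N : ℕ} (hN : 0 < N) {f F : ℝ → ℝ≥0∞}
    (hf : Measurable f) (hF : Measurable F) (hp : F.Periodic 1) {c : ℝ≥0∞}
    (hosc : ∀ t ∈ Set.Icc 0 T, ∀ t' ∈ Set.Icc 0 T, |t - t'| ≤ T / N → f t ≤ c * f t') :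
    ∫⁻ t in Set.Ioo 0 T, f t * F (N / T * t) ≤
      c * (∫⁻ t in Set.Ioo 0 T, f t) * ∫⁻ y in Set.Ico 0 1, F y := by
  have hN' : (0 : ℝ) < N := by exact_mod_cast hN
  have hend : (N : ℝ) / (N / T) = T := div_div_cancel₀ hN'.ne'
  have h := setLIntegral_mul_comp_le hf hF hp (div_pos hN' hT) N (c := c)
  rw [hend, inv_div] at h
  rw [Measure.restrict_congr_set Ioo_ae_eq_Ico]
  exact h fun t ht t' ht' => hosc t ⟨ht.1, ht.2.le⟩ t' ⟨ht'.1, ht'.2.le⟩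

theorem measurable_ofReal_spike (μ : ℝ) : Measurable fun y => ENNReal.ofReal (spike μ y) :=
  (measurable_spike μ).ennreal_ofReal

theorem ofReal_spike_periodic (μ : ℝ) :
    Function.Periodic (fun y => ENNReal.ofReal (spike μ y)) 1 := fun y =>
  congr_arg ENNReal.ofReal (spike_periodic μ y)

theorem setLIntegral_ofReal_spike {μ : ℝ} (hμ : 1 ≤ μ) :
    ∫⁻ y in Set.Ico 0 1, ENNReal.ofReal (spike μ y) = ENNReal.ofReal μ⁻¹ := by
  have hindicator : ∀ y ∈ Set.Ico (0 : ℝ) 1,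
      ENNReal.ofReal (spike μ y) = (Set.Iio μ⁻¹).indicator 1 y := fun y hy => by
    rw [spike, Int.fract_eq_self.2 hy, Set.indicator_apply]
    simp only [Set.mem_Iio, Pi.one_apply]
    split_ifs <;> simp
  rw [setLIntegral_congr_fun measurableSet_Ico hindicator, lintegral_indicator_one
    measurableSet_Iio, Measure.restrict_apply measurableSet_Iio, Set.inter_comm, Set.Ico_inter_Iio,
    min_eq_right (inv_le_one_of_one_le₀ hμ), Real.volume_Ico, sub_zero]

theorem setLIntegral_fundCube_ofReal_spike_le (j : Fin d) {μ : ℝ} (hμ : 1 ≤ μ) {σ : ℕ}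
    (hσ : 0 < σ) :
    ∫⁻ x in fundCube d, ENNReal.ofReal (spike μ (σ * x j)) ≤ ENNReal.ofReal μ⁻¹ := by
  simpa [setLIntegral_ofReal_spike hμ] using setLIntegral_fundCube_mul_comp_le j (f := 1)
    measurable_const (measurable_ofReal_spike μ) (ofReal_spike_periodic μ) hσ (c := 1) (by simp)

theorem setLIntegral_Ioo_ofReal_spike_le {T : ℝ} (hT : 0 < T) {N : ℕ} (hN : 0 < N) {κ : ℝ}
    (hκ : 1 ≤ κ) :
    ∫⁻ t in Set.Ioo 0 T, ENNReal.ofReal (spike κ (N / T * t)) ≤ ENNReal.ofReal (T * κ⁻¹) := by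
  simpa [setLIntegral_ofReal_spike hκ, ENNReal.ofReal_mul hT.le] using
    setLIntegral_Ioo_mul_comp_le hT hN (f := 1) measurable_const (measurable_ofReal_spike κ)
      (ofReal_spike_periodic κ) (c := 1) (by simp)

/-! ### Mixed Lebesgue norms -/

section Norms

variable {α : Type*} [MeasurableSpace α] {ν : Measure α}

theorem eLpGen_eq_eLpNorm {q : ℝ≥0∞} (hq : q ≠ 0) (g : α → ℝ≥0∞) :
    eLpGen ν q g = eLpNorm g q ν := by
  rw [eLpGen]
  split_ifs with hqtop
  · simp [hqtop, eLpNormEssSup]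
  · simp [eLpNorm_eq_lintegral_rpow_enorm_toReal hq hqtop]

theorem eLpNorm_le_mul_lintegral_rpow {ε : Type*} [ENorm ε] {q : ℝ≥0∞} (hq : q ≠ 0) {f : α → ε}
    {g : α → ℝ≥0∞} {c : ℝ≥0∞} (hc : c ≠ ∞) (hfg : ∀ᵐ x ∂ν, ‖f x‖ₑ ≤ c * g x ^ q⁻¹.toReal) :
    eLpNorm f q ν ≤ c * (∫⁻ x, g x ∂ν) ^ q⁻¹.toReal := by
  by_cases hqtop : q = ∞
  · simp only [hqtop, ENNReal.inv_top, ENNReal.toReal_zero, ENNReal.rpow_zero, mul_one,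
      eLpNorm_exponent_top] at hfg ⊢
    exact essSup_le_of_ae_le c hfg
  have hpos : 0 < q.toReal := ENNReal.toReal_pos hq hqtop
  have hpow : ∀ᵐ x ∂ν, ‖f x‖ₑ ^ q.toReal ≤ c ^ q.toReal * g x := by
    filter_upwards [hfg] with x hx
    refine (ENNReal.rpow_le_rpow hx hpos.le).trans_eq ?_
    rw [ENNReal.mul_rpow_of_nonneg _ _ hpos.le, ← ENNReal.rpow_mul, ENNReal.toReal_inv,
      inv_mul_cancel₀ hpos.ne', ENNReal.rpow_one]
  have hint := lintegral_mono_ae hpow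
  rw [lintegral_const_mul' _ _ (ENNReal.rpow_ne_top_of_nonneg hpos.le hc)] at hint
  rw [eLpNorm_eq_lintegral_rpow_enorm_toReal hq hqtop, one_div, ENNReal.toReal_inv]
  refine (ENNReal.rpow_le_rpow hint (inv_nonneg.2 hpos.le)).trans_eq ?_
  rw [ENNReal.mul_rpow_of_nonneg _ _ (inv_nonneg.2 hpos.le), ← ENNReal.rpow_mul,
    mul_inv_cancel₀ hpos.ne', ENNReal.rpow_one]

theorem eLpNorm_tsum_le {q : ℝ≥0∞} (hq : 1 ≤ q) {f : ℕ → α → ℝ≥0∞}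
    (hf : ∀ n, AEMeasurable (f n) ν) :
    eLpNorm (fun x => ∑' n, f n x) q ν ≤ ∑' n, eLpNorm (f n) q ν := by
  let S (n : ℕ) : α → ℝ≥0∞ := ∑ k ∈ Finset.range n, f k
  have hsum : ∀ n, eLpNorm (S n) q ν ≤ ∑' k, eLpNorm (f k) q ν := fun n =>
    (eLpNorm_sum_le (fun k _ => (hf k).aestronglyMeasurable) hq).trans (ENNReal.sum_le_tsum _)
  have hS : ∀ n x, S n x = ∑ k ∈ Finset.range n, f k x := fun n x => Finset.sum_apply x _ _
  by_cases hqtop : q = ∞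
  · subst hqtop
    refine eLpNormEssSup_le_of_ae_enorm_bound ?_
    filter_upwards [ae_all_iff.2 fun n => enorm_ae_le_eLpNormEssSup (S n) ν] with x hx
    rw [enorm_eq_self, ENNReal.tsum_eq_iSup_nat]
    exact iSup_le fun n => (hS n x).ge.trans ((hx n).trans (hsum n))
  have hq0 : q ≠ 0 := (one_pos.trans_le hq).ne'
  have hlim := lintegral_tendsto_of_tendsto_of_monotone (μ := ν)
    (f := fun n x => S n x ^ q.toReal) (F := fun x => (∑' n, f n x) ^ q.toReal)
    (fun n => (Finset.aemeasurable_sum _ fun k _ => hf k).pow_const _)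
    (.of_forall fun x m n hmn => ENNReal.rpow_le_rpow (by
      simpa only [hS] using Finset.sum_le_sum_of_subset (Finset.range_mono hmn))
      ENNReal.toReal_nonneg)
    (.of_forall fun x => (ENNReal.continuous_rpow_const.tendsto _).comp (by
      simpa only [hS] using ENNReal.tendsto_nat_tsum fun n => f n x))
  have hlim' := (ENNReal.continuous_rpow_const (y := 1 / q.toReal)).continuousAt.tendsto.comp hlim
  simp only [eLpNorm_eq_lintegral_rpow_enorm_toReal hq0 hqtop, enorm_eq_self] at hsum ⊢
  exact le_of_tendsto' hlim' hsum

theorem lintegral_mul_le_eLpNorm_top_mul {f g : α → ℝ≥0∞} (hg : AEMeasurable g ν) :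
    ∫⁻ x, f x * g x ∂ν ≤ eLpNorm f ∞ ν * eLpNorm g 1 ν := by
  rw [eLpNorm_exponent_top, eLpNorm_one_eq_lintegral_enorm, ← lintegral_const_mul'' _ hg.enorm]
  refine lintegral_mono_ae ?_
  filter_upwards [enorm_ae_le_eLpNormEssSup f ν] with x hx
  exact mul_le_mul_left hx _

theorem lintegral_mul_le_eLpNorm_mul_eLpNorm {p q : ℝ≥0∞} (hpq : p.HolderConjugate q)
    {f g : α → ℝ≥0∞} (hf : AEMeasurable f ν) (hg : AEMeasurable g ν) :
    ∫⁻ x, f x * g x ∂ν ≤ eLpNorm f p ν * eLpNorm g q ν := by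
  rcases eq_or_ne p ∞ with rfl | hp
  · rw [(ENNReal.HolderConjugate.eq_top_iff_eq_one ∞ q).1 rfl]
    exact lintegral_mul_le_eLpNorm_top_mul hg
  rcases eq_or_ne q ∞ with rfl | hq
  · have : p = 1 := (ENNReal.HolderConjugate.eq_top_iff_eq_one ∞ p).1 rfl
    subst this
    simpa only [mul_comm] using lintegral_mul_le_eLpNorm_top_mul (f := g) hf
  have hp0 := ENNReal.HolderConjugate.ne_zero p q
  have hq0 := ENNReal.HolderConjugate.ne_zero q p
  have hconj : p.toReal.HolderConjugate q.toReal := by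
    simpa using ENNReal.HolderTriple.toReal 1 (ENNReal.toReal_pos hp0 hp)
      (ENNReal.toReal_pos hq0 hq)
  simpa [eLpNorm_eq_lintegral_rpow_enorm_toReal, hp, hq, hp0, hq0] using
    ENNReal.lintegral_mul_le_Lp_mul_Lq ν hconj hf hg

variable {E : Type*} [NormedAddCommGroup E]

theorem spLp_eq_eLpNorm {q : ℝ≥0∞} (hq : q ≠ 0) (f : Vec d → E) :
    spLp q f = eLpNorm f q (volume.restrict (fundCube d)) :=
  (eLpGen_eq_eLpNorm hq _).trans (eLpNorm_enorm f)

theorem LsLpT_eq_eLpNorm {s : ℝ≥0∞} (hs : s ≠ 0) (T : ℝ) (q : ℝ≥0∞) (f : ℝ → Vec d → E) :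
    LsLpT T s q f = eLpNorm (fun t => spLp q (f t)) s (volume.restrict (Set.Ioo 0 T)) :=
  eLpGen_eq_eLpNorm hs _

theorem LsW1qT_one (T : ℝ) (q : ℝ≥0∞) (u : ℝ → Vec d → Vec d) :
    LsW1qT T 1 q u = ∫⁻ t in Set.Ioo 0 T, W1qNorm q (u t) := by
  simp [LsW1qT, eLpGen]

theorem measurable_spLp {q : ℝ≥0∞} (hq : q ≠ ∞) {f : ℝ → Vec d → E}
    (hf : StronglyMeasurable (Function.uncurry f)) : Measurable fun t => spLp q (f t) := by
  simp only [spLp, eLpGen, if_neg hq]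
  exact ((hf.enorm.pow_const _).lintegral_prod_right').pow_const _

end Norms

theorem exists_forall_le_two_mul_of_dist_le {X : Type*} [PseudoMetricSpace X] {K : Set X}
    (hK : IsCompact K) {f : X → ℝ} (hf : ContinuousOn f K) (hpos : ∀ z ∈ K, 0 < f z) :
    ∃ η > 0, ∀ z ∈ K, ∀ z' ∈ K, dist z z' ≤ η → f z ≤ 2 * f z' := by
  have hlog := hK.uniformContinuousOn_of_continuous (hf.log fun z hz => (hpos z hz).ne')
  obtain ⟨η, hη, hclose⟩ :=
    Metric.uniformContinuousOn_iff_le.1 hlog (Real.log 2) (Real.log_pos one_lt_two)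
  refine ⟨η, hη, fun z hz z' hz' hzz' => (Real.log_le_log_iff (hpos z hz)
    (by linarith [hpos z' hz'])).1 ?_⟩
  rw [Real.log_mul two_ne_zero (hpos z' hz').ne']
  linarith [(abs_le.1 ((Real.dist_eq _ _).ge.trans (hclose z hz z' hz' hzz'))).2]

/-- The norm of `L¹((0,T) × 𝕋^d)`. -/
def l1Norm (T : ℝ) (f : SmoothPer d) : ℝ≥0∞ :=
  ∫⁻ t in Set.Ioo 0 T, ∫⁻ x in fundCube d, ENNReal.ofReal |f (t, x)|

theorem sqrt_sq_add_sq_le (x : ℝ) {δ : ℝ} (hδ : 0 ≤ δ) : √(x ^ 2 + δ ^ 2) ≤ |x| + δ := by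
  rw [Real.sqrt_le_left (by positivity)]
  nlinarith [abs_nonneg x, sq_abs x]

theorem SmoothPer.exists_pos_majorant (R : SmoothPer d) {δ : ℝ} (hδ : 0 < δ) :
    ∃ A : SmoothPer d, ∀ z, 0 < A z ∧ |R z| ≤ A z ∧ A z ≤ |R z| + δ :=
  ⟨⟨fun z => √(R z ^ 2 + δ ^ 2),
      ((R.contDiff.pow 2).add contDiff_const).sqrt fun z => by positivity,
      fun t x k => congr_arg (fun y : ℝ => √(y ^ 2 + δ ^ 2)) (R.zper t x k)⟩,
    fun z => ⟨Real.sqrt_pos.2 (by positivity), Real.abs_le_sqrt (by nlinarith [sq_nonneg δ]),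
      sqrt_sq_add_sq_le _ hδ.le⟩⟩

theorem exists_contDiff_majorant {c : ℝ → ℝ} (hc : Continuous c) (hc0 : ∀ t, 0 ≤ c t) (T : ℝ)
    {δ : ℝ} (hδ : 0 < δ) :
    ∃ r : ℝ → ℝ, ContDiff ℝ (⊤ : ℕ∞) r ∧ (∀ t, 0 < r t) ∧
      ∀ t ∈ Set.Icc 0 T, c t ≤ r t ∧ r t ≤ c t + δ := by
  obtain ⟨q, hq⟩ :=
    exists_polynomial_near_of_continuousOn 0 T c hc.continuousOn (δ / 4) (by positivity)
  have hqsmooth : ContDiff ℝ (⊤ : ℕ∞) fun t => q.eval t := by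
    simpa using Polynomial.contDiff_aeval (𝕜 := ℝ) q ((⊤ : ℕ∞) : WithTop ℕ∞)
  refine ⟨fun t => √((q.eval t + δ / 2) ^ 2 + (δ / 4) ^ 2),
    (((hqsmooth.add contDiff_const).pow 2).add contDiff_const).sqrt fun t => by positivity,
    fun t => Real.sqrt_pos.2 (by positivity), fun t ht => ?_⟩
  have hclose := abs_lt.1 (hq t ht)
  have hnonneg : 0 ≤ q.eval t + δ / 2 := by linarith [hc0 t]
  constructor
  · exact le_trans (by linarith) ((le_abs_self _).trans
      (Real.abs_le_sqrt (x := q.eval t + δ / 2) (by nlinarith)))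
  · refine (sqrt_sq_add_sq_le _ (by positivity)).trans ?_
    rw [abs_of_nonneg hnonneg]
    linarith

theorem SmoothPer.integrable (f : SmoothPer d) (t : ℝ) :
    IntegrableOn (fun x => f (t, x)) (fundCube d) :=
  (f.continuous.comp (Continuous.prodMk_right t)).continuousOn.integrableOn_compact isCompact_Icc

theorem SmoothPer.setLIntegral_ofReal_abs (f : SmoothPer d) (t : ℝ) :
    ∫⁻ x in fundCube d, ENNReal.ofReal |f (t, x)| =
      ENNReal.ofReal (∫ x in fundCube d, |f (t, x)|) :=
  (ofReal_integral_eq_lintegral_ofReal (f.integrable t).abs (.of_forall fun _ => abs_nonneg _)).symm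

theorem SmoothPer.continuous_integral_abs (f : SmoothPer d) :
    Continuous fun t => ∫ x in fundCube d, |f (t, x)| :=
  continuous_parametric_integral_of_continuous f.continuous.abs isCompact_Icc

theorem l1Norm_eq_ofReal_integral (T : ℝ) (f : SmoothPer d) :
    l1Norm T f = ENNReal.ofReal (∫ t in Set.Ioo 0 T, ∫ x in fundCube d, |f (t, x)|) := by
  have hint : IntegrableOn (fun t => ∫ x in fundCube d, |f (t, x)|) (Set.Ioo 0 T) :=
    f.continuous_integral_abs.integrableOn_Icc.mono_set Set.Ioo_subset_Icc_self
  simp_rw [l1Norm, f.setLIntegral_ofReal_abs]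
  exact (ofReal_integral_eq_lintegral_ofReal hint
    (.of_forall fun t => integral_nonneg fun x => abs_nonneg _)).symm

theorem l1Norm_lt_top (T : ℝ) (f : SmoothPer d) : l1Norm T f < ∞ := by
  rw [l1Norm_eq_ofReal_integral]
  exact ENNReal.ofReal_lt_top

theorem exists_contDiff_majorant_of_integral_lt {c : ℝ → ℝ} (hc : Continuous c)
    (hc0 : ∀ t, 0 ≤ c t) {T : ℝ} (hT : 0 < T) {ε : ℝ} (hε : ∫ t in Set.Ioo 0 T, c t < ε) :
    ∃ (r : ℝ → ℝ) (δ : ℝ), ContDiff ℝ (⊤ : ℕ∞) r ∧ (∀ t, 0 < r t) ∧ 0 < δ ∧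
      (∀ t ∈ Set.Icc 0 T, c t + δ ≤ r t) ∧
      ∫⁻ t in Set.Ioo 0 T, ENNReal.ofReal (r t) ≤ ENNReal.ofReal ε := by
  set δ := (ε - ∫ t in Set.Ioo 0 T, c t) / (2 * T) with hδ
  have hδ0 : 0 < δ := div_pos (sub_pos.2 hε) (by positivity)
  obtain ⟨r, hrsmooth, hrpos, hr⟩ := exists_contDiff_majorant (c := fun t => c t + δ)
    (hc.add continuous_const) (fun t => add_nonneg (hc0 t) hδ0.le) T hδ0
  refine ⟨r, δ, hrsmooth, hrpos, hδ0, fun t ht => (hr t ht).1, ?_⟩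
  have hrint : IntegrableOn r (Set.Ioo 0 T) :=
    hrsmooth.continuous.integrableOn_Icc.mono_set Set.Ioo_subset_Icc_self
  have hcint : IntegrableOn c (Set.Ioo 0 T) :=
    hc.integrableOn_Icc.mono_set Set.Ioo_subset_Icc_self
  rw [← ofReal_integral_eq_lintegral_ofReal hrint (.of_forall fun t => (hrpos t).le)]
  refine ENNReal.ofReal_le_ofReal ?_
  calc ∫ t in Set.Ioo 0 T, r t ≤ ∫ t in Set.Ioo 0 T, (c t + 2 * δ) :=
        setIntegral_mono_on hrint (hcint.add (integrable_const _)) measurableSet_Ioo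
          fun t ht => by linarith [(hr t ⟨ht.1.le, ht.2.le⟩).2]
    _ = ε := by
        rw [integral_add hcint (integrable_const _), setIntegral_const,
          Real.volume_real_Ioo_of_le hT.le, smul_eq_mul, hδ]
        field_simp
        ring

/-! ### Oscillating building blocks -/

theorem deriv_const_mul_comp_mul_left (c a : ℝ) (f : ℝ → ℝ) (y : ℝ) :
    deriv (fun y => c * f (a * y)) y = c * a * deriv f (a * y) := by
  rw [deriv_const_mul_field, deriv_comp_mul_left, smul_eq_mul, mul_assoc]

theorem periodic_const_mul_comp_natCast_mul {f : ℝ → ℝ} (hf : f.Periodic 1) (c : ℝ) (n : ℕ) :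
    Function.Periodic (fun y => c * f (n * y)) 1 := fun y => by
  simpa [mul_add] using congr_arg (c * ·) (hf.nat_mul n (n * y))

/-- The parameters of a perturbation: `ν` and `σ` are the frequencies of oscillation in time and
in space, `κ` and `μ` the corresponding concentration factors, `c₁` and `c₂` the amplitudes of the
density and of the velocity. -/
structure Scales where
  (ν κ μ c₁ c₂ : ℝ)
  σ : ℕ
  one_le_ν : 1 ≤ ν
  one_le_κ : 1 ≤ κ
  one_le_μ : 1 ≤ μ
  one_le_σ : 1 ≤ σ
  c₁_pos : 0 < c₁
  c₂_pos : 0 < c₂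
  c₁_mul_c₂ : c₁ * c₂ = κ * μ

namespace Scales

variable (Λ : Scales)

theorem ν_pos : 0 < Λ.ν := zero_lt_one.trans_le Λ.one_le_ν

theorem κ_pos : 0 < Λ.κ := zero_lt_one.trans_le Λ.one_le_κ

theorem μ_pos : 0 < Λ.μ := zero_lt_one.trans_le Λ.one_le_μ

theorem one_le_σ_real : (1 : ℝ) ≤ Λ.σ := mod_cast Λ.one_le_σ

theorem σ_pos : (0 : ℝ) < Λ.σ := zero_lt_one.trans_le Λ.one_le_σ_real

/-- The times at which the time oscillation is active, as an indicator function. -/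
def timeSpike (t : ℝ) : ℝ := spike Λ.κ (Λ.ν * t)

/-- The points at which the oscillation in the `j`-th direction is active, as an indicator
function. -/
def spaceSpike (j : Fin d) (x : Vec d) : ℝ := spike Λ.μ (Λ.σ * x j)

theorem timeSpike_nonneg (t : ℝ) : 0 ≤ Λ.timeSpike t := spike_nonneg _ _

theorem spaceSpike_nonneg (j : Fin d) (x : Vec d) : 0 ≤ Λ.spaceSpike j x := spike_nonneg _ _

theorem spaceSpike_le_one (j : Fin d) (x : Vec d) : Λ.spaceSpike j x ≤ 1 := spike_le_one _ _

variable (P : Profile)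

/-- The concentrated space oscillation `Q = (σμ)⁻¹ ψ_μ(σ x_j)`. -/
def spaceWave (j : Fin d) : SmoothPer d :=
  ofCoord j (fun y => (Λ.σ * Λ.μ)⁻¹ * concentrate Λ.μ P.toFun (Λ.σ * y))
    (contDiff_const.mul ((contDiff_concentrate Λ.one_le_μ P.contDiff P.tsupport_subset).comp
      (contDiff_const.mul contDiff_id)))
    (periodic_const_mul_comp_natCast_mul (concentrate_periodic _ _) _ _)

/-- The antiderivative `L` of the mean-free function `μ (∂_j Q)² - 1`. -/
def spaceCorrector (j : Fin d) : SmoothPer d :=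
  ofCoord j (fun y => (Λ.σ : ℝ)⁻¹ * meanPrimitive (P.kernel Λ.μ) (Λ.σ * y))
    (contDiff_const.mul ((contDiff_meanPrimitive (P.contDiff_kernel Λ.one_le_μ)).comp
      (contDiff_const.mul contDiff_id)))
    (periodic_const_mul_comp_natCast_mul (P.meanPrimitive_kernel_periodic Λ.one_le_μ) _ _)

/-- The concentrated time oscillation `g = ψ'_κ(ν t)`. -/
def timeWave (d : ℕ) : SmoothPer d :=
  ofTime (fun t => concentrate Λ.κ (deriv P.toFun) (Λ.ν * t))
    ((contDiff_concentrate Λ.one_le_κ P.contDiff_deriv P.tsupport_deriv_subset).comp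
      (contDiff_const.mul contDiff_id))

/-- The intensity `κ g²` of the time oscillation, a function of time with mean one. -/
def timeKernel (d : ℕ) : SmoothPer d := Λ.κ • Λ.timeWave P d ^ 2

/-- The antiderivative `G` of the mean-free function `κ g² - 1`. -/
def timeCorrector (d : ℕ) : SmoothPer d :=
  ofTime (fun t => Λ.ν⁻¹ * meanPrimitive (P.kernel Λ.κ) (Λ.ν * t))
    (contDiff_const.mul ((contDiff_meanPrimitive (P.contDiff_kernel Λ.one_le_κ)).comp
      (contDiff_const.mul contDiff_id)))

section Space

variable (j : Fin d)

theorem Dt_spaceWave : Dt (Λ.spaceWave P j) = 0 := Dt_ofCoord _ _ _ _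

theorem Dx_spaceWave_self_apply (z : ℝ × Vec d) :
    Dx j (Λ.spaceWave P j) z = concentrate Λ.μ (deriv P.toFun) (Λ.σ * z.2 j) := by
  have hσ := Λ.σ_pos
  have hμ := Λ.μ_pos
  rw [spaceWave, Dx_ofCoord_self, deriv_const_mul_comp_mul_left,
    deriv_concentrate Λ.one_le_μ (P.contDiff.differentiable (by simp)) P.tsupport_subset]
  field_simp

variable {j} in
theorem Dx_spaceWave_of_ne {k : Fin d} (hk : k ≠ j) : Dx k (Λ.spaceWave P j) = 0 :=
  Dx_ofCoord_of_ne hk _ _ _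

variable {j} in
theorem Dx_spaceCorrector_of_ne {k : Fin d} (hk : k ≠ j) : Dx k (Λ.spaceCorrector P j) = 0 :=
  Dx_ofCoord_of_ne hk _ _ _

theorem Dx_spaceCorrector_self :
    Dx j (Λ.spaceCorrector P j) = Λ.μ • Dx j (Λ.spaceWave P j) ^ 2 - 1 := by
  ext z
  have hσ := Λ.σ_pos
  change _ = Λ.μ * Dx j (Λ.spaceWave P j) z ^ 2 - 1
  rw [Dx_spaceWave_self_apply, spaceCorrector, Dx_ofCoord_self, deriv_const_mul_comp_mul_left,
    deriv_meanPrimitive (P.contDiff_kernel Λ.one_le_μ).continuous, Profile.kernel]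
  field_simp

theorem abs_spaceWave_le (z : ℝ × Vec d) :
    |Λ.spaceWave P j z| ≤ P.bound / (Λ.σ * Λ.μ) * Λ.spaceSpike j z.2 := by
  have hσ := Λ.σ_pos
  have hμ := Λ.μ_pos
  change |(Λ.σ * Λ.μ)⁻¹ * concentrate Λ.μ P.toFun (Λ.σ * z.2 j)| ≤ _
  rw [abs_mul, abs_of_pos (by positivity), div_eq_inv_mul, mul_assoc]
  gcongr
  exact abs_concentrate_le hμ P.abs_le P.tsupport_subset _

theorem abs_Dx_spaceWave_le (k : Fin d) (z : ℝ × Vec d) :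
    |Dx k (Λ.spaceWave P j) z| ≤ P.bound * Λ.spaceSpike j z.2 := by
  rcases eq_or_ne k j with rfl | hk
  · rw [Dx_spaceWave_self_apply]
    exact abs_concentrate_le Λ.μ_pos P.abs_deriv_le P.tsupport_deriv_subset _
  · have := P.bound_pos
    rw [Dx_spaceWave_of_ne Λ P hk]
    simpa using mul_nonneg this.le (Λ.spaceSpike_nonneg j z.2)

theorem abs_spaceWave_le_bound (z : ℝ × Vec d) : |Λ.spaceWave P j z| ≤ P.bound :=
  (Λ.abs_spaceWave_le P j z).trans <| (mul_le_of_le_one_right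
    (div_nonneg P.bound_pos.le (mul_nonneg Λ.σ_pos.le Λ.μ_pos.le))
      (Λ.spaceSpike_le_one j z.2)).trans <|
    div_le_self P.bound_pos.le (one_le_mul_of_one_le_of_one_le Λ.one_le_σ_real Λ.one_le_μ)

theorem abs_Dx_spaceWave_le_bound (k : Fin d) (z : ℝ × Vec d) :
    |Dx k (Λ.spaceWave P j) z| ≤ P.bound :=
  (Λ.abs_Dx_spaceWave_le P j k z).trans
    (mul_le_of_le_one_right P.bound_pos.le (Λ.spaceSpike_le_one j z.2))

theorem abs_Dx_Dx_spaceWave_le (k l : Fin d) (z : ℝ × Vec d) :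
    |Dx k (Dx l (Λ.spaceWave P j)) z| ≤ Λ.σ * Λ.μ * P.bound * Λ.spaceSpike j z.2 := by
  have hσ := Λ.σ_pos
  have hμ := Λ.μ_pos
  have hnonneg : 0 ≤ Λ.σ * Λ.μ * P.bound * Λ.spaceSpike j z.2 := by
    have := P.bound_pos
    have := Λ.spaceSpike_nonneg j z.2
    positivity
  rcases eq_or_ne l j with rfl | hl
  · have hQ : Dx l (Λ.spaceWave P l) = ofCoord l (fun y => 1 * concentrate Λ.μ _ (Λ.σ * y))
        (contDiff_const.mul ((contDiff_concentrate Λ.one_le_μ P.contDiff_deriv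
          P.tsupport_deriv_subset).comp (contDiff_const.mul contDiff_id)))
        (periodic_const_mul_comp_natCast_mul (concentrate_periodic _ _) _ _) := by
      ext z
      exact (Λ.Dx_spaceWave_self_apply P l z).trans (one_mul _).symm
    rw [hQ]
    rcases eq_or_ne k l with rfl | hk
    · rw [Dx_ofCoord_self, deriv_const_mul_comp_mul_left, deriv_concentrate Λ.one_le_μ
        (P.contDiff_deriv.differentiable (by simp)) P.tsupport_deriv_subset, one_mul,
        abs_mul, abs_mul, abs_of_pos hσ, abs_of_pos hμ, mul_assoc, mul_assoc]
      gcongr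
      exact abs_concentrate_le hμ P.abs_deriv_deriv_le
        (tsupport_deriv_subset.trans P.tsupport_deriv_subset) _
    · simpa [Dx_ofCoord_of_ne hk] using hnonneg
  · simpa [Dx_spaceWave_of_ne Λ P hl] using hnonneg

theorem abs_spaceCorrector_le (z : ℝ × Vec d) : |Λ.spaceCorrector P j z| ≤ 1 / Λ.σ := by
  change |(Λ.σ : ℝ)⁻¹ * meanPrimitive (P.kernel Λ.μ) (Λ.σ * z.2 j)| ≤ _
  rw [abs_mul, abs_of_pos (inv_pos.2 Λ.σ_pos), one_div]
  exact mul_le_of_le_one_right (inv_nonneg.2 Λ.σ_pos.le)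
    (P.abs_meanPrimitive_kernel_le Λ.one_le_μ _)

end Space

section Time

theorem Dx_timeWave (k : Fin d) : Dx k (Λ.timeWave P d) = 0 := Dx_ofTime _ _ _

theorem Dx_timeCorrector (k : Fin d) : Dx k (Λ.timeCorrector P d) = 0 := Dx_ofTime _ _ _

theorem Dx_timeKernel (k : Fin d) : Dx k (Λ.timeKernel P d) = 0 := by
  rw [timeKernel, Derivation.map_smul, Derivation.leibniz_pow, Dx_timeWave, smul_zero,
    smul_zero, smul_zero]

theorem Dt_timeCorrector : Dt (Λ.timeCorrector P d) = Λ.timeKernel P d - 1 := by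
  ext z
  have hν := Λ.ν_pos
  change Dt (Λ.timeCorrector P d) z = Λ.κ * concentrate Λ.κ (deriv P.toFun) (Λ.ν * z.1) ^ 2 - 1
  rw [timeCorrector, dirDeriv_ofTime, deriv_const_mul_comp_mul_left,
    deriv_meanPrimitive (P.contDiff_kernel Λ.one_le_κ).continuous, Profile.kernel]
  field_simp

theorem timeWave_zero (x : Vec d) : Λ.timeWave P d (0, x) = 0 := by
  change deriv P.toFun (Λ.κ * Int.fract (Λ.ν * 0)) = 0
  rw [mul_zero, Int.fract_zero, mul_zero]
  exact image_eq_zero_of_notMem_tsupport fun h => (P.tsupport_deriv_subset h).1.false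

theorem timeCorrector_zero (x : Vec d) : Λ.timeCorrector P d (0, x) = 0 := by
  change Λ.ν⁻¹ * meanPrimitive (P.kernel Λ.κ) (Λ.ν * 0) = 0
  rw [mul_zero, meanPrimitive_zero, mul_zero]

theorem abs_timeWave_le (z : ℝ × Vec d) :
    |Λ.timeWave P d z| ≤ P.bound * Λ.timeSpike z.1 :=
  abs_concentrate_le Λ.κ_pos P.abs_deriv_le P.tsupport_deriv_subset _

theorem abs_Dt_timeWave_le (z : ℝ × Vec d) :
    |Dt (Λ.timeWave P d) z| ≤ Λ.κ * Λ.ν * (P.bound * Λ.timeSpike z.1) := by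
  have hν := Λ.ν_pos
  have hκ := Λ.κ_pos
  rw [timeWave, dirDeriv_ofTime, deriv_comp_mul_left, deriv_concentrate Λ.one_le_κ
    (P.contDiff_deriv.differentiable (by simp)) P.tsupport_deriv_subset, smul_eq_mul, one_mul,
    abs_mul, abs_mul, abs_of_pos hν, abs_of_pos hκ, ← mul_assoc, mul_comm Λ.ν]
  gcongr
  exact abs_concentrate_le hκ P.abs_deriv_deriv_le
    (tsupport_deriv_subset.trans P.tsupport_deriv_subset) _

theorem abs_timeKernel_le (z : ℝ × Vec d) :
    |Λ.timeKernel P d z| ≤ P.bound ^ 2 * (Λ.κ * Λ.timeSpike z.1) := by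
  change |Λ.κ * Λ.timeWave P d z ^ 2| ≤ _
  rw [abs_of_nonneg (mul_nonneg Λ.κ_pos.le (sq_nonneg _))]
  exact P.kernel_le Λ.κ_pos _

theorem abs_timeCorrector_le (z : ℝ × Vec d) : |Λ.timeCorrector P d z| ≤ 1 / Λ.ν := by
  change |Λ.ν⁻¹ * meanPrimitive (P.kernel Λ.κ) (Λ.ν * z.1)| ≤ _
  rw [abs_mul, abs_of_pos (inv_pos.2 Λ.ν_pos), one_div]
  exact mul_le_of_le_one_right (inv_nonneg.2 Λ.ν_pos.le)
    (P.abs_meanPrimitive_kernel_le Λ.one_le_κ _)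

end Time

end Scales

/-! ### Velocity fields in a coordinate plane -/

namespace SmoothPer

variable (f : SmoothPer d) (t : ℝ)

theorem contDiff_slice : ContDiff ℝ (⊤ : ℕ∞) fun x => f (t, x) :=
  f.contDiff.comp (contDiff_const.prodMk contDiff_id)

theorem differentiable_slice : Differentiable ℝ fun x => f (t, x) :=
  (f.contDiff_slice t).differentiable (by simp)

theorem fderiv_slice_apply (x v : Vec d) :
    fderiv ℝ (fun y => f (t, y)) x v = dirDeriv (0, v) f (t, x) := by
  have h := (f.differentiable (t, x)).hasFDerivAt.comp x (hasFDerivAt_prodMk_right t x)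
  exact congr_arg (· v) h.fderiv

theorem dirDeriv_smul_add_smul (a b : ℝ) (i j : Fin d) (x : Vec d) :
    dirDeriv (0, a • Pi.single i 1 + b • Pi.single j 1) f (t, x) =
      a * Dx i f (t, x) + b * Dx j f (t, x) := by
  have h : ((0 : ℝ), a • Pi.single i 1 + b • Pi.single j 1) =
      a • ((0 : ℝ), (Pi.single i 1 : Vec d)) + b • ((0 : ℝ), (Pi.single j 1 : Vec d)) := by
    simp
  rw [dirDeriv_apply, h, map_add, map_smul, map_smul]
  rfl

theorem norm_fderiv_slice_le {x : Vec d} {c : ℝ} (hc : 0 ≤ c) (h : ∀ k, |Dx k f (t, x)| ≤ c) :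
    ‖fderiv ℝ (fun y => f (t, y)) x‖ ≤ d * c := by
  refine ContinuousLinearMap.opNorm_le_bound _ (by positivity) fun v => ?_
  have hterm (k : Fin d) :
      ‖fderiv ℝ (fun y => f (t, y)) x (v k • (Pi.single k 1 : Vec d))‖ ≤ ‖v‖ * c := by
    rw [map_smul, norm_smul, fderiv_slice_apply]
    exact mul_le_mul (norm_le_pi_norm v k) (h k) (norm_nonneg _) (norm_nonneg _)
  calc ‖fderiv ℝ (fun y => f (t, y)) x v‖
      = ‖∑ k, fderiv ℝ (fun y => f (t, y)) x (v k • (Pi.single k 1 : Vec d))‖ := by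
        rw [← map_sum, ← pi_eq_sum_univ' v]
    _ ≤ ∑ _k : Fin d, ‖v‖ * c := norm_sum_le_of_le _ fun k _ => hterm k
    _ = d * c * ‖v‖ := by
        rw [Finset.sum_const, Finset.card_univ, Fintype.card_fin, nsmul_eq_mul]
        ring

end SmoothPer

/-- The vector field with components `v` and `w` in two coordinate directions. -/
def planeField (i j : Fin d) (v w : SmoothPer d) (t : ℝ) (x : Vec d) : Vec d :=
  v (t, x) • Pi.single i 1 + w (t, x) • Pi.single j 1

section PlaneField

variable (i j : Fin d) (v w : SmoothPer d)

theorem continuous_planeField : Continuous (Function.uncurry (planeField i j v w)) :=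
  (v.continuous.smul continuous_const).add (w.continuous.smul continuous_const)

theorem planeField_zper (t : ℝ) : ZPer (planeField i j v w t) := fun x k => by
  rw [planeField, planeField]
  exact congr_arg₂ (fun a b : ℝ => a • Pi.single i 1 + b • Pi.single j 1)
    (v.zper t x k) (w.zper t x k)

theorem differentiable_planeField (t : ℝ) : Differentiable ℝ (planeField i j v w t) :=
  ((v.differentiable_slice t).smul_const _).add ((w.differentiable_slice t).smul_const _)

theorem norm_planeField_le (t : ℝ) (x : Vec d) :
    ‖planeField i j v w t x‖ ≤ |v (t, x)| + |w (t, x)| := by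
  refine (norm_add_le _ _).trans_eq ?_
  rw [norm_smul, norm_smul, Pi.norm_single, Pi.norm_single, norm_one, mul_one, mul_one,
    Real.norm_eq_abs, Real.norm_eq_abs]

variable {v w} in
theorem norm_fderiv_planeField_le {t : ℝ} {x : Vec d} {c : ℝ} (hc : 0 ≤ c)
    (hv : ∀ k, |Dx k v (t, x)| ≤ c) (hw : ∀ k, |Dx k w (t, x)| ≤ c) :
    ‖fderiv ℝ (planeField i j v w t) x‖ ≤ 2 * d * c := by
  have hv' := v.differentiable_slice t x
  have hw' := w.differentiable_slice t x
  change ‖fderiv ℝ (fun x => v (t, x) • Pi.single i 1 + w (t, x) • Pi.single j 1) x‖ ≤ _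
  rw [fderiv_fun_add (hv'.smul_const _) (hw'.smul_const _), fderiv_smul_const hv',
    fderiv_smul_const hw']
  refine (norm_add_le _ _).trans ?_
  rw [ContinuousLinearMap.norm_smulRight_apply, ContinuousLinearMap.norm_smulRight_apply,
    Pi.norm_single, Pi.norm_single, norm_one, mul_one, mul_one]
  linarith [v.norm_fderiv_slice_le t hc hv, w.norm_fderiv_slice_le t hc hw]

end PlaneField

/-! ### The perturbation -/

theorem abs_mul_le_of_le {x y X Y : ℝ} (hx : |x| ≤ X) (hy : |y| ≤ Y) : |x * y| ≤ X * Y :=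
  (abs_mul x y).trans_le (mul_le_mul hx hy (abs_nonneg _) ((abs_nonneg _).trans hx))

theorem abs_add_le_of_le {x y X Y : ℝ} (hx : |x| ≤ X) (hy : |y| ≤ Y) : |x + y| ≤ X + Y :=
  (abs_add_le x y).trans (add_le_add hx hy)

theorem abs_sub_le_of_le {x y X Y : ℝ} (hx : |x| ≤ X) (hy : |y| ≤ Y) : |x - y| ≤ X + Y :=
  (abs_sub x y).trans (add_le_add hx hy)

namespace Scales

variable (Λ : Scales) (P : Profile) (j : Fin d)

/-- The oscillating potential `c g f Q` with slowly varying amplitude `f`. -/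
def potential (c : ℝ) (f : SmoothPer d) : SmoothPer d :=
  c • (Λ.timeWave P d * (f * Λ.spaceWave P j))

variable (k l : Fin d) (c : ℝ) (f : SmoothPer d)

theorem Dx_potential : Dx k (Λ.potential P j c f) =
    c • (Λ.timeWave P d * Dx k (f * Λ.spaceWave P j)) := by
  simp [potential, Derivation.leibniz, Dx_timeWave]

theorem Dt_potential : Dt (Λ.potential P j c f) =
    c • (Dt (Λ.timeWave P d) * (f * Λ.spaceWave P j) +
      Λ.timeWave P d * (Dt f * Λ.spaceWave P j)) := by
  rw [potential, Derivation.map_smul, Derivation.leibniz, Derivation.leibniz, Dt_spaceWave]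
  congr 1
  simp only [smul_eq_mul]
  ring

theorem Dx_Dx_potential : Dx k (Dx l (Λ.potential P j c f)) =
    c • (Λ.timeWave P d * Dx k (Dx l (f * Λ.spaceWave P j))) := by
  rw [Dx_potential, Derivation.map_smul, Derivation.leibniz, Dx_timeWave, smul_zero, add_zero,
    smul_eq_mul]

variable {k l c f} {z : ℝ × Vec d} {m : ℝ}

theorem abs_mul_spaceWave_le (hf : |f z| ≤ m) :
    |(f * Λ.spaceWave P j) z| ≤ m * (P.bound / (Λ.σ * Λ.μ) * Λ.spaceSpike j z.2) :=
  abs_mul_le_of_le hf (Λ.abs_spaceWave_le P j z)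

theorem abs_Dx_mul_spaceWave_le (hf : |f z| ≤ m) (hf' : |Dx k f z| ≤ Λ.σ * m) :
    |Dx k (f * Λ.spaceWave P j) z| ≤ 2 * P.bound * Λ.spaceSpike j z.2 * m := by
  have hM := P.bound_pos
  have hm : 0 ≤ m := (abs_nonneg _).trans hf
  have hσ := Λ.σ_pos
  have hμ := Λ.μ_pos
  have hcm := Λ.spaceSpike_nonneg j z.2
  have hDx : Dx k (f * Λ.spaceWave P j) z =
      f z * Dx k (Λ.spaceWave P j) z + Λ.spaceWave P j z * Dx k f z := by
    rw [Derivation.leibniz]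
    rfl
  rw [hDx]
  refine (abs_add_le_of_le (abs_mul_le_of_le hf (Λ.abs_Dx_spaceWave_le P j k z))
    (abs_mul_le_of_le (Λ.abs_spaceWave_le P j z) hf')).trans ?_
  calc m * (P.bound * Λ.spaceSpike j z.2)
        + P.bound / (Λ.σ * Λ.μ) * Λ.spaceSpike j z.2 * (Λ.σ * m)
      = P.bound * Λ.spaceSpike j z.2 * m + P.bound * Λ.spaceSpike j z.2 * m / Λ.μ := by
        field_simp
    _ ≤ P.bound * Λ.spaceSpike j z.2 * m + P.bound * Λ.spaceSpike j z.2 * m := by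
        gcongr
        exact div_le_self (by positivity) Λ.one_le_μ
    _ = _ := by ring

theorem abs_Dx_potential_le (hc : 0 ≤ c) (hf : |f z| ≤ m) (hf' : |Dx k f z| ≤ Λ.σ * m) :
    |Dx k (Λ.potential P j c f) z| ≤
      2 * P.bound ^ 2 * c * (Λ.timeSpike z.1 * Λ.spaceSpike j z.2) * m := by
  rw [Dx_potential]
  change |c * (Λ.timeWave P d z * Dx k (f * Λ.spaceWave P j) z)| ≤ _
  exact (abs_mul_le_of_le (abs_of_nonneg hc).le (abs_mul_le_of_le (Λ.abs_timeWave_le P z)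
    (Λ.abs_Dx_mul_spaceWave_le P j hf hf'))).trans_eq (by ring)

theorem abs_Dt_potential_le (hc : 0 ≤ c) (hf : |f z| ≤ m) (hf' : |Dt f z| ≤ m) :
    |Dt (Λ.potential P j c f) z| ≤
      2 * P.bound ^ 2 * (c * Λ.κ * Λ.ν / Λ.μ) * (Λ.timeSpike z.1 * Λ.spaceSpike j z.2) * m := by
  have hM := P.bound_pos
  have hm : 0 ≤ m := (abs_nonneg _).trans hf
  have hσ := Λ.one_le_σ_real
  have hμ := Λ.μ_pos
  have hκν : 1 ≤ Λ.κ * Λ.ν := one_le_mul_of_one_le_of_one_le Λ.one_le_κ Λ.one_le_ν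
  have hck := Λ.timeSpike_nonneg z.1
  have hcm := Λ.spaceSpike_nonneg j z.2
  rw [Dt_potential]
  refine (abs_mul_le_of_le (abs_of_nonneg hc).le (abs_add_le_of_le
    (abs_mul_le_of_le (Λ.abs_Dt_timeWave_le P z) (Λ.abs_mul_spaceWave_le P j hf))
    (abs_mul_le_of_le (Λ.abs_timeWave_le P z) (Λ.abs_mul_spaceWave_le P j hf')))).trans ?_
  calc c * (Λ.κ * Λ.ν * (P.bound * Λ.timeSpike z.1)
          * (m * (P.bound / (Λ.σ * Λ.μ) * Λ.spaceSpike j z.2))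
        + P.bound * Λ.timeSpike z.1 * (m * (P.bound / (Λ.σ * Λ.μ) * Λ.spaceSpike j z.2)))
      = (Λ.κ * Λ.ν + 1) * (P.bound ^ 2 * (c / (Λ.σ * Λ.μ))
          * (Λ.timeSpike z.1 * Λ.spaceSpike j z.2) * m) := by ring
    _ ≤ (Λ.κ * Λ.ν + Λ.κ * Λ.ν) * (P.bound ^ 2 * (c / (1 * Λ.μ))
          * (Λ.timeSpike z.1 * Λ.spaceSpike j z.2) * m) := by gcongr
    _ = _ := by ring

theorem abs_Dx_Dx_potential_le (hc : 0 ≤ c) (hf : |f z| ≤ m) (hf' : ∀ k, |Dx k f z| ≤ m)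
    (hf'' : |Dx k (Dx l f) z| ≤ m) :
    |Dx k (Dx l (Λ.potential P j c f)) z| ≤
      4 * P.bound ^ 2 * (c * Λ.σ * Λ.μ) * (Λ.timeSpike z.1 * Λ.spaceSpike j z.2) * m := by
  have hM := P.bound_pos
  have hm : 0 ≤ m := (abs_nonneg _).trans hf
  have hσμ : 1 ≤ Λ.σ * Λ.μ := one_le_mul_of_one_le_of_one_le Λ.one_le_σ_real Λ.one_le_μ
  have hck := Λ.timeSpike_nonneg z.1
  have hcm := Λ.spaceSpike_nonneg j z.2
  have hDx : Dx k (Dx l (f * Λ.spaceWave P j)) z =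
      f z * Dx k (Dx l (Λ.spaceWave P j)) z + Dx l (Λ.spaceWave P j) z * Dx k f z
        + (Λ.spaceWave P j z * Dx k (Dx l f) z + Dx l f z * Dx k (Λ.spaceWave P j) z) := by
    rw [Derivation.leibniz, map_add, smul_eq_mul, smul_eq_mul, Derivation.leibniz,
      Derivation.leibniz]
    rfl
  rw [Dx_Dx_potential]
  change |c * (_ * Dx k (Dx l (f * Λ.spaceWave P j)) z)| ≤ _
  rw [hDx]
  refine (abs_mul_le_of_le (abs_of_nonneg hc).le (abs_mul_le_of_le (Λ.abs_timeWave_le P z)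
    (abs_add_le_of_le (abs_add_le_of_le
      (abs_mul_le_of_le hf (Λ.abs_Dx_Dx_spaceWave_le P j k l z))
      (abs_mul_le_of_le (Λ.abs_Dx_spaceWave_le P j l z) (hf' k)))
    (abs_add_le_of_le (abs_mul_le_of_le (Λ.abs_spaceWave_le P j z) hf'')
      (abs_mul_le_of_le (hf' l) (Λ.abs_Dx_spaceWave_le P j k z)))))).trans ?_
  calc c * (P.bound * Λ.timeSpike z.1 * (m * (Λ.σ * Λ.μ * P.bound * Λ.spaceSpike j z.2)
          + P.bound * Λ.spaceSpike j z.2 * m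
          + (P.bound / (Λ.σ * Λ.μ) * Λ.spaceSpike j z.2 * m
            + m * (P.bound * Λ.spaceSpike j z.2))))
      = (Λ.σ * Λ.μ + 1 + 1 / (Λ.σ * Λ.μ) + 1)
          * (P.bound ^ 2 * c * (Λ.timeSpike z.1 * Λ.spaceSpike j z.2) * m) := by ring
    _ ≤ (Λ.σ * Λ.μ + Λ.σ * Λ.μ + Λ.σ * Λ.μ + Λ.σ * Λ.μ)
          * (P.bound ^ 2 * c * (Λ.timeSpike z.1 * Λ.spaceSpike j z.2) * m) := by
        gcongr
        exact (div_le_one_of_le₀ hσμ (by positivity)).trans hσμ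
    _ = _ := by ring

end Scales

/-- A smooth solution, with zero initial density, of the transport equation with the
divergence-free velocity `v eᵢ + w eⱼ`, up to the divergence of the defect field `R eᵢ + S eⱼ`. -/
structure DefectSolution (d : ℕ) where
  (i j : Fin d)
  i_ne_j : i ≠ j
  (ρ v w R S : SmoothPer d)
  eq : Dt ρ + Dx i (ρ * v) + Dx j (ρ * w) = Dx i R + Dx j S
  div_eq : Dx i v + Dx j w = 0
  ρ_zero x : ρ (0, x) = 0

namespace DefectSolution

variable (D : DefectSolution d)

/-- The velocity field. -/
def vel : ℝ → Vec d → Vec d := planeField D.i D.j D.v D.w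

/-- The same solution with the roles of the two directions exchanged. -/
def swap : DefectSolution d where
  i := D.j
  j := D.i
  i_ne_j := D.i_ne_j.symm
  ρ := D.ρ
  v := D.w
  w := D.v
  R := D.S
  S := D.R
  eq := by linear_combination D.eq
  div_eq := by linear_combination D.div_eq
  ρ_zero := D.ρ_zero

theorem vel_swap : D.swap.vel = D.vel := by
  ext t x : 2
  exact add_comm _ _

end DefectSolution

/-- The data of a perturbation cancelling the defect `R`: amplitudes `a` of the density and `b` of
the velocity, whose interaction reproduces `-R`. -/
structure Ansatz (d : ℕ) extends DefectSolution d where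
  P : Profile
  (a b : SmoothPer d)
  a_mul_b : a * b = -R

namespace Ansatz

variable (D : Ansatz d) (Λ : Scales)

/-- The potential of the density perturbation. -/
def A : SmoothPer d := Λ.potential D.P D.j Λ.c₁ D.a

/-- The stream function of the velocity perturbation. -/
def B : SmoothPer d := Λ.potential D.P D.j Λ.c₂ D.b

/-- The density perturbation. -/
def θ : SmoothPer d := Dx D.j (D.A Λ)

/-- The corrector in time, which cancels the part of the defect that oscillates in time only. -/
def θo : SmoothPer d := Λ.timeCorrector D.P d * Dx D.i D.R

/-- The new defect in the `i`-th direction. -/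
def newR : SmoothPer d :=
  Λ.timeCorrector D.P d * Dt D.R + D.θ Λ * D.v + D.ρ * Dx D.j (D.B Λ)
    + D.θo Λ * (D.v + Dx D.j (D.B Λ))
    + Λ.timeKernel D.P d * (Λ.μ • (Λ.spaceWave D.P D.j *
        (Dx D.j D.a * Dx D.j D.b * Λ.spaceWave D.P D.j - Dx D.j D.R * Dx D.j (Λ.spaceWave D.P D.j)))
      + Dx D.j D.R * Λ.spaceCorrector D.P D.j)

/-- The contribution of the perturbation to the defect in the `j`-th direction. -/
def addS : SmoothPer d :=
  Dt (D.A Λ) + D.θ Λ * D.w - D.ρ * Dx D.i (D.B Λ) + D.θo Λ * (D.w - Dx D.i (D.B Λ))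
    - Λ.timeKernel D.P d * (Λ.μ • (Λ.spaceWave D.P D.j *
        (Dx D.i D.b * Dx D.j (D.a * Λ.spaceWave D.P D.j)))
      + Dx D.i D.R * Λ.spaceCorrector D.P D.j)

theorem Dt_θo : Dt (D.θo Λ) =
    (Λ.timeKernel D.P d - 1) * Dx D.i D.R + Dx D.i (Λ.timeCorrector D.P d * Dt D.R) := by
  rw [θo, Derivation.leibniz, Derivation.leibniz, Λ.Dx_timeCorrector, Λ.Dt_timeCorrector,
    dirDeriv_comm (1, 0)]
  simp only [smul_eq_mul]
  ring

theorem θ_mul_Dx_B : D.θ Λ * Dx D.j (D.B Λ) = Λ.timeKernel D.P d * (Λ.μ • (Λ.spaceWave D.P D.j *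
      (Dx D.j D.a * Dx D.j D.b * Λ.spaceWave D.P D.j - Dx D.j D.R * Dx D.j (Λ.spaceWave D.P D.j))))
    - Λ.timeKernel D.P d * (D.R * Dx D.j (Λ.spaceCorrector D.P D.j))
    - Λ.timeKernel D.P d * D.R := by
  have hcc : algebraMap ℝ (SmoothPer d) Λ.c₁ * algebraMap ℝ (SmoothPer d) Λ.c₂ =
      algebraMap ℝ (SmoothPer d) Λ.κ * algebraMap ℝ (SmoothPer d) Λ.μ := by
    rw [← map_mul, ← map_mul, Λ.c₁_mul_c₂]
  have hR : Dx D.j D.R = -(D.a * Dx D.j D.b + D.b * Dx D.j D.a) := by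
    rw [← neg_eq_iff_eq_neg, ← map_neg, ← D.a_mul_b, Derivation.leibniz, smul_eq_mul, smul_eq_mul]
  rw [θ, A, B, Λ.Dx_potential, Λ.Dx_potential, Λ.Dx_spaceCorrector_self, Scales.timeKernel, hR,
    show D.R = -(D.a * D.b) by rw [D.a_mul_b, neg_neg]]
  simp only [Derivation.leibniz, smul_eq_mul, Algebra.smul_def]
  linear_combination Λ.timeWave D.P d ^ 2
    * (D.a * Dx D.j (Λ.spaceWave D.P D.j) + Λ.spaceWave D.P D.j * Dx D.j D.a)
    * (D.b * Dx D.j (Λ.spaceWave D.P D.j) + Λ.spaceWave D.P D.j * Dx D.j D.b) * hcc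

theorem θ_mul_Dx_B_transverse : D.θ Λ * Dx D.i (D.B Λ) = Λ.timeKernel D.P d *
    (Λ.μ • (Λ.spaceWave D.P D.j * (Dx D.i D.b * Dx D.j (D.a * Λ.spaceWave D.P D.j)))) := by
  have hcc : algebraMap ℝ (SmoothPer d) Λ.c₁ * algebraMap ℝ (SmoothPer d) Λ.c₂ =
      algebraMap ℝ (SmoothPer d) Λ.κ * algebraMap ℝ (SmoothPer d) Λ.μ := by
    rw [← map_mul, ← map_mul, Λ.c₁_mul_c₂]
  rw [θ, A, B, Λ.Dx_potential, Λ.Dx_potential, Scales.timeKernel]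
  simp only [Derivation.leibniz, smul_eq_mul, Algebra.smul_def, Λ.Dx_spaceWave_of_ne D.P D.i_ne_j]
  linear_combination Λ.timeWave D.P d ^ 2 * Λ.spaceWave D.P D.j * Dx D.i D.b
    * (D.a * Dx D.j (Λ.spaceWave D.P D.j) + Λ.spaceWave D.P D.j * Dx D.j D.a) * hcc

/-- This identity moves the part of the defect that oscillates in space to the other direction,
where it is multiplied by the small function `L`. -/
theorem Dx_timeKernel_mul_Dx_spaceCorrector :
    Dx D.i (Λ.timeKernel D.P d * (D.R * Dx D.j (Λ.spaceCorrector D.P D.j))) =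
      Dx D.j (Λ.timeKernel D.P d * (Dx D.i D.R * Λ.spaceCorrector D.P D.j))
        - Dx D.i (Λ.timeKernel D.P d * (Dx D.j D.R * Λ.spaceCorrector D.P D.j)) := by
  have hL : Dx D.i (Dx D.j (Λ.spaceCorrector D.P D.j)) = 0 := by
    rw [dirDeriv_comm, Λ.Dx_spaceCorrector_of_ne D.P D.i_ne_j, map_zero]
  simp only [Derivation.leibniz, smul_eq_mul, Λ.Dx_timeKernel, hL,
    Λ.Dx_spaceCorrector_of_ne D.P D.i_ne_j, dirDeriv_comm _ (0, Pi.single D.j 1) D.R]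
  ring

theorem θ_zero (x : Vec d) : D.θ Λ (0, x) = 0 := by
  rw [θ, A, Λ.Dx_potential]
  change Λ.c₁ * (Λ.timeWave D.P d (0, x) * _) = 0
  rw [Λ.timeWave_zero, zero_mul, mul_zero]

theorem θo_zero (x : Vec d) : D.θo Λ (0, x) = 0 := by
  change Λ.timeCorrector D.P d (0, x) * _ = 0
  rw [Λ.timeCorrector_zero, zero_mul]

/-- The perturbed solution. -/
def perturb : DefectSolution d where
  i := D.i
  j := D.j
  i_ne_j := D.i_ne_j
  ρ := D.ρ + D.θ Λ + D.θo Λ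
  v := D.v + Dx D.j (D.B Λ)
  w := D.w - Dx D.i (D.B Λ)
  R := D.newR Λ
  S := D.S + D.addS Λ
  eq := by
    have hv : (D.ρ + D.θ Λ + D.θo Λ) * (D.v + Dx D.j (D.B Λ)) = D.ρ * D.v + (D.newR Λ
        - Λ.timeCorrector D.P d * Dt D.R - Λ.timeKernel D.P d * D.R
        - Λ.timeKernel D.P d * (D.R * Dx D.j (Λ.spaceCorrector D.P D.j))
        - Λ.timeKernel D.P d * (Dx D.j D.R * Λ.spaceCorrector D.P D.j)) := by
      rw [newR]
      linear_combination D.θ_mul_Dx_B Λ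
    have hw : (D.ρ + D.θ Λ + D.θo Λ) * (D.w - Dx D.i (D.B Λ)) = D.ρ * D.w + (D.addS Λ
        - Dt (D.A Λ) + Λ.timeKernel D.P d * (Dx D.i D.R * Λ.spaceCorrector D.P D.j)) := by
      rw [addS]
      linear_combination -D.θ_mul_Dx_B_transverse Λ
    have hθ : Dt (D.θ Λ) = Dx D.j (Dt (D.A Λ)) := dirDeriv_comm _ _ _
    have hK : Dx D.i (Λ.timeKernel D.P d * D.R) = Λ.timeKernel D.P d * Dx D.i D.R := by
      rw [Derivation.leibniz, Λ.Dx_timeKernel, smul_zero, add_zero, smul_eq_mul]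
    rw [hv, hw]
    simp only [map_add, map_sub, hK]
    linear_combination D.eq + hθ + D.Dt_θo Λ - D.Dx_timeKernel_mul_Dx_spaceCorrector Λ
  div_eq := by
    rw [map_add, map_sub, dirDeriv_comm (0, Pi.single D.j 1) (0, Pi.single D.i 1)]
    linear_combination D.div_eq
  ρ_zero x := by
    change D.ρ (0, x) + D.θ Λ (0, x) + D.θo Λ (0, x) = 0
    rw [D.ρ_zero, D.θ_zero, D.θo_zero, add_zero, add_zero]

/-- All the slowly varying functions that enter the perturbation are bounded by `H` at `z`. -/
structure CoeffBound (H : ℝ) (z : ℝ × Vec d) : Prop where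
  bound_le : D.P.bound ≤ H
  abs_ρ_le : |D.ρ z| ≤ H
  abs_v_le : |D.v z| ≤ H
  abs_w_le : |D.w z| ≤ H
  abs_Dt_R_le : |Dt D.R z| ≤ H
  abs_Dx_R_le k : |Dx k D.R z| ≤ H
  abs_a_le : |D.a z| ≤ H
  abs_Dt_a_le : |Dt D.a z| ≤ H
  abs_Dx_a_le k : |Dx k D.a z| ≤ H
  abs_b_le : |D.b z| ≤ H
  abs_Dx_b_le k : |Dx k D.b z| ≤ H
  abs_Dx_Dx_b_le k l : |Dx k (Dx l D.b) z| ≤ H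

theorem exists_coeffBound (T : ℝ) : ∃ H, ∀ t ∈ Set.Icc 0 T, ∀ x, D.CoeffBound H (t, x) := by
  classical
  obtain ⟨H, -, hH⟩ := SmoothPer.exists_common_bound
    ({D.ρ, D.v, D.w, Dt D.R, D.a, Dt D.a, D.b} ∪ Finset.univ.image (Dx · D.R)
      ∪ Finset.univ.image (Dx · D.a) ∪ Finset.univ.image (Dx · D.b)
      ∪ Finset.univ.image fun k : Fin d × Fin d => Dx k.1 (Dx k.2 D.b)) T
  refine ⟨max H D.P.bound, fun t ht x => ?_⟩
  constructor
  case bound_le => exact le_max_right _ _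
  all_goals
    intros
    exact (hH _ (by
      simp only [Finset.mem_union, Finset.mem_image, Finset.mem_insert, Finset.mem_singleton,
        Finset.mem_univ, true_and, true_or, or_true, exists_apply_eq_apply, Prod.exists,
        exists_apply_eq_apply2]) t ht x).trans (le_max_left _ _)

namespace CoeffBound

variable {D} {H : ℝ} {z : ℝ × Vec d} (h : D.CoeffBound H z)

include h

theorem one_le : 1 ≤ H := D.P.one_le_bound.trans h.bound_le

theorem abs_θo_le : |D.θo Λ z| ≤ H * (1 / Λ.ν) :=
  (abs_mul_le_of_le (Λ.abs_timeCorrector_le D.P z)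
    (h.abs_Dx_R_le D.i)).trans_eq (mul_comm _ _)

theorem abs_μ_mul_spaceWave_mul_le {y : ℝ} (hy : |y| ≤ 2 * H ^ 3) :
    |Λ.μ * (Λ.spaceWave D.P D.j z * y)| ≤ H * (2 * H ^ 3 / Λ.σ) := by
  have hH₁ := h.one_le
  have hM := D.P.bound_pos
  have hMH := h.bound_le
  have hμ := Λ.μ_pos
  have hσ := Λ.σ_pos
  refine (abs_mul_le_of_le (abs_of_pos hμ).le (abs_mul_le_of_le
    (Λ.abs_spaceWave_le D.P D.j z) hy)).trans ?_
  calc Λ.μ * (D.P.bound / (Λ.σ * Λ.μ) * Λ.spaceSpike D.j z.2 * (2 * H ^ 3))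
      = D.P.bound * Λ.spaceSpike D.j z.2 * (2 * H ^ 3 / Λ.σ) := by field_simp
    _ ≤ H * 1 * (2 * H ^ 3 / Λ.σ) := by
        gcongr
        · exact Λ.spaceSpike_nonneg D.j z.2
        · exact Λ.spaceSpike_le_one D.j z.2
    _ = _ := by rw [mul_one]

theorem abs_timeKernel_mul_le {y e : ℝ} (hy : |y| ≤ H * (2 * H ^ 3 / Λ.σ))
    (he : |e| ≤ H) : |Λ.timeKernel D.P d z * (y + e * Λ.spaceCorrector D.P D.j z)| ≤
      3 * H ^ 6 * (Λ.κ / Λ.σ * Λ.timeSpike z.1) := by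
  have hH₁ := h.one_le
  have hM := D.P.bound_pos
  have hMH := h.bound_le
  have hκ := Λ.κ_pos
  have hσ := Λ.σ_pos
  have hck := Λ.timeSpike_nonneg z.1
  refine (abs_mul_le_of_le (Λ.abs_timeKernel_le D.P z) (abs_add_le_of_le hy
    (abs_mul_le_of_le he (Λ.abs_spaceCorrector_le D.P D.j z)))).trans ?_
  calc D.P.bound ^ 2 * (Λ.κ * Λ.timeSpike z.1) * (H * (2 * H ^ 3 / Λ.σ) + H * (1 / Λ.σ))
      ≤ H ^ 2 * (Λ.κ * Λ.timeSpike z.1) * (H * (2 * H ^ 3 / Λ.σ) + H * (H ^ 3 / Λ.σ)) := by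
        gcongr
        exact one_le_pow₀ hH₁
    _ = _ := by ring

theorem abs_θ_le : |D.θ Λ z| ≤ 2 * H ^ 3 * (Λ.c₁ * (Λ.timeSpike z.1 * Λ.spaceSpike D.j z.2)) := by
  have hH₁ := h.one_le
  have hM := D.P.bound_pos
  have hMH := h.bound_le
  have hc := Λ.c₁_pos
  have hck := Λ.timeSpike_nonneg z.1
  have hcm := Λ.spaceSpike_nonneg D.j z.2
  refine (Λ.abs_Dx_potential_le D.P D.j hc.le h.abs_a_le
    ((h.abs_Dx_a_le D.j).trans
      (le_mul_of_one_le_left (by positivity) Λ.one_le_σ_real))).trans ?_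
  calc _ ≤ 2 * H ^ 2 * Λ.c₁ * (Λ.timeSpike z.1 * Λ.spaceSpike D.j z.2) * H := by gcongr
    _ = _ := by ring

theorem abs_Dx_B_le (k : Fin d) :
    |Dx k (D.B Λ) z| ≤ 2 * H ^ 3 * (Λ.c₂ * (Λ.timeSpike z.1 * Λ.spaceSpike D.j z.2)) := by
  have hH₁ := h.one_le
  have hM := D.P.bound_pos
  have hMH := h.bound_le
  have hc := Λ.c₂_pos
  have hck := Λ.timeSpike_nonneg z.1
  have hcm := Λ.spaceSpike_nonneg D.j z.2
  refine (Λ.abs_Dx_potential_le D.P D.j hc.le h.abs_b_le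
    ((h.abs_Dx_b_le k).trans
      (le_mul_of_one_le_left (by positivity) Λ.one_le_σ_real))).trans ?_
  calc _ ≤ 2 * H ^ 2 * Λ.c₂ * (Λ.timeSpike z.1 * Λ.spaceSpike D.j z.2) * H := by gcongr
    _ = _ := by ring

theorem abs_Dx_Dx_B_le (k l : Fin d) : |Dx k (Dx l (D.B Λ)) z| ≤
    4 * H ^ 3 * (Λ.c₂ * Λ.σ * Λ.μ * (Λ.timeSpike z.1 * Λ.spaceSpike D.j z.2)) := by
  have hH₁ := h.one_le
  have hM := D.P.bound_pos
  have hMH := h.bound_le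
  have hc := Λ.c₂_pos
  have hσ := Λ.σ_pos
  have hμ := Λ.μ_pos
  have hck := Λ.timeSpike_nonneg z.1
  have hcm := Λ.spaceSpike_nonneg D.j z.2
  refine (Λ.abs_Dx_Dx_potential_le D.P D.j hc.le h.abs_b_le
    h.abs_Dx_b_le (h.abs_Dx_Dx_b_le k l)).trans ?_
  calc _ ≤ 4 * H ^ 2 * (Λ.c₂ * Λ.σ * Λ.μ)
        * (Λ.timeSpike z.1 * Λ.spaceSpike D.j z.2) * H := by gcongr
    _ = _ := by ring

theorem abs_θ_mul_le {y : ℝ} (hy : |y| ≤ H) :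
    |D.θ Λ z * y| ≤ 2 * H ^ 6 * (Λ.c₁ * (Λ.timeSpike z.1 * Λ.spaceSpike D.j z.2)) := by
  have hH₁ := h.one_le
  have hs := mul_nonneg Λ.c₁_pos.le
    (mul_nonneg (Λ.timeSpike_nonneg z.1) (Λ.spaceSpike_nonneg D.j z.2))
  calc |D.θ Λ z * y|
      ≤ 2 * H ^ 3 * (Λ.c₁ * (Λ.timeSpike z.1 * Λ.spaceSpike D.j z.2)) * H :=
        abs_mul_le_of_le (h.abs_θ_le Λ) hy
    _ = 2 * H ^ 4 * (Λ.c₁ * (Λ.timeSpike z.1 * Λ.spaceSpike D.j z.2)) := by ring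
    _ ≤ _ := by gcongr; norm_num

theorem abs_mul_Dx_B_le {y : ℝ} (hy : |y| ≤ H) (k : Fin d) :
    |y * Dx k (D.B Λ) z| ≤ 2 * H ^ 6 * (Λ.c₂ * (Λ.timeSpike z.1 * Λ.spaceSpike D.j z.2)) := by
  have hH₁ := h.one_le
  have hs := mul_nonneg Λ.c₂_pos.le
    (mul_nonneg (Λ.timeSpike_nonneg z.1) (Λ.spaceSpike_nonneg D.j z.2))
  calc |y * Dx k (D.B Λ) z|
      ≤ H * (2 * H ^ 3 * (Λ.c₂ * (Λ.timeSpike z.1 * Λ.spaceSpike D.j z.2))) :=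
        abs_mul_le_of_le hy (h.abs_Dx_B_le Λ k)
    _ = 2 * H ^ 4 * (Λ.c₂ * (Λ.timeSpike z.1 * Λ.spaceSpike D.j z.2)) := by ring
    _ ≤ _ := by gcongr; norm_num

theorem abs_θo_mul_le {y : ℝ} (hy : |y| ≤ H) : |D.θo Λ z * y| ≤ H ^ 6 * (1 / Λ.ν) := by
  have hH₁ := h.one_le
  have hν := Λ.ν_pos
  calc |D.θo Λ z * y| ≤ H * (1 / Λ.ν) * H := abs_mul_le_of_le (h.abs_θo_le Λ) hy
    _ = H ^ 2 * (1 / Λ.ν) := by ring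
    _ ≤ _ := by gcongr; norm_num

theorem abs_timeCorrector_mul_le {y : ℝ} (hy : |y| ≤ H) :
    |Λ.timeCorrector D.P d z * y| ≤ H ^ 6 * (1 / Λ.ν) := by
  have hν := Λ.ν_pos
  calc |Λ.timeCorrector D.P d z * y| ≤ 1 / Λ.ν * H :=
        abs_mul_le_of_le (Λ.abs_timeCorrector_le D.P z) hy
    _ = H * (1 / Λ.ν) := mul_comm _ _
    _ ≤ _ := by
        gcongr
        exact le_self_pow₀ h.one_le (by norm_num)

theorem abs_θo_le_self : |D.θo Λ z| ≤ H :=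
  (h.abs_θo_le Λ).trans (mul_le_of_le_one_right (by linarith [h.one_le])
    (div_le_one_of_le₀ Λ.one_le_ν Λ.ν_pos.le))

theorem abs_Dx_mul_spaceWave_le (k : Fin d) :
    |Dx k (D.a * Λ.spaceWave D.P D.j) z| ≤ 2 * H ^ 2 := by
  have hH₁ := h.one_le
  have hMH := h.bound_le
  have hcm := Λ.spaceSpike_nonneg D.j z.2
  refine (Λ.abs_Dx_mul_spaceWave_le D.P D.j h.abs_a_le
    ((h.abs_Dx_a_le k).trans
      (le_mul_of_one_le_left (by positivity) Λ.one_le_σ_real))).trans ?_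
  calc _ ≤ 2 * H * 1 * H := by
        gcongr
        exact Λ.spaceSpike_le_one D.j z.2
    _ = _ := by ring

theorem abs_Dt_A_le : |Dt (D.A Λ) z| ≤
    2 * H ^ 3 * (Λ.c₁ * Λ.κ * Λ.ν / Λ.μ * (Λ.timeSpike z.1 * Λ.spaceSpike D.j z.2)) := by
  have hH₁ := h.one_le
  have hM := D.P.bound_pos
  have hMH := h.bound_le
  have hc := Λ.c₁_pos
  have hκ := Λ.κ_pos
  have hν := Λ.ν_pos
  have hμ := Λ.μ_pos
  have hck := Λ.timeSpike_nonneg z.1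
  have hcm := Λ.spaceSpike_nonneg D.j z.2
  refine (Λ.abs_Dt_potential_le D.P D.j hc.le h.abs_a_le
    h.abs_Dt_a_le).trans ?_
  calc _ ≤ 2 * H ^ 2 * (Λ.c₁ * Λ.κ * Λ.ν / Λ.μ)
        * (Λ.timeSpike z.1 * Λ.spaceSpike D.j z.2) * H := by gcongr
    _ = _ := by ring

theorem abs_newR_le : |D.newR Λ z| ≤ 4 * H ^ 6 * (1 / Λ.ν + Λ.κ / Λ.σ * Λ.timeSpike z.1
    + (Λ.c₁ + Λ.c₂) * (Λ.timeSpike z.1 * Λ.spaceSpike D.j z.2)) := by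
  have hH₁ := h.one_le
  have hν := Λ.ν_pos
  have hκ := Λ.κ_pos
  have hck := Λ.timeSpike_nonneg z.1
  have hs := mul_nonneg Λ.c₁_pos.le (mul_nonneg hck (Λ.spaceSpike_nonneg D.j z.2))
  have hE : |Dx D.j D.a z * Dx D.j D.b z * Λ.spaceWave D.P D.j z
      - Dx D.j D.R z * Dx D.j (Λ.spaceWave D.P D.j) z| ≤ 2 * H ^ 3 := by
    refine (abs_sub_le_of_le (abs_mul_le_of_le (abs_mul_le_of_le
      (h.abs_Dx_a_le D.j) (h.abs_Dx_b_le D.j))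
      ((Λ.abs_spaceWave_le_bound D.P D.j z).trans h.bound_le)) (abs_mul_le_of_le
      (h.abs_Dx_R_le D.j)
      ((Λ.abs_Dx_spaceWave_le_bound D.P D.j D.j z).trans h.bound_le))).trans ?_
    nlinarith
  calc |D.newR Λ z|
      = |Λ.timeCorrector D.P d z * Dt D.R z + D.θ Λ z * D.v z + D.ρ z * Dx D.j (D.B Λ) z
          + (D.θo Λ z * D.v z + D.θo Λ z * Dx D.j (D.B Λ) z) + Λ.timeKernel D.P d z
            * (Λ.μ * (Λ.spaceWave D.P D.j z * (Dx D.j D.a z * Dx D.j D.b z * Λ.spaceWave D.P D.j z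
              - Dx D.j D.R z * Dx D.j (Λ.spaceWave D.P D.j) z))
              + Dx D.j D.R z * Λ.spaceCorrector D.P D.j z)| := by
        rw [← mul_add]
        rfl
    _ ≤ _ := abs_add_le_of_le (abs_add_le_of_le (abs_add_le_of_le (abs_add_le_of_le
        (h.abs_timeCorrector_mul_le Λ h.abs_Dt_R_le) (h.abs_θ_mul_le Λ h.abs_v_le))
        (h.abs_mul_Dx_B_le Λ h.abs_ρ_le D.j))
        (abs_add_le_of_le (h.abs_θo_mul_le Λ h.abs_v_le)
          (h.abs_mul_Dx_B_le Λ (h.abs_θo_le_self Λ) D.j)))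
        (h.abs_timeKernel_mul_le Λ (h.abs_μ_mul_spaceWave_mul_le Λ hE) (h.abs_Dx_R_le D.j))
    _ = H ^ 6 * (2 * (1 / Λ.ν) + 3 * (Λ.κ / Λ.σ * Λ.timeSpike z.1)
          + (2 * Λ.c₁ + 4 * Λ.c₂) * (Λ.timeSpike z.1 * Λ.spaceSpike D.j z.2)) := by ring
    _ ≤ H ^ 6 * (4 * (1 / Λ.ν) + 4 * (Λ.κ / Λ.σ * Λ.timeSpike z.1)
          + (4 * Λ.c₁ + 4 * Λ.c₂) * (Λ.timeSpike z.1 * Λ.spaceSpike D.j z.2)) := by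
        rw [add_mul, add_mul, mul_assoc, mul_assoc 4 Λ.c₁]
        gcongr <;> norm_num
    _ = _ := by ring

theorem abs_addS_le : |D.addS Λ z| ≤ 4 * H ^ 6 * (1 / Λ.ν + Λ.κ / Λ.σ * Λ.timeSpike z.1
    + (Λ.c₁ + Λ.c₂ + Λ.c₁ * Λ.κ * Λ.ν / Λ.μ) * (Λ.timeSpike z.1 * Λ.spaceSpike D.j z.2)) := by
  have hH₁ := h.one_le
  have hν := Λ.ν_pos
  have hκ := Λ.κ_pos
  have hμ := Λ.μ_pos
  have hc := Λ.c₁_pos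
  have hck := Λ.timeSpike_nonneg z.1
  have hcm := Λ.spaceSpike_nonneg D.j z.2
  have hE : |Dx D.i D.b z * Dx D.j (D.a * Λ.spaceWave D.P D.j) z| ≤ 2 * H ^ 3 :=
    (abs_mul_le_of_le (h.abs_Dx_b_le D.i) (h.abs_Dx_mul_spaceWave_le Λ D.j)).trans_eq (by ring)
  calc |D.addS Λ z|
      = |Dt (D.A Λ) z + D.θ Λ z * D.w z - D.ρ z * Dx D.i (D.B Λ) z
          + (D.θo Λ z * D.w z - D.θo Λ z * Dx D.i (D.B Λ) z) - Λ.timeKernel D.P d z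
            * (Λ.μ * (Λ.spaceWave D.P D.j z * (Dx D.i D.b z * Dx D.j (D.a * Λ.spaceWave D.P D.j) z))
              + Dx D.i D.R z * Λ.spaceCorrector D.P D.j z)| := by
        rw [← mul_sub]
        rfl
    _ ≤ _ := abs_sub_le_of_le (abs_add_le_of_le (abs_sub_le_of_le (abs_add_le_of_le
        (h.abs_Dt_A_le Λ) (h.abs_θ_mul_le Λ h.abs_w_le))
        (h.abs_mul_Dx_B_le Λ h.abs_ρ_le D.i))
        (abs_sub_le_of_le (h.abs_θo_mul_le Λ h.abs_w_le)
          (h.abs_mul_Dx_B_le Λ (h.abs_θo_le_self Λ) D.i)))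
        (h.abs_timeKernel_mul_le Λ (h.abs_μ_mul_spaceWave_mul_le Λ hE) (h.abs_Dx_R_le D.i))
    _ = 2 * H ^ 3 * (Λ.c₁ * Λ.κ * Λ.ν / Λ.μ * (Λ.timeSpike z.1 * Λ.spaceSpike D.j z.2))
          + H ^ 6 * (1 / Λ.ν + 3 * (Λ.κ / Λ.σ * Λ.timeSpike z.1)
          + (2 * Λ.c₁ + 4 * Λ.c₂) * (Λ.timeSpike z.1 * Λ.spaceSpike D.j z.2)) := by ring
    _ ≤ 4 * H ^ 6 * (Λ.c₁ * Λ.κ * Λ.ν / Λ.μ * (Λ.timeSpike z.1 * Λ.spaceSpike D.j z.2))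
          + H ^ 6 * (4 * (1 / Λ.ν) + 4 * (Λ.κ / Λ.σ * Λ.timeSpike z.1)
          + (4 * Λ.c₁ + 4 * Λ.c₂) * (Λ.timeSpike z.1 * Λ.spaceSpike D.j z.2)) := by
        have := Λ.c₂_pos
        gcongr
        any_goals norm_num
        exact le_mul_of_one_le_left (by positivity) (by norm_num)
    _ = _ := by ring

end CoeffBound

end Ansatz

/-! ### Norms of concentrated functions -/

theorem spike_le_rpow (μ y α : ℝ) : spike μ y ≤ spike μ y ^ α := by
  rw [spike]
  split_ifs
  · rw [Real.one_rpow]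
  · exact Real.rpow_nonneg le_rfl α

theorem rpow_mul_spike_le {μ A : ℝ} (hμ : 0 < μ) (hA : 0 ≤ A) (y α : ℝ) :
    A ^ α * spike μ y ≤ μ ^ (-α) * (A * (μ * spike μ y)) ^ α := by
  have hs := spike_nonneg μ y
  have hcancel : μ ^ (-α) * μ ^ α = 1 := by
    rw [← Real.rpow_add hμ, neg_add_cancel, Real.rpow_zero]
  calc A ^ α * spike μ y ≤ A ^ α * spike μ y ^ α := by
        gcongr
        exact spike_le_rpow μ y α
    _ = (μ ^ (-α) * μ ^ α) * (A ^ α * spike μ y ^ α) := by rw [hcancel, one_mul]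
    _ = _ := by
        rw [Real.mul_rpow hA (by positivity), Real.mul_rpow hμ.le hs]
        ring

theorem setLIntegral_ofReal_mul_spike {μ : ℝ} (hμ : 1 ≤ μ) :
    ∫⁻ y in Set.Ico 0 1, ENNReal.ofReal (μ * spike μ y) = 1 := by
  have hμ₀ : 0 < μ := zero_lt_one.trans_le hμ
  simp only [ENNReal.ofReal_mul hμ₀.le]
  rw [lintegral_const_mul _ (measurable_ofReal_spike μ), setLIntegral_ofReal_spike hμ,
    ← ENNReal.ofReal_mul hμ₀.le, mul_inv_cancel₀ hμ₀.ne', ENNReal.ofReal_one]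

theorem setLIntegral_fundCube_mul_spike_le (j : Fin d) {f : Vec d → ℝ} (hf : Measurable f) {μ : ℝ}
    (hμ : 1 ≤ μ) {σ : ℕ} (hσ : 0 < σ) {C : ℝ} (hC : 0 ≤ C)
    (hosc : ∀ x ∈ fundCube d, ∀ x' ∈ fundCube d, dist x x' ≤ (σ : ℝ)⁻¹ → f x ≤ C * f x') :
    ∫⁻ x in fundCube d, ENNReal.ofReal (f x) * ENNReal.ofReal (μ * spike μ (σ * x j)) ≤
      ENNReal.ofReal C * ∫⁻ x in fundCube d, ENNReal.ofReal (f x) := by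
  have h := setLIntegral_fundCube_mul_comp_le j hf.ennreal_ofReal
    ((measurable_spike μ).const_mul μ).ennreal_ofReal
    (fun y => by simp only [spike_periodic μ y]) hσ (c := ENNReal.ofReal C) fun x hx x' hx' hxx' =>
      (ENNReal.ofReal_le_ofReal (hosc x hx x' hx' hxx')).trans_eq (ENNReal.ofReal_mul hC)
  rwa [setLIntegral_ofReal_mul_spike hμ, mul_one] at h

theorem setLIntegral_Ioo_mul_spike_le {T : ℝ} (hT : 0 < T) {N : ℕ} (hN : 0 < N) {f : ℝ → ℝ}
    (hf : Measurable f) {κ : ℝ} (hκ : 1 ≤ κ) {C : ℝ} (hC : 0 ≤ C)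
    (hosc : ∀ t ∈ Set.Icc 0 T, ∀ t' ∈ Set.Icc 0 T, |t - t'| ≤ T / N → f t ≤ C * f t') :
    ∫⁻ t in Set.Ioo 0 T, ENNReal.ofReal (f t) * ENNReal.ofReal (κ * spike κ (N / T * t)) ≤
      ENNReal.ofReal C * ∫⁻ t in Set.Ioo 0 T, ENNReal.ofReal (f t) := by
  have h := setLIntegral_Ioo_mul_comp_le hT hN hf.ennreal_ofReal
    ((measurable_spike κ).const_mul κ).ennreal_ofReal
    (fun y => by simp only [spike_periodic κ y]) (c := ENNReal.ofReal C) fun t ht t' ht' htt' =>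
      (ENNReal.ofReal_le_ofReal (hosc t ht t' ht' htt')).trans_eq (ENNReal.ofReal_mul hC)
  rwa [setLIntegral_ofReal_mul_spike hκ, mul_one] at h

theorem spLp_le_of_norm_le {E : Type*} [NormedAddCommGroup E] {q : ℝ≥0∞} (hq : q ≠ 0)
    {f : Vec d → E} {c : ℝ} (hf : ∀ x, ‖f x‖ ≤ c) : spLp q f ≤ ENNReal.ofReal c := by
  rw [spLp_eq_eLpNorm hq]
  refine (eLpNorm_le_of_ae_bound (.of_forall hf)).trans_eq ?_
  simp

theorem LsLpT_le_of_norm_le {E : Type*} [NormedAddCommGroup E] {s q : ℝ≥0∞} (hs : s ≠ 0)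
    (hq : q ≠ 0) {T c : ℝ} {f : ℝ → Vec d → E} (hf : ∀ t ∈ Set.Ioo 0 T, ∀ x, ‖f t x‖ ≤ c) :
    LsLpT T s q f ≤ ENNReal.ofReal c * ENNReal.ofReal T ^ s⁻¹.toReal := by
  rw [LsLpT_eq_eLpNorm hs]
  refine (eLpNorm_le_mul_lintegral_rpow hs (c := ENNReal.ofReal c) ENNReal.ofReal_ne_top (g := 1)
    ?_).trans_eq ?_
  · filter_upwards [ae_restrict_mem measurableSet_Ioo] with t ht
    simpa using spLp_le_of_norm_le hq (hf t ht)
  · simp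

theorem LsLpT_add_le {E : Type*} [NormedAddCommGroup E] {s q : ℝ≥0∞} (hs : 1 ≤ s) (hq : 1 ≤ q)
    (hq' : q ≠ ∞) {T : ℝ} {f g : ℝ → Vec d → E} (hf : StronglyMeasurable (Function.uncurry f))
    (hg : StronglyMeasurable (Function.uncurry g)) :
    LsLpT T s q (fun t x => f t x + g t x) ≤ LsLpT T s q f + LsLpT T s q g := by
  have hs₀ := (zero_lt_one.trans_le hs).ne'
  have hq₀ := (zero_lt_one.trans_le hq).ne'
  rw [LsLpT_eq_eLpNorm hs₀, LsLpT_eq_eLpNorm hs₀, LsLpT_eq_eLpNorm hs₀]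
  refine (eLpNorm_mono_enorm fun t => ?_).trans (eLpNorm_add_le
    (measurable_spLp hq' hf).aestronglyMeasurable (measurable_spLp hq' hg).aestronglyMeasurable hs)
  simp only [Pi.add_apply, enorm_eq_self]
  rw [spLp_eq_eLpNorm hq₀, spLp_eq_eLpNorm hq₀, spLp_eq_eLpNorm hq₀]
  exact eLpNorm_add_le (hf.comp_measurable measurable_prodMk_left).aestronglyMeasurable
    (hg.comp_measurable measurable_prodMk_left).aestronglyMeasurable hq

namespace Scales

variable {Λ : Scales} {T : ℝ} {N : ℕ}

theorem measurable_timeSpike (Λ : Scales) : Measurable Λ.timeSpike :=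
  (measurable_spike Λ.κ).comp (measurable_const_mul Λ.ν)

theorem setLIntegral_timeSpike_le (hT : 0 < T) (hN : 0 < N) (hν : Λ.ν = N / T) :
    ∫⁻ t in Set.Ioo 0 T, ENNReal.ofReal (Λ.timeSpike t) ≤ ENNReal.ofReal (T * Λ.κ⁻¹) := by
  simp only [timeSpike, hν]
  exact setLIntegral_Ioo_ofReal_spike_le hT hN Λ.one_le_κ

theorem volume_timeSpike_ne_zero_le (hT : 0 < T) (hN : 0 < N) (hν : Λ.ν = N / T) :
    volume.restrict (Set.Ioo 0 T) {t | Λ.timeSpike t ≠ 0} ≤ ENNReal.ofReal (T * Λ.κ⁻¹) := by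
  refine le_trans ?_ (setLIntegral_timeSpike_le hT hN hν)
  have hJ : MeasurableSet {t | Λ.timeSpike t ≠ 0} :=
    Λ.measurable_timeSpike (measurableSet_singleton 0).compl
  rw [← lintegral_indicator_one hJ]
  refine lintegral_mono fun t => ?_
  by_cases ht : Λ.timeSpike t = 0
  · simp [ht]
  · have hone : Λ.timeSpike t = 1 := by
      rw [timeSpike, spike] at ht ⊢
      simpa using ht
    simp [hone]

theorem spLp_le_of_norm_le_mul_spaceSpike {E : Type*} [NormedAddCommGroup E] {q : ℝ≥0∞}
    (hq : q ≠ 0) (j : Fin d) {f : Vec d → E} {c : ℝ} (hc : 0 ≤ c)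
    (hf : ∀ x, ‖f x‖ ≤ c * Λ.spaceSpike j x) :
    spLp q f ≤ ENNReal.ofReal (c * Λ.μ ^ (-q⁻¹.toReal)) := by
  have hμ := Λ.μ_pos
  rw [spLp_eq_eLpNorm hq]
  refine (eLpNorm_le_mul_lintegral_rpow hq (c := ENNReal.ofReal c) ENNReal.ofReal_ne_top
    (g := fun x => ENNReal.ofReal (Λ.spaceSpike j x)) (.of_forall fun x => ?_)).trans ?_
  · have hs := Λ.spaceSpike_nonneg j x
    rw [ENNReal.ofReal_rpow_of_nonneg hs ENNReal.toReal_nonneg, ← ENNReal.ofReal_mul hc,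
      ← ofReal_norm]
    refine ENNReal.ofReal_le_ofReal ((hf x).trans ?_)
    gcongr
    exact spike_le_rpow _ _ _
  · rw [ENNReal.ofReal_mul hc, Real.rpow_neg_eq_inv_rpow,
      ← ENNReal.ofReal_rpow_of_pos (inv_pos.2 hμ)]
    gcongr
    exact setLIntegral_fundCube_ofReal_spike_le j Λ.one_le_μ Λ.one_le_σ

theorem spLp_le_of_norm_le_mul_rpow {E : Type*} [NormedAddCommGroup E] {q : ℝ≥0∞} (hq : q ≠ 0)
    (j : Fin d) {f : Vec d → E} {A : Vec d → ℝ} (hA : Measurable A) (hA₀ : ∀ x, 0 ≤ A x)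
    {c C m : ℝ} (hc : 0 ≤ c) (hC : 0 ≤ C) (hm : 0 ≤ m)
    (hosc : ∀ x ∈ fundCube d, ∀ x' ∈ fundCube d, dist x x' ≤ (Λ.σ : ℝ)⁻¹ → A x ≤ C * A x')
    (hAm : ∫⁻ x in fundCube d, ENNReal.ofReal (A x) ≤ ENNReal.ofReal m)
    (hf : ∀ x, ‖f x‖ ≤ c * (A x ^ q⁻¹.toReal * Λ.spaceSpike j x)) :
    spLp q f ≤ ENNReal.ofReal (c * Λ.μ ^ (-q⁻¹.toReal) * (C * m) ^ q⁻¹.toReal) := by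
  have hμ := Λ.μ_pos
  have hcμ : 0 ≤ c * Λ.μ ^ (-q⁻¹.toReal) := by positivity
  rw [spLp_eq_eLpNorm hq, ENNReal.ofReal_mul hcμ,
    ← ENNReal.ofReal_rpow_of_nonneg (by positivity) ENNReal.toReal_nonneg, ENNReal.ofReal_mul hC]
  refine (eLpNorm_le_mul_lintegral_rpow hq (c := ENNReal.ofReal (c * Λ.μ ^ (-q⁻¹.toReal)))
    ENNReal.ofReal_ne_top (g := fun x => ENNReal.ofReal (A x) * ENNReal.ofReal
      (Λ.μ * Λ.spaceSpike j x)) (.of_forall fun x => ?_)).trans ?_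
  · have hs := Λ.spaceSpike_nonneg j x
    rw [← ENNReal.ofReal_mul (hA₀ x), ENNReal.ofReal_rpow_of_nonneg
      (mul_nonneg (hA₀ x) (by positivity)) ENNReal.toReal_nonneg, ← ENNReal.ofReal_mul hcμ,
      ← ofReal_norm, mul_assoc]
    exact ENNReal.ofReal_le_ofReal ((hf x).trans
      (mul_le_mul_of_nonneg_left (rpow_mul_spike_le hμ (hA₀ x) _ _) hc))
  · gcongr
    exact (setLIntegral_fundCube_mul_spike_le j hA Λ.one_le_μ Λ.one_le_σ hC hosc).trans
      (mul_le_mul_right hAm _)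

theorem eLpNorm_le_of_le_mul_rpow (hT : 0 < T) (hN : 0 < N) (hν : Λ.ν = N / T) {s : ℝ≥0∞}
    (hs : s ≠ 0) {g : ℝ → ℝ≥0∞} {r : ℝ → ℝ} (hr : Measurable r) (hr₀ : ∀ t, 0 ≤ r t)
    {c C m : ℝ} (hc : 0 ≤ c) (hC : 0 ≤ C) (hm : 0 ≤ m)
    (hosc : ∀ t ∈ Set.Icc 0 T, ∀ t' ∈ Set.Icc 0 T, |t - t'| ≤ T / N → r t ≤ C * r t')
    (hrm : ∫⁻ t in Set.Ioo 0 T, ENNReal.ofReal (r t) ≤ ENNReal.ofReal m)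
    (hg : ∀ t ∈ Set.Ioo 0 T, g t ≤ ENNReal.ofReal (c * (r t ^ s⁻¹.toReal * Λ.timeSpike t))) :
    eLpNorm g s (volume.restrict (Set.Ioo 0 T)) ≤
      ENNReal.ofReal (c * Λ.κ ^ (-s⁻¹.toReal) * (C * m) ^ s⁻¹.toReal) := by
  have hκ := Λ.κ_pos
  have hcκ : 0 ≤ c * Λ.κ ^ (-s⁻¹.toReal) := by positivity
  rw [ENNReal.ofReal_mul hcκ,
    ← ENNReal.ofReal_rpow_of_nonneg (by positivity) ENNReal.toReal_nonneg, ENNReal.ofReal_mul hC]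
  refine (eLpNorm_le_mul_lintegral_rpow hs (c := ENNReal.ofReal (c * Λ.κ ^ (-s⁻¹.toReal)))
    ENNReal.ofReal_ne_top (g := fun t => ENNReal.ofReal (r t) * ENNReal.ofReal
      (Λ.κ * spike Λ.κ (N / T * t))) ?_).trans ?_
  · filter_upwards [ae_restrict_mem measurableSet_Ioo] with t ht
    have hs := spike_nonneg Λ.κ (N / T * t)
    rw [← ENNReal.ofReal_mul (hr₀ t), ENNReal.ofReal_rpow_of_nonneg
      (mul_nonneg (hr₀ t) (by positivity)) ENNReal.toReal_nonneg, ← ENNReal.ofReal_mul hcκ,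
      enorm_eq_self, mul_assoc]
    refine (hg t ht).trans (ENNReal.ofReal_le_ofReal ?_)
    rw [timeSpike, hν]
    exact mul_le_mul_of_nonneg_left (rpow_mul_spike_le hκ (hr₀ t) _ _) hc
  · gcongr
    exact (setLIntegral_Ioo_mul_spike_le hT hN hr Λ.one_le_κ hC hosc).trans
      (mul_le_mul_right hrm _)

theorem LsW1qT_one_le (hT : 0 < T) (hN : 0 < N) (hν : Λ.ν = N / T) {q : ℝ≥0∞} (hq : q ≠ 0)
    (j : Fin d) {u : ℝ → Vec d → Vec d} {c c' : ℝ} (hc : 0 ≤ c) (hc' : 0 ≤ c')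
    (hu : ∀ t ∈ Set.Ioo 0 T, ∀ x, ‖u t x‖ ≤ c * (Λ.timeSpike t * Λ.spaceSpike j x))
    (hu' : ∀ t ∈ Set.Ioo 0 T, ∀ x,
      ‖fderiv ℝ (u t) x‖ ≤ c' * (Λ.timeSpike t * Λ.spaceSpike j x)) :
    LsW1qT T 1 q u ≤ ENNReal.ofReal ((c + c') * Λ.μ ^ (-q⁻¹.toReal) * (T * Λ.κ⁻¹)) := by
  have hC : 0 ≤ (c + c') * Λ.μ ^ (-q⁻¹.toReal) :=
    mul_nonneg (by positivity) (Real.rpow_nonneg Λ.μ_pos.le _)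
  have hnorm : ∀ t ∈ Set.Ioo 0 T, W1qNorm q (u t) ≤
      ENNReal.ofReal ((c + c') * Λ.μ ^ (-q⁻¹.toReal)) * ENNReal.ofReal (Λ.timeSpike t) := by
    intro t ht
    have hts := Λ.timeSpike_nonneg t
    have hμ := Real.rpow_nonneg Λ.μ_pos.le (-q⁻¹.toReal)
    refine (add_le_add
      (spLp_le_of_norm_le_mul_spaceSpike hq j (mul_nonneg hc hts) fun x =>
        (hu t ht x).trans_eq (mul_assoc _ _ _).symm)
      (spLp_le_of_norm_le_mul_spaceSpike hq j (mul_nonneg hc' hts) fun x =>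
        (hu' t ht x).trans_eq (mul_assoc _ _ _).symm)).trans_eq ?_
    rw [← ENNReal.ofReal_add (by positivity) (by positivity), ← ENNReal.ofReal_mul hC]
    ring_nf
  rw [LsW1qT_one, ENNReal.ofReal_mul hC]
  calc ∫⁻ t in Set.Ioo 0 T, W1qNorm q (u t)
      ≤ ∫⁻ t in Set.Ioo 0 T, ENNReal.ofReal ((c + c') * Λ.μ ^ (-q⁻¹.toReal))
          * ENNReal.ofReal (Λ.timeSpike t) := setLIntegral_mono' measurableSet_Ioo hnorm
    _ = ENNReal.ofReal ((c + c') * Λ.μ ^ (-q⁻¹.toReal))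
          * ∫⁻ t in Set.Ioo 0 T, ENNReal.ofReal (Λ.timeSpike t) :=
        lintegral_const_mul _ Λ.measurable_timeSpike.ennreal_ofReal
    _ ≤ _ := by
        gcongr
        exact setLIntegral_timeSpike_le hT hN hν

theorem setLIntegral_ofReal_abs_le (j : Fin d) {g : Vec d → ℝ} {a b : ℝ} (ha : 0 ≤ a) (hb : 0 ≤ b)
    (hg : ∀ x, |g x| ≤ a + b * Λ.spaceSpike j x) :
    ∫⁻ x in fundCube d, ENNReal.ofReal |g x| ≤ ENNReal.ofReal (a + b * Λ.μ⁻¹) := by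
  have hμ := Λ.μ_pos
  calc ∫⁻ x in fundCube d, ENNReal.ofReal |g x|
      ≤ ∫⁻ x in fundCube d,
          (ENNReal.ofReal a + ENNReal.ofReal b * ENNReal.ofReal (Λ.spaceSpike j x)) :=
        lintegral_mono fun x => by
          have hs := Λ.spaceSpike_nonneg j x
          rw [← ENNReal.ofReal_mul hb, ← ENNReal.ofReal_add ha (by positivity)]
          exact ENNReal.ofReal_le_ofReal (hg x)
    _ = ENNReal.ofReal a
          + ENNReal.ofReal b * ∫⁻ x in fundCube d, ENNReal.ofReal (Λ.spaceSpike j x) := by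
        rw [lintegral_add_left measurable_const, lintegral_const_mul', lintegral_const,
          measure_univ, mul_one]
        exact ENNReal.ofReal_ne_top
    _ ≤ ENNReal.ofReal a + ENNReal.ofReal b * ENNReal.ofReal Λ.μ⁻¹ := by
        gcongr
        exact setLIntegral_fundCube_ofReal_spike_le j Λ.one_le_μ Λ.one_le_σ
    _ = ENNReal.ofReal (a + b * Λ.μ⁻¹) := by
        rw [← ENNReal.ofReal_mul hb, ← ENNReal.ofReal_add ha (by positivity)]

theorem l1Norm_le_of_abs_le (hT : 0 < T) (hN : 0 < N) (hν : Λ.ν = N / T) (j : Fin d)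
    {f : SmoothPer d} {a b c : ℝ} (ha : 0 ≤ a) (hb : 0 ≤ b) (hc : 0 ≤ c)
    (hf : ∀ t ∈ Set.Icc 0 T, ∀ x, |f (t, x)| ≤
      a + b * Λ.timeSpike t + c * (Λ.timeSpike t * Λ.spaceSpike j x)) :
    l1Norm T f ≤ ENNReal.ofReal (T * (a + b / Λ.κ + c / (Λ.κ * Λ.μ))) := by
  have hμ := Λ.μ_pos
  have hκ := Λ.κ_pos
  have hspace : ∀ t ∈ Set.Ioo 0 T, ∫⁻ x in fundCube d, ENNReal.ofReal |f (t, x)| ≤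
      ENNReal.ofReal a + ENNReal.ofReal (b + c * Λ.μ⁻¹) * ENNReal.ofReal (Λ.timeSpike t) := by
    intro t ht
    have hts := Λ.timeSpike_nonneg t
    refine (setLIntegral_ofReal_abs_le (Λ := Λ) j (g := fun x => f (t, x))
      (add_nonneg ha (mul_nonneg hb hts)) (mul_nonneg hc hts) fun x =>
        (hf t ⟨ht.1.le, ht.2.le⟩ x).trans_eq (by ring)).trans_eq ?_
    rw [← ENNReal.ofReal_mul (by positivity), ← ENNReal.ofReal_add ha (by positivity)]
    ring_nf
  calc l1Norm T f
      ≤ ∫⁻ t in Set.Ioo 0 T, (ENNReal.ofReal a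
          + ENNReal.ofReal (b + c * Λ.μ⁻¹) * ENNReal.ofReal (Λ.timeSpike t)) :=
        setLIntegral_mono' measurableSet_Ioo hspace
    _ = ENNReal.ofReal a * ENNReal.ofReal T + ENNReal.ofReal (b + c * Λ.μ⁻¹)
          * ∫⁻ t in Set.Ioo 0 T, ENNReal.ofReal (Λ.timeSpike t) := by
        rw [lintegral_add_left measurable_const, lintegral_const_mul' _ _ ENNReal.ofReal_ne_top,
          lintegral_const, Measure.restrict_apply_univ, Real.volume_Ioo, sub_zero]
    _ ≤ ENNReal.ofReal a * ENNReal.ofReal T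
          + ENNReal.ofReal (b + c * Λ.μ⁻¹) * ENNReal.ofReal (T * Λ.κ⁻¹) := by
        gcongr
        exact setLIntegral_timeSpike_le hT hN hν
    _ = _ := by
        rw [← ENNReal.ofReal_mul ha, ← ENNReal.ofReal_mul (by positivity),
          ← ENNReal.ofReal_add (by positivity) (by positivity)]
        congr 1
        field_simp
        ring

end Scales

/-! ### Size of the perturbation -/

section Size

variable {T ε : ℝ}

/-- A smooth positive majorant `A` of `|R|`, together with a majorant `r` of its integral over the
torus, whose total mass on `(0, T)` is at most `ε`. -/
structure Majorant (R : SmoothPer d) (T ε : ℝ) where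
  A : SmoothPer d
  r : ℝ → ℝ
  A_pos z : 0 < A z
  r_pos t : 0 < r t
  contDiff_r : ContDiff ℝ (⊤ : ℕ∞) r
  abs_le z : |R z| ≤ A z
  lintegral_A_le : ∀ t ∈ Set.Icc 0 T,
    ∫⁻ x in fundCube d, ENNReal.ofReal (A (t, x)) ≤ ENNReal.ofReal (r t)
  lintegral_r_le : ∫⁻ t in Set.Ioo 0 T, ENNReal.ofReal (r t) ≤ ENNReal.ofReal ε

theorem nonempty_majorant (hT : 0 < T) {R : SmoothPer d} (hR : l1Norm T R < ENNReal.ofReal ε) :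
    Nonempty (Majorant R T ε) := by
  have hc0 : ∀ t, 0 ≤ ∫ x in fundCube d, |R (t, x)| := fun t =>
    integral_nonneg fun x => abs_nonneg _
  rw [l1Norm_eq_ofReal_integral, ENNReal.ofReal_lt_ofReal_iff_of_nonneg (integral_nonneg hc0)] at hR
  obtain ⟨r, δ, hrsmooth, hrpos, hδ, hr, hrε⟩ :=
    exists_contDiff_majorant_of_integral_lt R.continuous_integral_abs hc0 hT hR
  obtain ⟨A, hA⟩ := R.exists_pos_majorant hδ
  refine ⟨A, r, fun z => (hA z).1, hrpos, hrsmooth, fun z => (hA z).2.1, fun t ht => ?_, hrε⟩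
  calc ∫⁻ x in fundCube d, ENNReal.ofReal (A (t, x))
      ≤ ∫⁻ x in fundCube d, (ENNReal.ofReal |R (t, x)| + ENNReal.ofReal δ) :=
        lintegral_mono fun x => by
          rw [← ENNReal.ofReal_add (abs_nonneg _) hδ.le]
          exact ENNReal.ofReal_le_ofReal (hA (t, x)).2.2
    _ = ENNReal.ofReal ((∫ x in fundCube d, |R (t, x)|) + δ) := by
        rw [lintegral_add_right _ measurable_const, R.setLIntegral_ofReal_abs,
          ENNReal.ofReal_add (hc0 t) hδ.le]
        simp
    _ ≤ ENNReal.ofReal (r t) := ENNReal.ofReal_le_ofReal (hr t ht)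

theorem eventually_const_div_natCast_le {η : ℝ} (hη : 0 < η) (C : ℝ) :
    ∀ᶠ n : ℕ in Filter.atTop, C / n ≤ η :=
  (tendsto_const_div_atTop_nhds_zero_nat C).eventually_le_const hη

namespace SmoothPer

variable (f : SmoothPer d) (hf : ∀ z, 0 < f z) (T : ℝ)

include hf

theorem eventually_le_two_mul : ∀ᶠ n : ℕ in Filter.atTop, ∀ t ∈ Set.Icc 0 T, ∀ x ∈ fundCube d,
    ∀ x' ∈ fundCube d, dist x x' ≤ (n : ℝ)⁻¹ → f (t, x) ≤ 2 * f (t, x') := by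
  obtain ⟨η, hη, hclose⟩ := exists_forall_le_two_mul_of_dist_le
    (isCompact_Icc.prod isCompact_Icc : IsCompact (Set.Icc (0 : ℝ) T ×ˢ fundCube d))
    f.continuous.continuousOn fun z _ => hf z
  filter_upwards [eventually_const_div_natCast_le hη 1] with n hn t ht x hx x' hx' hxx'
  refine hclose (t, x) ⟨ht, hx⟩ (t, x') ⟨ht, hx'⟩ ?_
  rw [Prod.dist_eq, dist_self, max_eq_right dist_nonneg]
  exact (hxx'.trans_eq (one_div _).symm).trans hn

theorem eventually_le_natCast_mul (H : ℝ) :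
    ∀ᶠ n : ℕ in Filter.atTop, ∀ t ∈ Set.Icc 0 T, ∀ x, H ≤ n * f (t, x) := by
  obtain ⟨c, hc, hcf⟩ := f.exists_pos_le hf T
  filter_upwards [eventually_const_div_natCast_le hc H, Filter.eventually_gt_atTop 0]
    with n hn hn₀ t ht x
  have hn₀' : (0 : ℝ) < n := mod_cast hn₀
  calc H ≤ n * c := by rwa [div_le_iff₀' hn₀'] at hn
    _ ≤ n * f (t, x) := by
        gcongr
        exact hcf t ht x

end SmoothPer

namespace Majorant

variable {R : SmoothPer d} (M : Majorant R T ε)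

theorem eventually_r_le_two_mul : ∀ᶠ n : ℕ in Filter.atTop, ∀ t ∈ Set.Icc 0 T, ∀ t' ∈ Set.Icc 0 T,
    |t - t'| ≤ T / n → M.r t ≤ 2 * M.r t' := by
  obtain ⟨η, hη, hclose⟩ := exists_forall_le_two_mul_of_dist_le (isCompact_Icc (a := 0) (b := T))
    M.contDiff_r.continuous.continuousOn fun t _ => M.r_pos t
  filter_upwards [eventually_const_div_natCast_le hη T] with n hn t ht t' ht' htt'
  exact hclose t ht t' ht' (htt'.trans hn)

/-- The amplitude `r ^ (α - a) A ^ a`, which is of order `ε ^ α` in `L^{1/α}_t L^{1/a}_x`. -/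
def amplitude (α a : ℝ) : SmoothPer d :=
  ofTime (fun t => M.r t ^ (α - a)) (M.contDiff_r.rpow_const_of_ne fun t => (M.r_pos t).ne')
    * M.A.rpow M.A_pos a

theorem amplitude_apply (α a t : ℝ) (x : Vec d) :
    M.amplitude α a (t, x) = M.r t ^ (α - a) * M.A (t, x) ^ a := rfl

theorem amplitude_pos (α a : ℝ) (z : ℝ × Vec d) : 0 < M.amplitude α a z :=
  mul_pos (Real.rpow_pos_of_pos (M.r_pos _) _) (Real.rpow_pos_of_pos (M.A_pos _) _)

theorem amplitude_mul_amplitude (α a : ℝ) :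
    M.amplitude α a * M.amplitude (1 - α) (1 - a) = M.A := by
  ext ⟨t, x⟩
  change M.amplitude α a (t, x) * M.amplitude (1 - α) (1 - a) (t, x) = M.A (t, x)
  rw [M.amplitude_apply, M.amplitude_apply, mul_mul_mul_comm, ← Real.rpow_add (M.r_pos t),
    ← Real.rpow_add (M.A_pos _)]
  ring_nf
  rw [Real.rpow_zero, Real.rpow_one, one_mul]

/-- The amplitudes of a perturbation that cancels the defect bounded by `M`. -/
def ansatz {D : DefectSolution d} (M : Majorant D.R T ε) (P : Profile) (α a : ℝ) : Ansatz d where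
  toDefectSolution := D
  P := P
  a := M.amplitude α a
  b := -(D.R * M.A.rpow M.A_pos (-1)) * M.amplitude (1 - α) (1 - a)
  a_mul_b := by
    have hA : M.A.rpow M.A_pos (-1) * M.A = 1 := by
      ext z
      change M.A z ^ (-1 : ℝ) * M.A z = 1
      rw [Real.rpow_neg_one, inv_mul_cancel₀ (M.A_pos z).ne']
    linear_combination -(D.R * M.A.rpow M.A_pos (-1)) * M.amplitude_mul_amplitude α a - D.R * hA

variable {D : DefectSolution d} (M : Majorant D.R T ε) (P : Profile) (α a : ℝ)

theorem abs_ansatz_a_le (z : ℝ × Vec d) : |(M.ansatz P α a).a z| ≤ M.amplitude α a z :=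
  (abs_of_pos (M.amplitude_pos α a z)).le

theorem abs_ansatz_b_le (z : ℝ × Vec d) :
    |(M.ansatz P α a).b z| ≤ M.amplitude (1 - α) (1 - a) z := by
  change |-(D.R z * M.A z ^ (-1 : ℝ)) * M.amplitude (1 - α) (1 - a) z| ≤ _
  rw [abs_mul, abs_neg, abs_mul, abs_of_pos (M.amplitude_pos _ _ z), Real.rpow_neg_one, abs_inv,
    abs_of_pos (M.A_pos z), ← div_eq_mul_inv]
  exact mul_le_of_le_one_left (M.amplitude_pos _ _ z).le
    ((div_le_one (M.A_pos z)).2 (M.abs_le z))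

end Majorant

namespace Scales

/-- The scales turn an amplitude in `L^{1/α}_t L^{1/a}_x` into a perturbation of the density of size
`l` and, with the dual exponents, one of the velocity of size `l⁻¹`; the remaining error terms are
smaller by a factor `X`. -/
structure IsTuned (Λ : Scales) (α a l X : ℝ) : Prop where
  le_κ : X ≤ Λ.κ
  c₁_mul_rpow : Λ.c₁ * Λ.μ ^ (-a) * Λ.κ ^ (-α) = l
  c₂_mul_rpow : Λ.c₂ * Λ.μ ^ (-(1 - a)) * Λ.κ ^ (-(1 - α)) = l⁻¹
  c₁_div_le : Λ.c₁ / (Λ.κ * Λ.μ) ≤ l / X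
  c₂_div_le : Λ.c₂ / (Λ.κ * Λ.μ) ≤ l⁻¹ / X
  c₁_div_sq_le : Λ.c₁ * Λ.κ / Λ.μ / (Λ.κ * Λ.μ) ≤ l / X
  gradient_le : Λ.c₂ * Λ.μ ^ (-(1 - a)) * Λ.μ / Λ.κ ≤ l⁻¹ / X

theorem exists_rpow_neg_eq_inv {α y : ℝ} (hα : 0 < α) (hα₁ : α ≤ 1) (hy : 1 ≤ y) :
    ∃ x z : ℝ, 1 ≤ z ∧ x = y * z ∧ x ^ (-α) = y⁻¹ ∧ x ^ (-(1 - α)) = z⁻¹ := by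
  have hx : 1 ≤ y ^ α⁻¹ := Real.one_le_rpow hy (by positivity)
  have hx₀ : 0 < y ^ α⁻¹ := zero_lt_one.trans_le hx
  have hxα : (y ^ α⁻¹) ^ α = y := Real.rpow_inv_rpow (zero_le_one.trans hy) hα.ne'
  refine ⟨y ^ α⁻¹, (y ^ α⁻¹) ^ (1 - α), Real.one_le_rpow hx (sub_nonneg.2 hα₁), ?_, ?_,
    Real.rpow_neg hx₀.le _⟩
  · nth_rw 2 [← hxα]
    rw [← Real.rpow_add hx₀, add_sub_cancel, Real.rpow_one]
  · rw [Real.rpow_neg hx₀.le, hxα]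

theorem exists_isTuned {ν : ℝ} (hν : 1 ≤ ν) {σ : ℕ} (hσ : 1 ≤ σ) {α a l X : ℝ} (hα : 0 < α)
    (hα₁ : α ≤ 1) (ha : 0 < a) (ha₁ : a < 1) (hl : 0 < l) (hX : 1 ≤ X) :
    ∃ Λ : Scales, Λ.ν = ν ∧ Λ.σ = σ ∧ Λ.IsTuned α a l X := by
  obtain ⟨μ, m, hm, hμX, hμa, hμa'⟩ :=
    exists_rpow_neg_eq_inv (sub_pos.2 ha₁) (sub_le_self 1 ha.le) (one_le_pow₀ hX (n := 2))
  rw [_root_.sub_sub_cancel] at hμa'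
  have hX₀ : 0 < X := zero_lt_one.trans_le hX
  have hμ : 1 ≤ μ := hμX ▸ one_le_mul_of_one_le_of_one_le (one_le_pow₀ hX) hm
  obtain ⟨κ, k, hk, hκX, hκα, hκα'⟩ :=
    exists_rpow_neg_eq_inv hα hα₁ (one_le_mul_of_one_le_of_one_le hμ hX)
  have hκ : X * 1 ≤ κ := by
    rw [hκX, mul_comm μ, mul_assoc]
    gcongr
    exact one_le_mul_of_one_le_of_one_le hμ hk
  rw [mul_one] at hκ
  refine ⟨⟨ν, κ, μ, l * m * (μ * X), l⁻¹ * X ^ 2 * k, σ, hν, hX.trans hκ, hμ, hσ,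
    by positivity, by positivity, ?_⟩, rfl, rfl, ?_⟩
  · rw [hκX, hμX]
    field_simp
  constructor <;> simp only [hμa, hμa', hκα, hκα']
  · exact hκ
  · field_simp
  · field_simp
  · rw [hκX, hμX]
    field_simp
    exact one_le_mul_of_one_le_of_one_le hX hk
  · rw [hκX, hμX]
    field_simp
    exact one_le_mul_of_one_le_of_one_le (one_le_pow₀ hX) (one_le_pow₀ hm)
  · rw [hκX, hμX]
    field_simp
    rfl
  · rw [hκX, hμX]
    field_simp
    rfl

end Scales

theorem toReal_inv_eq_one_sub {p q : ℝ≥0∞} (h : p.HolderConjugate q) :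
    q⁻¹.toReal = 1 - p⁻¹.toReal := by
  have hp := ENNReal.inv_ne_top.2 h.ne_zero
  have hq := ENNReal.inv_ne_top.2 h.symm.ne_zero
  rw [eq_sub_iff_add_eq', ← ENNReal.toReal_add hp hq, h.inv_add_inv_eq_one, ENNReal.toReal_one]

theorem toReal_inv_pos {p : ℝ≥0∞} (h₀ : p ≠ 0) (h : p ≠ ∞) : 0 < p⁻¹.toReal :=
  ENNReal.toReal_pos (ENNReal.inv_ne_zero.2 h) (ENNReal.inv_ne_top.2 h₀)

theorem toReal_inv_le_one {p : ℝ≥0∞} (h : 1 ≤ p) : p⁻¹.toReal ≤ 1 := by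
  simpa using ENNReal.toReal_mono ENNReal.one_ne_top (ENNReal.inv_le_one.2 h)

namespace Majorant

/-- The oscillations of `Λ`, with `N` periods in time, are fast enough for the functions of the
majorant to be almost constant on a period, and for `H` to be negligible. -/
structure IsResolved {R : SmoothPer d} (M : Majorant R T ε) (Λ : Scales) (N : ℕ) (α a H : ℝ) :
    Prop where
  N_pos : 0 < N
  ν_eq : Λ.ν = N / T
  r_le_two_mul : ∀ t ∈ Set.Icc 0 T, ∀ t' ∈ Set.Icc 0 T, |t - t'| ≤ T / N → M.r t ≤ 2 * M.r t'
  A_le_two_mul : ∀ t ∈ Set.Icc 0 T, ∀ x ∈ fundCube d, ∀ x' ∈ fundCube d,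
    dist x x' ≤ (Λ.σ : ℝ)⁻¹ → M.A (t, x) ≤ 2 * M.A (t, x')
  le_amplitude : ∀ t ∈ Set.Icc 0 T, ∀ x, H ≤ Λ.σ * M.amplitude α a (t, x)
  le_amplitude' : ∀ t ∈ Set.Icc 0 T, ∀ x, H ≤ Λ.σ * M.amplitude (1 - α) (1 - a) (t, x)

theorem exists_isResolved_isTuned (hT : 0 < T) {R : SmoothPer d} (M : Majorant R T ε)
    {α a l δ : ℝ} (hα : 0 < α) (hα₁ : α ≤ 1) (ha : 0 < a) (ha₁ : a < 1) (hl : 0 < l) (hδ : 0 < δ)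
    (H C : ℝ) (G : ℝ → ℕ → ℝ) :
    ∃ (Λ : Scales) (N : ℕ) (X : ℝ), M.IsResolved Λ N α a H ∧ Λ.IsTuned α a l X ∧ 0 < X ∧
      C / Λ.ν ≤ δ ∧ C / Λ.σ ≤ δ ∧ G Λ.ν Λ.σ / X ≤ δ := by
  obtain ⟨N, hr, hNT, hNC, hN⟩ := (M.eventually_r_le_two_mul.and
    ((eventually_const_div_natCast_le one_pos T).and ((eventually_const_div_natCast_le hδ
      (C * T)).and (Filter.eventually_gt_atTop 0)))).exists
  have hN' : (0 : ℝ) < N := mod_cast hN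
  obtain ⟨σ, hA, hH, hH', hσC, hσ⟩ := ((M.A.eventually_le_two_mul M.A_pos T).and
    (((M.amplitude α a).eventually_le_natCast_mul (M.amplitude_pos α a) T H).and
      (((M.amplitude (1 - α) (1 - a)).eventually_le_natCast_mul (M.amplitude_pos _ _) T H).and
        ((eventually_const_div_natCast_le hδ C).and (Filter.eventually_ge_atTop 1))))).exists
  have hX : 1 ≤ max 1 (G (N / T) σ / δ) := le_max_left _ _
  obtain ⟨Λ, hΛν, rfl, hΛ⟩ := Scales.exists_isTuned ((one_le_div hT).2 ((div_le_one hN').1 hNT)) hσ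
    hα hα₁ ha ha₁ hl hX
  refine ⟨Λ, N, _, ⟨hN, hΛν, hr, hA, hH, hH'⟩, hΛ, zero_lt_one.trans_le hX, ?_, hσC, ?_⟩
  · rwa [hΛν, div_div_eq_mul_div]
  · rw [div_le_comm₀ (zero_lt_one.trans_le hX) hδ, hΛν]
    exact le_max_right _ _

variable {R : SmoothPer d} {M : Majorant R T ε} {Λ : Scales} {N : ℕ}

theorem IsResolved.LsLpT_le {α a H : ℝ} (h : M.IsResolved Λ N α a H) (hT : 0 < T) (hε : 0 ≤ ε)
    {s q : ℝ≥0∞} (hs : s ≠ 0) (hq : 1 ≤ q) (j : Fin d) {E : Type*} [NormedAddCommGroup E]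
    {f : ℝ → Vec d → E} {c : ℝ} (hc : 0 ≤ c)
    (hf : ∀ t ∈ Set.Ioo 0 T, ∀ x, ‖f t x‖ ≤ c * (Λ.timeSpike t * Λ.spaceSpike j x)
      * M.amplitude s⁻¹.toReal q⁻¹.toReal (t, x)) :
    LsLpT T s q f ≤ ENNReal.ofReal (2 * c * Λ.μ ^ (-q⁻¹.toReal) * Λ.κ ^ (-s⁻¹.toReal)
      * (2 * ε) ^ s⁻¹.toReal) := by
  have hμ := Λ.μ_pos
  rw [LsLpT_eq_eLpNorm hs]
  refine Λ.eLpNorm_le_of_le_mul_rpow hT h.N_pos h.ν_eq hs M.contDiff_r.continuous.measurable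
    (fun t => (M.r_pos t).le) (by positivity) zero_le_two hε h.r_le_two_mul M.lintegral_r_le
    fun t ht => ?_
  have hts := Λ.timeSpike_nonneg t
  have hr := M.r_pos t
  refine (Λ.spLp_le_of_norm_le_mul_rpow (zero_lt_one.trans_le hq).ne' j
    (A := fun x => M.A (t, x))
    (M.A.continuous.comp (by fun_prop : Continuous fun x => (t, x))).measurable
    (fun x => (M.A_pos (t, x)).le)
    (c := c * Λ.timeSpike t * M.r t ^ (s⁻¹.toReal - q⁻¹.toReal)) (by positivity) zero_le_two hr.le
    (h.A_le_two_mul t ⟨ht.1.le, ht.2.le⟩) (M.lintegral_A_le t ⟨ht.1.le, ht.2.le⟩) fun x => ?_).trans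
    (ENNReal.ofReal_le_ofReal ?_)
  · refine (hf t ht x).trans_eq ?_
    rw [amplitude_apply]
    ring
  · have hsplit : M.r t ^ s⁻¹.toReal =
        M.r t ^ (s⁻¹.toReal - q⁻¹.toReal) * M.r t ^ q⁻¹.toReal := by
      rw [← Real.rpow_add hr, sub_add_cancel]
    have htwo : (2 : ℝ) ^ q⁻¹.toReal ≤ 2 := by
      simpa using Real.rpow_le_rpow_of_exponent_le one_le_two (toReal_inv_le_one hq)
    rw [Real.mul_rpow zero_le_two hr.le, hsplit]
    calc _ = 2 ^ q⁻¹.toReal * (c * Λ.timeSpike t * M.r t ^ (s⁻¹.toReal - q⁻¹.toReal)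
          * Λ.μ ^ (-q⁻¹.toReal) * M.r t ^ q⁻¹.toReal) := by ring
      _ ≤ 2 * (c * Λ.timeSpike t * M.r t ^ (s⁻¹.toReal - q⁻¹.toReal)
          * Λ.μ ^ (-q⁻¹.toReal) * M.r t ^ q⁻¹.toReal) := by gcongr
      _ = _ := by ring

end Majorant

/-- The solution `D'` is obtained from `D` by a perturbation whose density and velocity are bounded
by `eρ` in `L^s_t L^p_x` and by `eu` in `L^{s'}_t L^q_x`. The velocity perturbation is bounded by
`δ` in `L^1_t W^{1,q}_x`. Outside of a set `J` of times of measure at most `δ` it vanishes, and the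
density perturbation is bounded by `δ`. -/
structure IsPerturbation (T : ℝ) (s p s' q : ℝ≥0∞) (D D' : DefectSolution d) (J : Set ℝ)
    (eρ eu δ : ℝ) : Prop where
  LsLpT_ρ_sub_le : LsLpT T s p (fun t x => D'.ρ (t, x) - D.ρ (t, x)) ≤ ENNReal.ofReal eρ
  LsLpT_vel_sub_le : LsLpT T s' q (fun t x => D'.vel t x - D.vel t x) ≤ ENNReal.ofReal eu
  LsW1qT_vel_sub_le : LsW1qT T 1 q (fun t x => D'.vel t x - D.vel t x) ≤ ENNReal.ofReal δ
  volume_J_le : volume.restrict (Set.Ioo 0 T) J ≤ ENNReal.ofReal δ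
  vel_eq : ∀ t ∈ Set.Ioo 0 T, t ∉ J → D'.vel t = D.vel t
  abs_ρ_sub_le : ∀ t ∈ Set.Ioo 0 T, t ∉ J → ∀ x, |D'.ρ (t, x) - D.ρ (t, x)| ≤ δ

/-- The size of the new defect, up to constants that do not depend on the scales. -/
def Scales.error (Λ : Scales) : ℝ :=
  1 / Λ.ν + 1 / Λ.σ + Λ.c₁ / (Λ.κ * Λ.μ) + Λ.c₂ / (Λ.κ * Λ.μ)
    + Λ.ν * (Λ.c₁ * Λ.κ / Λ.μ / (Λ.κ * Λ.μ))

theorem Scales.IsTuned.mul_error_le {Λ : Scales} {α a l X E δ : ℝ} (h : Λ.IsTuned α a l X)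
    (hE : 0 ≤ E) (hν : 3 * E / Λ.ν ≤ δ) (hσ : 3 * E / Λ.σ ≤ δ)
    (hX : 3 * E * (l + l⁻¹ + Λ.ν * l) / X ≤ δ) : E * Λ.error ≤ δ := by
  have hν₀ := Λ.ν_pos
  calc E * Λ.error ≤ E * (1 / Λ.ν + 1 / Λ.σ + l / X + l⁻¹ / X + Λ.ν * (l / X)) :=
        mul_le_mul_of_nonneg_left (add_le_add (add_le_add (add_le_add le_rfl
          h.c₁_div_le) h.c₂_div_le) (mul_le_mul_of_nonneg_left h.c₁_div_sq_le hν₀.le)) hE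
    _ = (3 * E / Λ.ν + 3 * E / Λ.σ + 3 * E * (l + l⁻¹ + Λ.ν * l) / X) / 3 := by ring
    _ ≤ δ := by linarith

namespace Ansatz

variable (D : Ansatz d) (Λ : Scales)

theorem perturb_ρ_sub (z : ℝ × Vec d) : (D.perturb Λ).ρ z - D.ρ z = D.θ Λ z + D.θo Λ z := by
  change D.ρ z + D.θ Λ z + D.θo Λ z - D.ρ z = _
  ring

theorem perturb_vel_sub (t : ℝ) (x : Vec d) : (D.perturb Λ).vel t x - D.vel t x =
    planeField D.i D.j (Dx D.j (D.B Λ)) (-Dx D.i (D.B Λ)) t x := by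
  change (D.v (t, x) + Dx D.j (D.B Λ) (t, x)) • Pi.single D.i (1 : ℝ)
      + (D.w (t, x) - Dx D.i (D.B Λ) (t, x)) • Pi.single D.j 1
    - (D.v (t, x) • Pi.single D.i 1 + D.w (t, x) • Pi.single D.j 1) =
      Dx D.j (D.B Λ) (t, x) • Pi.single D.i 1 + (-Dx D.i (D.B Λ) (t, x)) • Pi.single D.j 1
  module

namespace CoeffBound

variable {D Λ} {H : ℝ} {N : ℕ}

theorem θ_eq_zero {z : ℝ × Vec d} (h : D.CoeffBound H z) (hz : Λ.timeSpike z.1 = 0) :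
    D.θ Λ z = 0 := by
  simpa [hz] using h.abs_θ_le Λ

theorem Dx_B_eq_zero {z : ℝ × Vec d} (h : D.CoeffBound H z) (hz : Λ.timeSpike z.1 = 0)
    (k : Fin d) : Dx k (D.B Λ) z = 0 := by
  simpa [hz] using h.abs_Dx_B_le Λ k

theorem LsW1qT_perturb_vel_sub_le (hH : ∀ t ∈ Set.Icc 0 T, ∀ x, D.CoeffBound H (t, x))
    (hT : 0 < T) (hN : 0 < N) (hν : Λ.ν = N / T) {q : ℝ≥0∞} (hq : q ≠ 0) :
    LsW1qT T 1 q (fun t x => (D.perturb Λ).vel t x - D.vel t x) ≤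
      ENNReal.ofReal (T * (4 * H ^ 3) * (1 + 2 * d * Λ.σ)
        * (Λ.c₂ * Λ.μ ^ (-q⁻¹.toReal) * Λ.μ / Λ.κ)) := by
  have hH₁ := (hH 0 ⟨le_rfl, hT.le⟩ 0).one_le
  have hc := Λ.c₂_pos
  have hσ := Λ.σ_pos
  have hμ := Λ.μ_pos
  have hκ := Λ.κ_pos
  refine (Λ.LsW1qT_one_le hT hN hν hq D.j (c := 4 * H ^ 3 * Λ.c₂)
    (c' := 2 * d * (4 * H ^ 3 * (Λ.c₂ * Λ.σ * Λ.μ))) (by positivity) (by positivity)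
    (fun t ht x => ?_) fun t ht x => ?_).trans (ENNReal.ofReal_le_ofReal ?_)
  · have h := hH t ⟨ht.1.le, ht.2.le⟩ x
    rw [perturb_vel_sub]
    refine (norm_planeField_le _ _ _ _ t x).trans
      ((add_le_add (h.abs_Dx_B_le Λ _) ((abs_neg _).trans_le (h.abs_Dx_B_le Λ _))).trans_eq ?_)
    ring
  · have h := hH t ⟨ht.1.le, ht.2.le⟩ x
    have hs := mul_nonneg (Λ.timeSpike_nonneg t) (Λ.spaceSpike_nonneg D.j x)
    rw [funext (D.perturb_vel_sub Λ t)]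
    refine (norm_fderiv_planeField_le _ _ (by positivity) (fun k => h.abs_Dx_Dx_B_le Λ k D.j)
      fun k => ?_).trans_eq ?_
    · rw [map_neg]
      exact (abs_neg _).trans_le (h.abs_Dx_Dx_B_le Λ k D.i)
    · ring
  · calc _ = T * (4 * H ^ 3) * (1 / Λ.μ + 2 * d * Λ.σ)
          * (Λ.c₂ * Λ.μ ^ (-q⁻¹.toReal) * Λ.μ / Λ.κ) := by field_simp
      _ ≤ _ := by
        gcongr
        exact div_le_one_of_le₀ Λ.one_le_μ hμ.le

theorem l1Norm_newR_le (hH : ∀ t ∈ Set.Icc 0 T, ∀ x, D.CoeffBound H (t, x)) (hT : 0 < T)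
    (hN : 0 < N) (hν : Λ.ν = N / T) :
    l1Norm T (D.newR Λ) ≤ ENNReal.ofReal (T * (4 * H ^ 6) * Λ.error) := by
  have hν' := Λ.ν_pos
  have hκ := Λ.κ_pos
  have hμ := Λ.μ_pos
  have hc₁ := Λ.c₁_pos
  have hc₂ := Λ.c₂_pos
  refine (Λ.l1Norm_le_of_abs_le hT hN hν D.j (a := 4 * H ^ 6 * (1 / Λ.ν))
    (b := 4 * H ^ 6 * (Λ.κ / Λ.σ)) (c := 4 * H ^ 6 * (Λ.c₁ + Λ.c₂)) (by positivity) (by positivity)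
    (by positivity) fun t ht x => ((hH t ht x).abs_newR_le Λ).trans_eq (by ring)).trans
    (ENNReal.ofReal_le_ofReal ?_)
  calc _ = T * (4 * H ^ 6) * (1 / Λ.ν + 1 / Λ.σ + Λ.c₁ / (Λ.κ * Λ.μ) + Λ.c₂ / (Λ.κ * Λ.μ)) := by
        field_simp
        ring
    _ ≤ _ := mul_le_mul_of_nonneg_left (le_add_of_nonneg_right (by positivity)) (by positivity)

theorem l1Norm_addS_le (hH : ∀ t ∈ Set.Icc 0 T, ∀ x, D.CoeffBound H (t, x)) (hT : 0 < T)
    (hN : 0 < N) (hν : Λ.ν = N / T) :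
    l1Norm T (D.addS Λ) ≤ ENNReal.ofReal (T * (4 * H ^ 6) * Λ.error) := by
  have hν' := Λ.ν_pos
  have hκ := Λ.κ_pos
  have hμ := Λ.μ_pos
  have hc₁ := Λ.c₁_pos
  have hc₂ := Λ.c₂_pos
  refine (Λ.l1Norm_le_of_abs_le hT hN hν D.j (a := 4 * H ^ 6 * (1 / Λ.ν))
    (b := 4 * H ^ 6 * (Λ.κ / Λ.σ)) (c := 4 * H ^ 6 * (Λ.c₁ + Λ.c₂ + Λ.c₁ * Λ.κ * Λ.ν / Λ.μ))
    (by positivity) (by positivity) (by positivity)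
    fun t ht x => ((hH t ht x).abs_addS_le Λ).trans_eq (by ring)).trans_eq ?_
  rw [Scales.error]
  congr 1
  field_simp
  ring

end CoeffBound

end Ansatz

namespace Majorant

variable {D : DefectSolution d} {M : Majorant D.R T ε} {P : Profile} {Λ : Scales} {N : ℕ}
  {H α a l X δ : ℝ} {s p s' q : ℝ≥0∞}

theorem IsResolved.LsLpT_θ_le (h : M.IsResolved Λ N s⁻¹.toReal p⁻¹.toReal H)
    (hH : ∀ t ∈ Set.Icc 0 T, ∀ x, (M.ansatz P s⁻¹.toReal p⁻¹.toReal).CoeffBound H (t, x))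
    (hT : 0 < T) (hε : 0 ≤ ε) (hs : s ≠ 0) (hp : 1 ≤ p) :
    LsLpT T s p (fun t x => (M.ansatz P s⁻¹.toReal p⁻¹.toReal).θ Λ (t, x)) ≤
      ENNReal.ofReal (4 * P.bound ^ 2 * (Λ.c₁ * Λ.μ ^ (-p⁻¹.toReal) * Λ.κ ^ (-s⁻¹.toReal))
        * (2 * ε) ^ s⁻¹.toReal) := by
  have hc := Λ.c₁_pos
  refine (h.LsLpT_le hT hε hs hp (M.ansatz P s⁻¹.toReal p⁻¹.toReal).j
    (c := 2 * P.bound ^ 2 * Λ.c₁) (by positivity) fun t ht x => ?_).trans_eq (by ring_nf)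
  have ht' : t ∈ Set.Icc 0 T := ⟨ht.1.le, ht.2.le⟩
  exact Λ.abs_Dx_potential_le P _ hc.le (M.abs_ansatz_a_le P _ _ _)
    (((hH t ht' x).abs_Dx_a_le _).trans (h.le_amplitude t ht' x))

theorem IsResolved.LsLpT_vel_le (h : M.IsResolved Λ N α a H)
    (hH : ∀ t ∈ Set.Icc 0 T, ∀ x, (M.ansatz P α a).CoeffBound H (t, x))
    (hT : 0 < T) (hε : 0 ≤ ε) (hs : s ≠ 0) (hp : 1 ≤ p) (hα : s⁻¹.toReal = 1 - α)
    (ha : p⁻¹.toReal = 1 - a) :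
    LsLpT T s p (fun t x => ((M.ansatz P α a).perturb Λ).vel t x - D.vel t x) ≤
      ENNReal.ofReal (8 * P.bound ^ 2 * (Λ.c₂ * Λ.μ ^ (-(1 - a)) * Λ.κ ^ (-(1 - α)))
        * (2 * ε) ^ (1 - α)) := by
  have hc := Λ.c₂_pos
  rw [← hα, ← ha]
  refine (h.LsLpT_le hT hε hs hp (M.ansatz P α a).j (c := 4 * P.bound ^ 2 * Λ.c₂) (by positivity)
    fun t ht x => ?_).trans_eq (by ring_nf)
  have ht' : t ∈ Set.Icc 0 T := ⟨ht.1.le, ht.2.le⟩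
  have hB (k : Fin d) := Λ.abs_Dx_potential_le P (M.ansatz P α a).j hc.le
    (M.abs_ansatz_b_le P α a (t, x))
    (((hH t ht' x).abs_Dx_b_le k).trans (h.le_amplitude' t ht' x))
  rw [hα, ha]
  refine ((congr_arg norm ((M.ansatz P α a).perturb_vel_sub Λ t x)).trans_le
    (norm_planeField_le _ _ _ _ t x)).trans
    ((add_le_add (hB _) ((abs_neg _).trans_le (hB _))).trans_eq ?_)
  ring

theorem IsResolved.LsLpT_ρ_le (h : M.IsResolved Λ N s⁻¹.toReal p⁻¹.toReal H)
    (hH : ∀ t ∈ Set.Icc 0 T, ∀ x, (M.ansatz P s⁻¹.toReal p⁻¹.toReal).CoeffBound H (t, x))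
    (hT : 0 < T) (hε : 0 ≤ ε) (hδ : 0 ≤ δ) (hs : 1 ≤ s) (hp : 1 ≤ p) (hp' : p ≠ ∞)
    (hν : H * (1 / Λ.ν) ≤ δ) : LsLpT T s p (fun t x =>
      ((M.ansatz P s⁻¹.toReal p⁻¹.toReal).perturb Λ).ρ (t, x) - D.ρ (t, x)) ≤
      ENNReal.ofReal (4 * P.bound ^ 2 * (Λ.c₁ * Λ.μ ^ (-p⁻¹.toReal) * Λ.κ ^ (-s⁻¹.toReal))
        * (2 * ε) ^ s⁻¹.toReal + δ * T ^ s⁻¹.toReal) := by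
  have hs₀ := (zero_lt_one.trans_le hs).ne'
  have hp₀ := (zero_lt_one.trans_le hp).ne'
  have hc₁ := Λ.c₁_pos
  have hμ := Λ.μ_pos
  have hκ := Λ.κ_pos
  have hρ (t : ℝ) (x : Vec d) :
      ((M.ansatz P s⁻¹.toReal p⁻¹.toReal).perturb Λ).ρ (t, x) - D.ρ (t, x) = _ :=
    (M.ansatz P s⁻¹.toReal p⁻¹.toReal).perturb_ρ_sub Λ (t, x)
  rw [funext₂ hρ, ENNReal.ofReal_add (by positivity) (by positivity), ENNReal.ofReal_mul hδ,
    ← ENNReal.ofReal_rpow_of_pos hT]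
  exact (LsLpT_add_le hs hp hp' (SmoothPer.continuous _).stronglyMeasurable
    (SmoothPer.continuous _).stronglyMeasurable).trans
    (add_le_add (h.LsLpT_θ_le hH hT hε hs₀ hp) (LsLpT_le_of_norm_le hs₀ hp₀ fun t ht x =>
      ((hH t ⟨ht.1.le, ht.2.le⟩ x).abs_θo_le Λ).trans hν))

theorem IsResolved.isPerturbation (h : M.IsResolved Λ N s⁻¹.toReal p⁻¹.toReal H)
    (hH : ∀ t ∈ Set.Icc 0 T, ∀ x, (M.ansatz P s⁻¹.toReal p⁻¹.toReal).CoeffBound H (t, x))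
    (hΛ : Λ.IsTuned s⁻¹.toReal p⁻¹.toReal l X) (hT : 0 < T) (hε : 0 ≤ ε) (hδ : 0 ≤ δ)
    (hs : s.HolderConjugate s') (hp : p.HolderConjugate q) (hp' : p ≠ ∞) (hX : 0 < X)
    (hTX : T / X ≤ δ) (hν : H * (1 / Λ.ν) ≤ δ)
    (hgrad : T * (4 * H ^ 3) * (1 + 2 * d * Λ.σ) * l⁻¹ / X ≤ δ) :
    IsPerturbation T s p s' q D ((M.ansatz P s⁻¹.toReal p⁻¹.toReal).perturb Λ)
      {t | Λ.timeSpike t ≠ 0}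
      (4 * P.bound ^ 2 * l * (2 * ε) ^ s⁻¹.toReal + δ * T ^ s⁻¹.toReal)
      (8 * P.bound ^ 2 * l⁻¹ * (2 * ε) ^ s'⁻¹.toReal) δ := by
  have hH₁ := (hH 0 ⟨le_rfl, hT.le⟩ 0).one_le
  have hs' := toReal_inv_eq_one_sub hs
  have hq := toReal_inv_eq_one_sub hp
  constructor
  case LsLpT_ρ_sub_le =>
    rw [← hΛ.c₁_mul_rpow]
    exact h.LsLpT_ρ_le hH hT hε hδ hs.one_le hp.one_le hp' hν
  case LsLpT_vel_sub_le =>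
    rw [hs', ← hΛ.c₂_mul_rpow]
    exact h.LsLpT_vel_le hH hT hε hs.symm.ne_zero hp.symm.one_le hs' hq
  case LsW1qT_vel_sub_le =>
    refine (Ansatz.CoeffBound.LsW1qT_perturb_vel_sub_le hH hT h.N_pos h.ν_eq
      hp.symm.ne_zero).trans (ENNReal.ofReal_le_ofReal (le_trans ?_ hgrad))
    rw [hq, mul_div_assoc _ l⁻¹]
    exact mul_le_mul_of_nonneg_left hΛ.gradient_le (by positivity)
  case volume_J_le =>
    refine (Λ.volume_timeSpike_ne_zero_le hT h.N_pos h.ν_eq).trans (ENNReal.ofReal_le_ofReal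
      (le_trans ?_ hTX))
    rw [div_eq_mul_inv]
    gcongr
    exact hΛ.le_κ
  case vel_eq =>
    intro t ht htJ
    have h₀ (x : Vec d) := (hH t ⟨ht.1.le, ht.2.le⟩ x).Dx_B_eq_zero (not_not.1 htJ)
    ext1 x
    refine sub_eq_zero.1 ((Ansatz.perturb_vel_sub _ Λ t x).trans ?_)
    change Dx _ _ (t, x) • _ + (-Dx _ _ (t, x)) • _ = _
    rw [h₀, h₀, neg_zero, zero_smul, zero_smul, add_zero]
  case abs_ρ_sub_le =>
    intro t ht htJ x
    have hx := hH t ⟨ht.1.le, ht.2.le⟩ x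
    refine (congr_arg abs (Ansatz.perturb_ρ_sub _ Λ (t, x))).trans_le ?_
    rw [hx.θ_eq_zero (not_not.1 htJ), zero_add]
    exact (hx.abs_θo_le Λ).trans hν

end Majorant

theorem exists_isPerturbation (hT : 0 < T) {s p s' q : ℝ≥0∞} (hs : s.HolderConjugate s')
    (hs' : s ≠ ∞) (hp : p.HolderConjugate q) (hp' : p ≠ ∞) (hq : q ≠ ∞) (P : Profile)
    {D : DefectSolution d} {l δ : ℝ} (hl : 0 < l) (hδ : 0 < δ)
    (hR : l1Norm T D.R < ENNReal.ofReal ε) : ∃ (D' : DefectSolution d) (J : Set ℝ),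
      IsPerturbation T s p s' q D D' J
        (4 * P.bound ^ 2 * l * (2 * ε) ^ s⁻¹.toReal + δ * T ^ s⁻¹.toReal)
        (8 * P.bound ^ 2 * l⁻¹ * (2 * ε) ^ s'⁻¹.toReal) δ ∧
      l1Norm T D'.R ≤ ENNReal.ofReal δ ∧ l1Norm T (D'.S - D.S) ≤ ENNReal.ofReal δ := by
  obtain ⟨M⟩ := nonempty_majorant hT hR
  have hε : 0 ≤ ε := (ENNReal.ofReal_pos.1 (bot_le.trans_lt hR)).le
  have hp₁ : p⁻¹.toReal < 1 := by
    linarith [toReal_inv_pos hp.symm.ne_zero hq, toReal_inv_eq_one_sub hp]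
  obtain ⟨H, hH⟩ := (M.ansatz P s⁻¹.toReal p⁻¹.toReal).exists_coeffBound T
  have hH₁ := (hH 0 ⟨le_rfl, hT.le⟩ 0).one_le
  set E := T * (4 * H ^ 6)
  have hE : 0 ≤ E := by positivity
  set g : ℕ → ℝ := fun σ => T * (4 * H ^ 3) * (1 + 2 * d * σ) * l⁻¹
  have hg (σ : ℕ) : 0 ≤ g σ := by positivity
  set e : ℝ → ℝ := fun ν => 3 * E * (l + l⁻¹ + ν * l)
  obtain ⟨Λ, N, X, hres, hΛ, hX, hν, hσ, hG⟩ := M.exists_isResolved_isTuned hT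
    (toReal_inv_pos hs.ne_zero hs') (toReal_inv_le_one hs.one_le) (toReal_inv_pos hp.ne_zero hp')
    hp₁ hl hδ H (H + 3 * E) fun ν σ => T + e ν + g σ
  have hν₀ := Λ.ν_pos
  have he : 0 ≤ e Λ.ν := by positivity
  have hσ₀ := Λ.σ_pos
  have herr : E * Λ.error ≤ δ := hΛ.mul_error_le hE
    ((div_le_div_of_nonneg_right (by linarith) hν₀.le).trans hν)
    ((div_le_div_of_nonneg_right (by linarith) hσ₀.le).trans hσ)
    ((div_le_div_of_nonneg_right (by linarith [hg Λ.σ]) hX.le).trans hG)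
  refine ⟨_, _, hres.isPerturbation hH hΛ hT hε hδ.le hs hp hp' hX
    ((div_le_div_of_nonneg_right (by linarith [hg Λ.σ]) hX.le).trans hG) ?_
    ((div_le_div_of_nonneg_right (by linarith) hX.le).trans hG),
    (Ansatz.CoeffBound.l1Norm_newR_le hH hT hres.N_pos hres.ν_eq).trans
      (ENNReal.ofReal_le_ofReal herr), ?_⟩
  · rw [mul_one_div]
    exact (div_le_div_of_nonneg_right (by linarith) hν₀.le).trans hν
  · have hS : ((M.ansatz P s⁻¹.toReal p⁻¹.toReal).perturb Λ).S - D.S =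
        (M.ansatz P s⁻¹.toReal p⁻¹.toReal).addS Λ := add_sub_cancel_left D.S _
    rw [hS]
    exact (Ansatz.CoeffBound.l1Norm_addS_le hH hT hres.N_pos hres.ν_eq).trans
      (ENNReal.ofReal_le_ofReal herr)

end Size

/-! ### The weak formulation -/

/-- Lebesgue measure on `(0,T) × 𝕋^d`. -/
def spaceTime (d : ℕ) (T : ℝ) : Measure (ℝ × Vec d) :=
  (volume.restrict (Set.Ioo 0 T)).prod (volume.restrict (fundCube d))

namespace SmoothPer

theorem integrable_spaceTime (f : SmoothPer d) (T : ℝ) : Integrable f (spaceTime d T) := by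
  rw [spaceTime, Measure.prod_restrict]
  exact (f.continuous.continuousOn.integrableOn_compact (isCompact_Icc.prod isCompact_Icc)).mono_set
    (Set.prod_mono Set.Ioo_subset_Icc_self subset_rfl)

theorem setIntegral_Dx (k : Fin d) (f : SmoothPer d) (t : ℝ) :
    ∫ x in fundCube d, Dx k f (t, x) = 0 := by
  obtain ⟨n, rfl⟩ := Nat.exists_eq_succ_of_ne_zero k.pos.ne'
  let F (i : Fin (n + 1)) (x : Vec (n + 1)) : ℝ := if i = k then f (t, x) else 0
  let F' (i : Fin (n + 1)) (x : Vec (n + 1)) : Vec (n + 1) →L[ℝ] ℝ :=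
    if i = k then fderiv ℝ (fun y => f (t, y)) x else 0
  have hF (i x) : HasFDerivAt (F i) (F' i x) x := by
    by_cases hik : i = k
    · simp only [F, F', hik, if_true]
      exact (f.differentiable_slice t x).hasFDerivAt
    · simp only [F, F', hik, if_false]
      exact hasFDerivAt_const 0 x
  have hdiv (x) : ∑ i, F' i x (Pi.single i 1) = Dx k f (t, x) := by
    rw [Finset.sum_eq_single_of_mem k (Finset.mem_univ k)
      fun i _ hik => by simp only [F', if_neg hik, _root_.zero_apply]]
    simp only [F', if_true, fderiv_slice_apply]
  have hface (i) (y : Fin n → ℝ) : F i (i.insertNth 1 y) = F i (i.insertNth 0 y) := by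
    by_cases hik : i = k
    · simp only [F, hik, if_true]
      refine (congr_arg (fun x => f (t, x)) (funext fun l => ?_)).trans
        (f.zper t (k.insertNth 0 y) (Pi.single k 1))
      rcases eq_or_ne l k with rfl | hl
      · simp
      · obtain ⟨m, rfl⟩ := Fin.exists_succAbove_eq hl
        simp [Fin.succAbove_ne]
    · simp only [F, hik, if_false]
  have key := integral_divergence_of_hasFDerivAt_off_countable' (E := ℝ) (0 : Vec (n + 1)) 1
    (fun _ => zero_le_one) F F' ∅ Set.countable_empty
    (fun i x _ => (hF i x).continuousAt.continuousWithinAt) (fun x _ i => hF i x)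
    ((Dx k f).integrable t |>.congr_fun (fun x _ => (hdiv x).symm) measurableSet_Icc)
  simp only [hdiv] at key
  rw [fundCube, key]
  exact Finset.sum_eq_zero fun i _ => by simp only [Pi.one_apply, Pi.zero_apply, hface, sub_self]

theorem integral_Dx (k : Fin d) (f : SmoothPer d) (T : ℝ) :
    ∫ z, Dx k f z ∂spaceTime d T = 0 := by
  rw [spaceTime, integral_prod _ ((Dx k f).integrable_spaceTime T)]
  simp only [setIntegral_Dx, integral_zero]

theorem hasDerivAt_time (f : SmoothPer d) (t : ℝ) (x : Vec d) :
    HasDerivAt (fun τ => f (τ, x)) (Dt f (t, x)) t :=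
  (f.differentiable (t, x)).hasFDerivAt.comp_hasDerivAt t
    ((hasDerivAt_id t).prodMk (hasDerivAt_const t x))

theorem integral_Dt {T : ℝ} (hT : 0 < T) {f : SmoothPer d} (h₀ : ∀ x, f (0, x) = 0)
    (h₁ : ∀ x, f (T, x) = 0) : ∫ z, Dt f z ∂spaceTime d T = 0 := by
  rw [spaceTime, integral_prod_symm _ ((Dt f).integrable_spaceTime T)]
  refine integral_eq_zero_of_ae (.of_forall fun x => ?_)
  change ∫ t in Set.Ioo 0 T, Dt f (t, x) = 0
  rw [← integral_Ioc_eq_integral_Ioo, ← intervalIntegral.integral_of_le hT.le,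
    intervalIntegral.integral_eq_sub_of_hasDerivAt (fun t _ => f.hasDerivAt_time t x)
      (((Dt f).continuous.comp (Continuous.prodMk_left x)).intervalIntegrable _ _), h₀, h₁,
    sub_zero]

theorem enorm_integral_mul_le (f g : SmoothPer d) {T C : ℝ}
    (hC : ∀ t ∈ Set.Icc 0 T, ∀ x, |g (t, x)| ≤ C) :
    ‖∫ z, (f * g) z ∂spaceTime d T‖ₑ ≤ ENNReal.ofReal C * l1Norm T f := by
  rw [spaceTime, integral_prod _ ((f * g).integrable_spaceTime T), l1Norm,
    ← lintegral_const_mul' _ _ ofReal_ne_top]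
  refine (enorm_integral_le_lintegral_enorm _).trans (setLIntegral_mono' measurableSet_Ioo
    fun t ht => (enorm_integral_le_lintegral_enorm _).trans ?_)
  rw [← lintegral_const_mul' _ _ ofReal_ne_top]
  refine lintegral_mono fun x => ?_
  change ‖f (t, x) * g (t, x)‖ₑ ≤ _
  rw [enorm_mul, mul_comm, Real.enorm_eq_ofReal_abs, Real.enorm_eq_ofReal_abs]
  gcongr
  exact hC t (Set.Ioo_subset_Icc_self ht) x

end SmoothPer

namespace DefectSolution

variable (D : DefectSolution d)

theorem dirDeriv_vel (Φ : SmoothPer d) (t : ℝ) (x : Vec d) :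
    dirDeriv (0, D.vel t x) Φ (t, x) = (D.v * Dx D.i Φ + D.w * Dx D.j Φ) (t, x) :=
  Φ.dirDeriv_smul_add_smul t _ _ D.i D.j x

theorem setIntegral_dirDeriv_vel (Φ : SmoothPer d) (t : ℝ) :
    ∫ x in fundCube d, dirDeriv (0, D.vel t x) Φ (t, x) = 0 := by
  have hdiv : D.v * Dx D.i Φ + D.w * Dx D.j Φ = Dx D.i (D.v * Φ) + Dx D.j (D.w * Φ) := by
    simp only [Derivation.leibniz, smul_eq_mul]
    linear_combination (-Φ) * D.div_eq
  simp only [D.dirDeriv_vel, hdiv]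
  refine (integral_add ((Dx D.i (D.v * Φ)).integrable t) ((Dx D.j (D.w * Φ)).integrable t)).trans ?_
  rw [SmoothPer.setIntegral_Dx, SmoothPer.setIntegral_Dx, add_zero]

theorem integral_ρ_mul {T : ℝ} (hT : 0 < T) {Φ : SmoothPer d} (hΦ : ∀ x, Φ (T, x) = 0) :
    ∫ z, D.ρ z * (Dt Φ z + dirDeriv (0, D.vel z.1 z.2) Φ z) ∂spaceTime d T =
      ∫ z, (D.R * Dx D.i Φ) z ∂spaceTime d T + ∫ z, (D.S * Dx D.j Φ) z ∂spaceTime d T := by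
  have hparts : D.ρ * (Dt Φ + (D.v * Dx D.i Φ + D.w * Dx D.j Φ)) =
      (Dt (D.ρ * Φ) + Dx D.i ((D.ρ * D.v - D.R) * Φ) + Dx D.j ((D.ρ * D.w - D.S) * Φ)) +
        (D.R * Dx D.i Φ + D.S * Dx D.j Φ) := by
    rw [Derivation.leibniz Dt, Derivation.leibniz (Dx D.i) _ Φ, Derivation.leibniz (Dx D.j) _ Φ,
      map_sub, map_sub]
    simp only [smul_eq_mul]
    linear_combination (-Φ) * D.eq
  have hint (f : SmoothPer d) := f.integrable_spaceTime T
  have hadd (f g : SmoothPer d) : ∫ z, (f + g) z ∂spaceTime d T =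
      ∫ z, f z ∂spaceTime d T + ∫ z, g z ∂spaceTime d T := integral_add (hint f) (hint g)
  calc _ = ∫ z, (D.ρ * (Dt Φ + (D.v * Dx D.i Φ + D.w * Dx D.j Φ))) z ∂spaceTime d T :=
        integral_congr_ae (.of_forall fun z => congr_arg (fun a => D.ρ z * (Dt Φ z + a))
          (D.dirDeriv_vel Φ z.1 z.2))
    _ = _ := by
        rw [hparts, hadd, hadd, hadd, hadd, SmoothPer.integral_Dx, SmoothPer.integral_Dx,
          SmoothPer.integral_Dt hT, add_zero, add_zero, zero_add]
        · exact fun x => (congr_arg (· * Φ (0, x)) (D.ρ_zero x)).trans (zero_mul _)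
        · exact fun x => (congr_arg (D.ρ (T, x) * ·) (hΦ x)).trans (mul_zero _)

end DefectSolution

/-! ### Passage to the limit -/

open Filter Topology

section SeqVariation

variable {E : Type*} [NormedAddCommGroup E] {a : ℕ → E}

/-- The sum of the norms of the first term and of the increments of a sequence. It dominates every
term of the sequence and its limit. -/
def seqVariation (a : ℕ → E) : ℝ≥0∞ := ‖a 0‖ₑ + ∑' n, ‖a (n + 1) - a n‖ₑ

theorem enorm_le_seqVariation (a : ℕ → E) (n : ℕ) : ‖a n‖ₑ ≤ seqVariation a := by
  have h := enorm_add_le (a 0) (a n - a 0)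
  rw [add_sub_cancel, ← Finset.sum_range_sub] at h
  exact h.trans (add_le_add_right ((enorm_sum_le _ _).trans (ENNReal.sum_le_tsum _)) _)

theorem enorm_le_seqVariation_of_tendsto {l : E} (h : Tendsto a atTop (𝓝 l)) :
    ‖l‖ₑ ≤ seqVariation a :=
  le_of_tendsto' ((continuous_enorm.tendsto l).comp h) (enorm_le_seqVariation a)

theorem measurable_seqVariation {α : Type*} [MeasurableSpace α] {f : ℕ → α → E}
    (hf : ∀ n, StronglyMeasurable (f n)) : Measurable fun x => seqVariation fun n => f n x :=
  (hf 0).enorm.add (.tsum fun n => ((hf (n + 1)).sub (hf n)).enorm)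

end SeqVariation

theorem eLpNorm_add_tsum_le {α : Type*} [MeasurableSpace α] {ν : Measure α} {q : ℝ≥0∞} (hq : 1 ≤ q)
    {f : α → ℝ≥0∞} {g : ℕ → α → ℝ≥0∞} (hf : AEMeasurable f ν) (hg : ∀ n, AEMeasurable (g n) ν) :
    eLpNorm (fun x => f x + ∑' n, g n x) q ν ≤ eLpNorm f q ν + ∑' n, eLpNorm (g n) q ν :=
  (eLpNorm_add_le hf.aestronglyMeasurable (AEMeasurable.tsum hg).aestronglyMeasurable hq).trans
    (add_le_add_right (eLpNorm_tsum_le hq hg) _)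

/-- The norm of `L^s(0,T;L^q(𝕋^d))` for functions with values in `[0,∞]`. -/
def mixedNorm (T : ℝ) (s q : ℝ≥0∞) (f : ℝ → Vec d → ℝ≥0∞) : ℝ≥0∞ :=
  eLpNorm (fun t => eLpNorm (f t) q (volume.restrict (fundCube d))) s
    (volume.restrict (Set.Ioo 0 T))

section MixedNorm

variable {T : ℝ} {s p s' q : ℝ≥0∞} {E : Type*} [NormedAddCommGroup E]

theorem mixedNorm_enorm (hs : s ≠ 0) (hq : q ≠ 0) (f : ℝ → Vec d → E) :
    mixedNorm T s q (fun t x => ‖f t x‖ₑ) = LsLpT T s q f := by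
  simp only [mixedNorm, LsLpT_eq_eLpNorm hs, spLp_eq_eLpNorm hq, eLpNorm_enorm]

theorem measurable_eLpNorm_slice (hq : q ≠ 0) (hq' : q ≠ ∞) {f : ℝ → Vec d → ℝ≥0∞}
    (hf : Measurable (Function.uncurry f)) :
    Measurable fun t => eLpNorm (f t) q (volume.restrict (fundCube d)) := by
  simp only [eLpNorm_eq_lintegral_rpow_enorm_toReal hq hq']
  exact ((hf.enorm.pow_const _).lintegral_prod_right').pow_const _

theorem lintegral_mul_le_mixedNorm_mul_mixedNorm (hs : s.HolderConjugate s')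
    (hp : p.HolderConjugate q) (hp' : p ≠ ∞) (hq : q ≠ ∞) {f g : ℝ → Vec d → ℝ≥0∞}
    (hf : Measurable (Function.uncurry f)) (hg : Measurable (Function.uncurry g)) :
    ∫⁻ z, f z.1 z.2 * g z.1 z.2 ∂spaceTime d T ≤ mixedNorm T s p f * mixedNorm T s' q g := by
  have hp₀ := ENNReal.HolderConjugate.ne_zero p q
  have hq₀ := ENNReal.HolderConjugate.ne_zero q p
  rw [spaceTime, lintegral_prod (fun z => f z.1 z.2 * g z.1 z.2)
    (by exact (hf.mul hg).aemeasurable)]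
  refine (lintegral_mono fun t => ?_).trans (lintegral_mul_le_eLpNorm_mul_eLpNorm hs
    (measurable_eLpNorm_slice hp₀ hp' hf).aemeasurable
    (measurable_eLpNorm_slice hq₀ hq hg).aemeasurable)
  exact lintegral_mul_le_eLpNorm_mul_eLpNorm hp (hf.comp measurable_prodMk_left).aemeasurable
    (hg.comp measurable_prodMk_left).aemeasurable

theorem mixedNorm_one_lt_top (hs : s ≠ 0) (hq : q ≠ 0) :
    mixedNorm T s q (1 : ℝ → Vec d → ℝ≥0∞) < ∞ := by
  have h := LsLpT_le_of_norm_le hs hq (T := T) (f := fun _ (_ : Vec d) => (1 : ℝ)) (c := 1)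
    fun _ _ _ => norm_one.le
  simp only [← mixedNorm_enorm hs hq, enorm_one] at h
  exact h.trans_lt (mul_lt_top ofReal_lt_top (rpow_lt_top_of_nonneg toReal_nonneg ofReal_ne_top))

theorem lintegral_mul_one_add_lt_top (hs : s.HolderConjugate s') (hp : p.HolderConjugate q)
    (hp' : p ≠ ∞) (hq : q ≠ ∞) {f g : ℝ → Vec d → ℝ≥0∞} (hf : Measurable (Function.uncurry f))
    (hg : Measurable (Function.uncurry g)) (hf' : mixedNorm T s p f < ∞)
    (hg' : mixedNorm T s' q g < ∞) :
    ∫⁻ z, f z.1 z.2 * (1 + g z.1 z.2) ∂spaceTime d T < ∞ := by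
  have hs₀ := ENNReal.HolderConjugate.ne_zero s' s
  have hq₀ := ENNReal.HolderConjugate.ne_zero q p
  simp only [mul_add]
  rw [lintegral_add_left (by exact hf.mul_const 1)]
  exact add_lt_top.2 ⟨
    (lintegral_mul_le_mixedNorm_mul_mixedNorm hs hp hp' hq hf measurable_const).trans_lt
      (mul_lt_top hf' (mixedNorm_one_lt_top hs₀ hq₀)),
    (lintegral_mul_le_mixedNorm_mul_mixedNorm hs hp hp' hq hf hg).trans_lt (mul_lt_top hf' hg')⟩

/-- A sequence of functions whose increments have summable norms in `L^s(0,T;L^q(𝕋^d))`. -/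
structure HasSummableSteps (T : ℝ) (s q : ℝ≥0∞) (F : ℕ → ℝ → Vec d → E) : Prop where
  stronglyMeasurable n : StronglyMeasurable (Function.uncurry (F n))
  LsLpT_zero_lt_top : LsLpT T s q (F 0) < ∞
  tsum_lt_top : ∑' n, LsLpT T s q (fun t x => F (n + 1) t x - F n t x) < ∞

namespace HasSummableSteps

variable {F : ℕ → ℝ → Vec d → E}

theorem mixedNorm_seqVariation_lt_top (h : HasSummableSteps T s q F) (hs : 1 ≤ s) (hq : 1 ≤ q)
    (hq' : q ≠ ∞) : mixedNorm T s q (fun t x => seqVariation fun n => F n t x) < ∞ := by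
  have hs₀ := (one_pos.trans_le hs).ne'
  have hq₀ := (one_pos.trans_le hq).ne'
  have hsub (n) : StronglyMeasurable (Function.uncurry fun t x => F (n + 1) t x - F n t x) :=
    (h.stronglyMeasurable (n + 1)).sub (h.stronglyMeasurable n)
  have hslice (t) : eLpNorm (fun x => seqVariation fun n => F n t x) q
        (volume.restrict (fundCube d)) ≤
      spLp q (F 0 t) + ∑' n, spLp q (fun x => F (n + 1) t x - F n t x) := by
    refine (eLpNorm_add_tsum_le hq
      (((h.stronglyMeasurable 0).comp_measurable measurable_prodMk_left).enorm.aemeasurable)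
      fun n => ((hsub n).comp_measurable measurable_prodMk_left).enorm.aemeasurable).trans_eq ?_
    simp only [eLpNorm_enorm, spLp_eq_eLpNorm hq₀]
    rfl
  refine (eLpNorm_mono_enorm hslice).trans_lt ((eLpNorm_add_tsum_le hs
    (measurable_spLp hq' (h.stronglyMeasurable 0)).aemeasurable
    fun n => (measurable_spLp hq' (hsub n)).aemeasurable).trans_lt ?_)
  simp only [← LsLpT_eq_eLpNorm hs₀]
  exact add_lt_top.2 ⟨h.LsLpT_zero_lt_top, h.tsum_lt_top⟩

theorem LsLpT_lt_top_of_tendsto (h : HasSummableSteps T s q F) (hs : 1 ≤ s) (hq : 1 ≤ q)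
    (hq' : q ≠ ∞) {f : ℝ → Vec d → E} (hf : ∀ᵐ t ∂volume.restrict (Set.Ioo 0 T), ∀ x,
      Tendsto (fun n => F n t x) atTop (𝓝 (f t x))) : LsLpT T s q f < ∞ := by
  rw [← mixedNorm_enorm (one_pos.trans_le hs).ne' (one_pos.trans_le hq).ne']
  refine (eLpNorm_mono_enorm_ae ?_).trans_lt (h.mixedNorm_seqVariation_lt_top hs hq hq')
  filter_upwards [hf] with t ht
  exact eLpNorm_mono_enorm fun x => enorm_le_seqVariation_of_tendsto (ht x)

end HasSummableSteps

end MixedNorm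

section Transport

theorem SmoothPer.exists_enorm_mul_transport_le (Φ : SmoothPer d) (T : ℝ) :
    ∃ C : ℝ≥0∞, C ≠ ∞ ∧ ∀ t ∈ Set.Ioo 0 T, ∀ (x v : Vec d) (r : ℝ),
      ‖r * (Dt Φ (t, x) + dirDeriv (0, v) Φ (t, x))‖ₑ ≤ C * (‖r‖ₑ * (1 + ‖v‖ₑ)) := by
  classical
  obtain ⟨H, hH₁, hH⟩ := exists_common_bound (insert (Dt Φ) (Finset.univ.image (Dx · Φ))) T
  refine ⟨ENNReal.ofReal (H + d * H), ofReal_ne_top, fun t ht x v r => ?_⟩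
  have ht' := Set.Ioo_subset_Icc_self ht
  have htime : |Dt Φ (t, x)| ≤ H := hH _ (Finset.mem_insert_self _ _) t ht' x
  have hspace : |dirDeriv (0, v) Φ (t, x)| ≤ d * H * ‖v‖ := by
    rw [← fderiv_slice_apply, ← Real.norm_eq_abs]
    refine ContinuousLinearMap.le_of_opNorm_le _ (Φ.norm_fderiv_slice_le t (by linarith)
      fun k => hH _ ?_ t ht' x) v
    exact Finset.mem_insert_of_mem (Finset.mem_image_of_mem _ (Finset.mem_univ k))
  have hsum : |Dt Φ (t, x) + dirDeriv (0, v) Φ (t, x)| ≤ (H + d * H) * (1 + ‖v‖) := by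
    refine (abs_add_le _ _).trans ?_
    nlinarith [norm_nonneg v, mul_nonneg (norm_nonneg v) (zero_le_one.trans hH₁)]
  calc ‖r * (Dt Φ (t, x) + dirDeriv (0, v) Φ (t, x))‖ₑ
      ≤ ‖r‖ₑ * ENNReal.ofReal ((H + d * H) * (1 + ‖v‖)) := by
        rw [enorm_mul, Real.enorm_eq_ofReal_abs (_ + _)]
        gcongr
    _ = _ := by
        rw [ENNReal.ofReal_mul (by positivity), ENNReal.ofReal_add zero_le_one (norm_nonneg v),
          ofReal_one, ofReal_norm]
        ring

theorem ae_spaceTime_of_ae {T : ℝ} {P : ℝ → Prop}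
    (h : ∀ᵐ t ∂volume.restrict (Set.Ioo 0 T), P t) : ∀ᵐ z ∂spaceTime d T, P z.1 :=
  Measure.quasiMeasurePreserving_fst.ae h

theorem measurable_mul_transport (Φ : SmoothPer d) {r : ℝ → Vec d → ℝ} {u : ℝ → Vec d → Vec d}
    (hr : Measurable (Function.uncurry r)) (hu : Measurable (Function.uncurry u)) :
    Measurable fun z : ℝ × Vec d =>
      r z.1 z.2 * (Dt Φ z + dirDeriv (0, u z.1 z.2) Φ z) := by
  have hdir : Continuous fun y : (ℝ × Vec d) × Vec d => dirDeriv (0, y.2) Φ y.1 :=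
    ((Φ.contDiff.continuous_fderiv (by simp)).comp continuous_fst).clm_apply
      (continuous_const.prodMk continuous_snd)
  exact hr.mul ((Dt Φ).continuous.measurable.add
    (hdir.measurable.comp (measurable_id.prodMk hu)))

variable {T : ℝ} {s p s' q : ℝ≥0∞} (hs : s.HolderConjugate s') (hp : p.HolderConjugate q)
  (hp' : p ≠ ∞) (hq : q ≠ ∞) (Φ : SmoothPer d)

include hs hp hp' hq

theorem integrable_mul_transport {r : ℝ → Vec d → ℝ} {u : ℝ → Vec d → Vec d}
    (hr : Measurable (Function.uncurry r)) (hu : Measurable (Function.uncurry u))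
    (hr' : LsLpT T s p r < ∞) (hu' : LsLpT T s' q u < ∞) :
    Integrable (fun z => r z.1 z.2 * (Dt Φ z + dirDeriv (0, u z.1 z.2) Φ z)) (spaceTime d T) := by
  obtain ⟨C, hC, hΦ⟩ := Φ.exists_enorm_mul_transport_le T
  have hs₀ := ENNReal.HolderConjugate.ne_zero s s'
  have hs₀' := ENNReal.HolderConjugate.ne_zero s' s
  have hp₀ := ENNReal.HolderConjugate.ne_zero p q
  have hq₀ := ENNReal.HolderConjugate.ne_zero q p
  refine ⟨(measurable_mul_transport Φ hr hu).aestronglyMeasurable, ?_⟩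
  calc ∫⁻ z, ‖r z.1 z.2 * (Dt Φ z + dirDeriv (0, u z.1 z.2) Φ z)‖ₑ ∂spaceTime d T
      ≤ ∫⁻ z, C * (‖r z.1 z.2‖ₑ * (1 + ‖u z.1 z.2‖ₑ)) ∂spaceTime d T := by
        refine lintegral_mono_ae ?_
        filter_upwards [ae_spaceTime_of_ae (ae_restrict_mem measurableSet_Ioo)] with z hz
        exact hΦ z.1 hz z.2 _ _
    _ = C * ∫⁻ z, ‖r z.1 z.2‖ₑ * (1 + ‖u z.1 z.2‖ₑ) ∂spaceTime d T :=
        lintegral_const_mul' _ _ hC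
    _ < ∞ := mul_lt_top hC.lt_top (lintegral_mul_one_add_lt_top hs hp hp' hq hr.enorm hu.enorm
        ((mixedNorm_enorm hs₀ hp₀ r).trans_lt hr') ((mixedNorm_enorm hs₀' hq₀ u).trans_lt hu'))

theorem tendsto_integral_mul_transport {r : ℕ → ℝ → Vec d → ℝ} {u : ℕ → ℝ → Vec d → Vec d}
    (hr : HasSummableSteps T s p r) (hu : HasSummableSteps T s' q u) {r' : ℝ → Vec d → ℝ}
    {u' : ℝ → Vec d → Vec d} (hlim : ∀ᵐ t ∂volume.restrict (Set.Ioo 0 T), ∀ x,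
      Tendsto (fun n => r n t x) atTop (𝓝 (r' t x)) ∧
      Tendsto (fun n => u n t x) atTop (𝓝 (u' t x))) :
    Tendsto (fun n => ∫ z, r n z.1 z.2 * (Dt Φ z + dirDeriv (0, u n z.1 z.2) Φ z) ∂spaceTime d T)
      atTop (𝓝 (∫ z, r' z.1 z.2 * (Dt Φ z + dirDeriv (0, u' z.1 z.2) Φ z) ∂spaceTime d T)) := by
  obtain ⟨C, hC, hΦ⟩ := Φ.exists_enorm_mul_transport_le T
  let R : ℝ → Vec d → ℝ≥0∞ := fun t x => seqVariation fun n => r n t x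
  let U : ℝ → Vec d → ℝ≥0∞ := fun t x => seqVariation fun n => u n t x
  have hR_meas : Measurable (Function.uncurry R) := measurable_seqVariation hr.stronglyMeasurable
  have hU_meas : Measurable (Function.uncurry U) := measurable_seqVariation hu.stronglyMeasurable
  have hbound_fin : ∫⁻ z, C * (R z.1 z.2 * (1 + U z.1 z.2)) ∂spaceTime d T ≠ ∞ := by
    rw [lintegral_const_mul' _ _ hC]
    exact mul_ne_top hC (lintegral_mul_one_add_lt_top hs hp hp' hq hR_meas hU_meas
      (hr.mixedNorm_seqVariation_lt_top hs.one_le hp.one_le hp')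
      (hu.mixedNorm_seqVariation_lt_top hs.symm.one_le hp.symm.one_le hq)).ne
  have hbound_meas : Measurable fun z : ℝ × Vec d => C * (R z.1 z.2 * (1 + U z.1 z.2)) :=
    (hR_meas.mul (hU_meas.const_add 1)).const_mul C
  refine tendsto_integral_of_dominated_convergence
    (fun z => (C * (R z.1 z.2 * (1 + U z.1 z.2))).toReal)
    (fun n => (measurable_mul_transport Φ (hr.stronglyMeasurable n).measurable
      (hu.stronglyMeasurable n).measurable).aestronglyMeasurable)
    (integrable_toReal_of_lintegral_ne_top hbound_meas.aemeasurable hbound_fin) (fun n => ?_) ?_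
  · filter_upwards [ae_spaceTime_of_ae (ae_restrict_mem measurableSet_Ioo),
      ae_lt_top hbound_meas hbound_fin] with z hz hfin
    rw [← toReal_enorm]
    refine toReal_mono hfin.ne ((hΦ z.1 hz z.2 _ _).trans ?_)
    gcongr
    exacts [enorm_le_seqVariation (fun n => r n z.1 z.2) n,
      enorm_le_seqVariation (fun n => u n z.1 z.2) n]
  · filter_upwards [ae_spaceTime_of_ae hlim] with z hz
    have hdir : Continuous fun v : Vec d => dirDeriv (0, v) Φ z :=
      (fderiv ℝ Φ z).continuous.comp (continuous_const.prodMk continuous_id)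
    exact (hz z.2).1.mul (((hdir.tendsto _).comp (hz z.2).2).const_add _)

end Transport

section Sobolev

variable {q : ℝ≥0∞}

theorem spLp_add_le {E : Type*} [NormedAddCommGroup E] (hq : 1 ≤ q) {f g : Vec d → E}
    (hf : StronglyMeasurable f) (hg : StronglyMeasurable g) :
    spLp q (f + g) ≤ spLp q f + spLp q g := by
  simp only [spLp_eq_eLpNorm (one_pos.trans_le hq).ne']
  exact eLpNorm_add_le hf.aestronglyMeasurable hg.aestronglyMeasurable hq

theorem W1qNorm_add_le (hq : 1 ≤ q) {u v : Vec d → Vec d} (hu : Differentiable ℝ u)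
    (hv : Differentiable ℝ v) : W1qNorm q (u + v) ≤ W1qNorm q u + W1qNorm q v := by
  have hderiv : fderiv ℝ (u + v) = fderiv ℝ u + fderiv ℝ v :=
    funext fun x => fderiv_add (hu x) (hv x)
  rw [W1qNorm, W1qNorm, W1qNorm, hderiv, add_add_add_comm]
  exact add_le_add
    (spLp_add_le hq hu.continuous.stronglyMeasurable hv.continuous.stronglyMeasurable)
    (spLp_add_le hq (measurable_fderiv ℝ u).stronglyMeasurable
      (measurable_fderiv ℝ v).stronglyMeasurable)

theorem W1qNorm_zero (hq : q ≠ 0) : W1qNorm q (0 : Vec d → Vec d) = 0 := by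
  have hspLp {E : Type} [NormedAddCommGroup E] {f : Vec d → E} (hf : ∀ x, f x = 0) :
      spLp q f = 0 := by
    rw [spLp_eq_eLpNorm hq, funext hf, eLpNorm_zero']
  rw [W1qNorm, fderiv_zero]
  exact (congr_arg₂ (· + ·) (hspLp fun _ => rfl) (hspLp fun _ => rfl)).trans (add_zero 0)

theorem W1qNorm_le_tsum (hq : 1 ≤ q) {u : ℕ → Vec d → Vec d} (hu : ∀ n, Differentiable ℝ (u n))
    (h₀ : u 0 = 0) (n : ℕ) : W1qNorm q (u n) ≤ ∑' k, W1qNorm q (u (k + 1) - u k) := by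
  refine le_trans ?_ (ENNReal.sum_le_tsum (Finset.range n))
  induction n with
  | zero => rw [h₀, W1qNorm_zero (one_pos.trans_le hq).ne', Finset.sum_range_zero]
  | succ n ih =>
    rw [Finset.sum_range_succ]
    calc W1qNorm q (u (n + 1)) = W1qNorm q (u n + (u (n + 1) - u n)) := by rw [add_sub_cancel]
      _ ≤ W1qNorm q (u n) + W1qNorm q (u (n + 1) - u n) :=
        W1qNorm_add_le hq (hu n) ((hu (n + 1)).sub (hu n))
      _ ≤ _ := add_le_add_left ih _

theorem measurable_W1qNorm (hq : q ≠ ∞) {u : ℝ → Vec d → Vec d}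
    (hu : Continuous (Function.uncurry u)) : Measurable fun t => W1qNorm q (u t) :=
  (measurable_spLp hq hu.stronglyMeasurable).add
    (measurable_spLp hq (f := fun t => fderiv ℝ (u t))
      (measurable_fderiv_with_param ℝ hu).stronglyMeasurable)

theorem LsW1qT_one_le_tsum (hq : 1 ≤ q) (hq' : q ≠ ∞) {T : ℝ} {u : ℕ → ℝ → Vec d → Vec d}
    (hu : ∀ n, Continuous (Function.uncurry (u n))) (hu' : ∀ n t, Differentiable ℝ (u n t))
    (h₀ : u 0 = 0) {u' : ℝ → Vec d → Vec d}
    (h : ∀ᵐ t ∂volume.restrict (Set.Ioo 0 T), ∀ᶠ n in atTop, u n t = u' t) :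
    LsW1qT T 1 q u' ≤ ∑' n, LsW1qT T 1 q (fun t x => u (n + 1) t x - u n t x) := by
  simp only [LsW1qT_one]
  rw [← lintegral_tsum fun n => (measurable_W1qNorm hq' ((hu (n + 1)).sub (hu n))).aemeasurable]
  refine lintegral_mono_ae ?_
  filter_upwards [h] with t ht
  obtain ⟨n, hn⟩ := ht.exists
  rw [← hn]
  exact W1qNorm_le_tsum hq (u := fun k => u k t) (hu' · t) (congr_fun h₀ t) n

end Sobolev

theorem SmoothPer.tendsto_integral_mul {f g : ℕ → SmoothPer d} {T C : ℝ}
    (hf : Tendsto (fun n => l1Norm T (f n)) atTop (𝓝 0))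
    (hg : ∀ n, ∀ t ∈ Set.Icc 0 T, ∀ x, |g n (t, x)| ≤ C) :
    Tendsto (fun n => ∫ z, (f n * g n) z ∂spaceTime d T) atTop (𝓝 0) := by
  refine tendsto_zero_iff_enorm_tendsto_zero.2 (tendsto_of_tendsto_of_tendsto_of_le_of_le
    tendsto_const_nhds ?_ (fun _ => zero_le) fun n => (f n).enorm_integral_mul_le (g n) (hg n))
  simpa only [mul_zero] using ENNReal.Tendsto.const_mul hf (.inr ofReal_ne_top)

theorem closure_interior_fundCube (d : ℕ) : closure (interior (fundCube d)) = fundCube d := by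
  rw [fundCube, ← Set.pi_univ_Icc, interior_pi_set Set.finite_univ, closure_pi_set]
  exact congr_arg _ (funext fun i => closure_interior_Icc zero_ne_one)

theorem enorm_le_of_ae_enorm_le {E : Type*} [NormedAddCommGroup E] {f : Vec d → E} {c : ℝ≥0∞}
    (hf : Continuous f) (h : ∀ᵐ x ∂volume.restrict (fundCube d), ‖f x‖ₑ ≤ c) {x : Vec d}
    (hx : x ∈ fundCube d) : ‖f x‖ₑ ≤ c :=
  max_eq_right_iff.1 (Measure.eqOn_of_ae_eq (h.mono fun _ => max_eq_right)
    (hf.enorm.max continuous_const).continuousOn continuousOn_const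
    (closure_interior_fundCube d).ge hx)

theorem ae_ae_eq_zero_of_LsLpT_eq_zero {E : Type*} [NormedAddCommGroup E] {T : ℝ} {s q : ℝ≥0∞}
    (hs : s ≠ 0) (hq : q ≠ 0) (hq' : q ≠ ∞) {f : ℝ → Vec d → E}
    (hf : StronglyMeasurable (Function.uncurry f)) (h : LsLpT T s q f = 0) :
    ∀ᵐ t ∂volume.restrict (Set.Ioo 0 T), ∀ᵐ x ∂volume.restrict (fundCube d), f t x = 0 := by
  rw [LsLpT_eq_eLpNorm hs, eLpNorm_eq_zero_iff
    (measurable_spLp hq' hf).aestronglyMeasurable hs] at h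
  refine h.mono fun t ht => ?_
  exact (eLpNorm_eq_zero_iff
    (hf.comp_measurable measurable_prodMk_left).aestronglyMeasurable hq).1
    ((spLp_eq_eLpNorm hq (f t)).symm.trans ht)

/-- A sequence of solutions with defect, each a perturbation of the preceding one, for which the
sizes of the perturbations are summable and the defects tend to zero. -/
structure IsPerturbationSeq (T : ℝ) (s p s' q : ℝ≥0∞) (D : ℕ → DefectSolution d) (J : ℕ → Set ℝ)
    (eρ eu δ : ℕ → ℝ) : Prop where
  isPerturbation n : IsPerturbation T s p s' q (D n) (D (n + 1)) (J n) (eρ n) (eu n) (δ n)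
  summable_eρ : Summable eρ
  summable_eu : Summable eu
  summable_δ : Summable δ
  tendsto_R : Tendsto (fun n => l1Norm T (D n).R) atTop (𝓝 0)
  tendsto_S : Tendsto (fun n => l1Norm T (D n).S) atTop (𝓝 0)
  vel_zero : (D 0).vel = 0

/-- The pointwise limit of the densities, with junk values at the times of divergence. -/
def limitDensity (D : ℕ → DefectSolution d) (t : ℝ) (x : Vec d) : ℝ :=
  limUnder atTop fun n => (D n).ρ (t, x)

/-- The pointwise limit of the velocities, with junk values at the times of divergence. -/
def limitVel (D : ℕ → DefectSolution d) (t : ℝ) (x : Vec d) : Vec d :=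
  limUnder atTop fun n => (D n).vel t x

theorem measurable_limitDensity (D : ℕ → DefectSolution d) :
    Measurable (Function.uncurry (limitDensity D)) :=
  (StronglyMeasurable.limUnder fun n => (D n).ρ.continuous.stronglyMeasurable).measurable

theorem measurable_limitVel (D : ℕ → DefectSolution d) :
    Measurable (Function.uncurry (limitVel D)) :=
  (StronglyMeasurable.limUnder fun n =>
    (continuous_planeField (D n).i (D n).j (D n).v (D n).w).stronglyMeasurable).measurable

theorem limitDensity_zper (D : ℕ → DefectSolution d) (t : ℝ) : ZPer (limitDensity D t) :=
  fun x k => congr_arg (limUnder atTop) (funext fun n => (D n).ρ.zper t x k)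

theorem limitVel_zper (D : ℕ → DefectSolution d) (t : ℝ) : ZPer (limitVel D t) :=
  fun x k => congr_arg (limUnder atTop)
    (funext fun n => planeField_zper (D n).i (D n).j (D n).v (D n).w t x k)

namespace IsPerturbationSeq

variable {T : ℝ} {s p s' q : ℝ≥0∞} {D : ℕ → DefectSolution d} {J : ℕ → Set ℝ} {eρ eu δ : ℕ → ℝ}
  (h : IsPerturbationSeq T s p s' q D J eρ eu δ)

include h

theorem hasSummableSteps_ρ (hs : s ≠ 0) (hp : p ≠ 0) :
    HasSummableSteps T s p fun n t x => (D n).ρ (t, x) where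
  stronglyMeasurable n := (D n).ρ.continuous.stronglyMeasurable
  LsLpT_zero_lt_top := by
    obtain ⟨H, hH⟩ := (D 0).ρ.exists_bound T
    exact (LsLpT_le_of_norm_le hs hp fun t ht => hH t (Set.Ioo_subset_Icc_self ht)).trans_lt
      (mul_lt_top ofReal_lt_top (rpow_lt_top_of_nonneg toReal_nonneg ofReal_ne_top))
  tsum_lt_top := (ENNReal.tsum_le_tsum fun n => (h.isPerturbation n).LsLpT_ρ_sub_le).trans_lt
    h.summable_eρ.tsum_ofReal_lt_top

theorem hasSummableSteps_vel (hs' : s' ≠ 0) (hq : q ≠ 0) :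
    HasSummableSteps T s' q fun n => (D n).vel where
  stronglyMeasurable n :=
    (continuous_planeField (D n).i (D n).j (D n).v (D n).w).stronglyMeasurable
  LsLpT_zero_lt_top := by
    refine (LsLpT_le_of_norm_le hs' hq (c := 0) fun t _ x => ?_).trans_lt (by simp)
    simp [h.vel_zero]
  tsum_lt_top := (ENNReal.tsum_le_tsum fun n => (h.isPerturbation n).LsLpT_vel_sub_le).trans_lt
    h.summable_eu.tsum_ofReal_lt_top

theorem ae_eventually_notMem_J :
    ∀ᵐ t ∂volume.restrict (Set.Ioo 0 T), t ∈ Set.Ioo 0 T ∧ ∀ᶠ n in atTop, t ∉ J n :=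
  (ae_restrict_mem measurableSet_Ioo).and (ae_eventually_notMem
    ((ENNReal.tsum_le_tsum fun n => (h.isPerturbation n).volume_J_le).trans_lt
      h.summable_δ.tsum_ofReal_lt_top).ne)

theorem ae_eventually_vel_eq :
    ∀ᵐ t ∂volume.restrict (Set.Ioo 0 T), ∀ᶠ n in atTop, (D n).vel t = limitVel D t := by
  filter_upwards [h.ae_eventually_notMem_J] with t ⟨ht, hJ⟩
  obtain ⟨N, hN⟩ := eventually_atTop.1 hJ
  have hconst : ∀ n ≥ N, (D n).vel t = (D N).vel t := fun n hn => by
    induction n, hn using Nat.le_induction with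
    | base => rfl
    | succ n hn ih => rw [(h.isPerturbation n).vel_eq t ht (hN n hn), ih]
  have hlim : limitVel D t = (D N).vel t := funext fun x => Tendsto.limUnder_eq <|
    tendsto_const_nhds.congr' (eventually_atTop.2 ⟨N, fun n hn => congr_fun (hconst n hn).symm x⟩)
  exact eventually_atTop.2 ⟨N, fun n hn => (hconst n hn).trans hlim.symm⟩

theorem ae_tendsto : ∀ᵐ t ∂volume.restrict (Set.Ioo 0 T), ∀ x,
    Tendsto (fun n => (D n).ρ (t, x)) atTop (𝓝 (limitDensity D t x)) ∧
      Tendsto (fun n => (D n).vel t x) atTop (𝓝 (limitVel D t x)) := by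
  filter_upwards [h.ae_eventually_notMem_J, h.ae_eventually_vel_eq] with t ⟨ht, hJ⟩ hvel x
  refine ⟨tendsto_nhds_limUnder (cauchySeq_tendsto_of_complete (cauchySeq_of_summable_dist ?_)),
    tendsto_const_nhds.congr' (hvel.mono fun n hn => congr_fun hn.symm x)⟩
  refine h.summable_δ.of_norm_bounded_eventually_nat (hJ.mono fun n hn => ?_)
  rw [Real.norm_of_nonneg dist_nonneg, dist_comm]
  exact (h.isPerturbation n).abs_ρ_sub_le t ht hn x

theorem LsW1qT_limitVel_lt_top (hq : 1 ≤ q) (hq' : q ≠ ∞) : LsW1qT T 1 q (limitVel D) < ∞ :=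
  (LsW1qT_one_le_tsum hq hq' (u := fun n => (D n).vel)
    (fun n => continuous_planeField (D n).i (D n).j (D n).v (D n).w)
    (fun n => differentiable_planeField (D n).i (D n).j (D n).v (D n).w)
    h.vel_zero h.ae_eventually_vel_eq).trans_lt
    ((ENNReal.tsum_le_tsum fun n => (h.isPerturbation n).LsW1qT_vel_sub_le).trans_lt
      h.summable_δ.tsum_ofReal_lt_top)

theorem weaklyDivFree_limitVel : WeaklyDivFree d T (limitVel D) := fun φ hφ hper => by
  let Φ : SmoothPer d := ⟨Function.uncurry φ, hφ, hper⟩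
  refine integral_eq_zero_of_ae ?_
  filter_upwards [h.ae_eventually_vel_eq] with t ht
  obtain ⟨n, hn⟩ := ht.exists
  rw [← hn]
  refine (integral_congr_ae (.of_forall fun x => ?_)).trans ((D n).setIntegral_dirDeriv_vel Φ t)
  exact Φ.fderiv_slice_apply t x _

theorem tendsto_integral_ρ_mul (hT : 0 < T) {Φ : SmoothPer d} (hΦ : ∀ x, Φ (T, x) = 0) :
    Tendsto (fun n => ∫ z, (D n).ρ z * (Dt Φ z + dirDeriv (0, (D n).vel z.1 z.2) Φ z)
      ∂spaceTime d T) atTop (𝓝 0) := by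
  classical
  obtain ⟨H, -, hH⟩ := SmoothPer.exists_common_bound (Finset.univ.image (Dx · Φ)) T
  have hbound (k : Fin d) := hH (Dx k Φ) (Finset.mem_image_of_mem _ (Finset.mem_univ k))
  simp only [DefectSolution.integral_ρ_mul _ hT hΦ]
  simpa only [add_zero] using
    (SmoothPer.tendsto_integral_mul h.tendsto_R fun n => hbound (D n).i).add
      (SmoothPer.tendsto_integral_mul h.tendsto_S fun n => hbound (D n).j)

theorem LsLpT_limitDensity_lt_top (hs : 1 ≤ s) (hp : 1 ≤ p) (hp' : p ≠ ∞) :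
    LsLpT T s p (limitDensity D) < ∞ :=
  (h.hasSummableSteps_ρ (one_pos.trans_le hs).ne'
    (one_pos.trans_le hp).ne').LsLpT_lt_top_of_tendsto hs hp hp'
      (h.ae_tendsto.mono fun _ ht x => (ht x).1)

theorem LsLpT_limitVel_lt_top (hs' : 1 ≤ s') (hq : 1 ≤ q) (hq' : q ≠ ∞) :
    LsLpT T s' q (limitVel D) < ∞ :=
  (h.hasSummableSteps_vel (one_pos.trans_le hs').ne'
    (one_pos.trans_le hq).ne').LsLpT_lt_top_of_tendsto hs' hq hq'
      (h.ae_tendsto.mono fun _ ht x => (ht x).2)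

theorem isWeakSolution_limitDensity (hs : s.HolderConjugate s') (hp : p.HolderConjugate q)
    (hp' : p ≠ ∞) (hq : q ≠ ∞) (hT : 0 < T) :
    IsWeakSolution d T (limitVel D) (limitDensity D) 0 := by
  rintro φ ⟨hφ, hper, T', hT', hφT⟩
  let Φ : SmoothPer d := ⟨Function.uncurry φ, hφ, hper⟩
  have hlim := tendsto_integral_mul_transport hs hp hp' hq Φ
    (h.hasSummableSteps_ρ hs.ne_zero hp.ne_zero)
    (h.hasSummableSteps_vel hs.symm.ne_zero hp.symm.ne_zero) h.ae_tendsto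
  have hzero := tendsto_nhds_unique hlim (h.tendsto_integral_ρ_mul hT (hφT T hT'.le))
  rw [spaceTime, integral_prod _ (integrable_mul_transport hs hp hp' hq Φ
    (measurable_limitDensity D) (measurable_limitVel D)
    (h.LsLpT_limitDensity_lt_top hs.one_le hp.one_le hp')
    (h.LsLpT_limitVel_lt_top hs.symm.one_le hp.symm.one_le hq))] at hzero
  simp only [Pi.zero_apply, zero_mul, integral_zero]
  refine hzero.symm.trans (congr_arg (integral _) (funext fun t => congr_arg (integral _)
    (funext fun x => ?_)))
  rw [← (Φ.hasDerivAt_time t x).deriv, ← Φ.fderiv_slice_apply]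
  rfl

theorem ae_enorm_ρ_zero_le : ∀ᵐ t ∂volume.restrict (Set.Ioo 0 T), t ∉ ⋃ n, J n → ∀ x,
    ‖(D 0).ρ (t, x) - limitDensity D t x‖ₑ ≤ ∑' n, ENNReal.ofReal (δ n) := by
  filter_upwards [h.ae_tendsto, ae_restrict_mem measurableSet_Ioo] with t hlim ht hJ x
  rw [← edist_eq_enorm_sub]
  refine edist_le_tsum_of_edist_le_of_tendsto₀ _ (fun n => ?_) (hlim x).1
  rw [edist_comm, edist_dist]
  exact ENNReal.ofReal_le_ofReal ((h.isPerturbation n).abs_ρ_sub_le t ht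
    (fun hn => hJ (Set.mem_iUnion.2 ⟨n, hn⟩)) x)

theorem LsLpT_limitDensity_ne_zero (hs : s ≠ 0) (hp : p ≠ 0) (hp' : p ≠ ∞)
    (h₀ : ∀ t ∈ Set.Ioo 0 T, ∃ x ∈ fundCube d, t ≤ |(D 0).ρ (t, x)|)
    (hδ : 2 * ∑' n, ENNReal.ofReal (δ n) < ENNReal.ofReal T) :
    LsLpT T s p (limitDensity D) ≠ 0 := fun hzero => by
  set σ := ∑' n, ENNReal.ofReal (δ n)
  have hσ : σ ≠ ∞ := h.summable_δ.tsum_ofReal_ne_top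
  have hlim := ae_ae_eq_zero_of_LsLpT_eq_zero hs hp hp'
    (measurable_limitDensity D).stronglyMeasurable hzero
  have hcover : ∀ᵐ t ∂volume.restrict (Set.Ioo 0 T), t ∈ (⋃ n, J n) ∪ Set.Iic σ.toReal := by
    filter_upwards [hlim, h.ae_enorm_ρ_zero_le, ae_restrict_mem measurableSet_Ioo]
      with t hlim hclose ht
    refine or_iff_not_imp_left.2 fun hJ => ?_
    obtain ⟨x, hx, htx⟩ := h₀ t ht
    have hle : ‖(D 0).ρ (t, x)‖ₑ ≤ σ := enorm_le_of_ae_enorm_le (f := fun x => (D 0).ρ (t, x))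
      ((D 0).ρ.continuous.comp (Continuous.prodMk_right t))
      (hlim.mono fun x hx => by simpa only [hx, sub_zero] using hclose hJ x) hx
    exact htx.trans ((toReal_enorm _).ge.trans (toReal_mono hσ hle))
  refine hδ.not_ge ?_
  calc ENNReal.ofReal T = volume.restrict (Set.Ioo 0 T) Set.univ := by simp
    _ ≤ volume.restrict (Set.Ioo 0 T) ((⋃ n, J n) ∪ Set.Iic σ.toReal) :=
      measure_mono_ae (hcover.mono fun t ht _ => ht)
    _ ≤ (∑' n, volume.restrict (Set.Ioo 0 T) (J n)) +
        volume.restrict (Set.Ioo 0 T) (Set.Iic σ.toReal) :=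
      (measure_union_le _ _).trans (add_le_add_left (measure_iUnion_le J) _)
    _ ≤ σ + σ := by
      refine add_le_add (ENNReal.tsum_le_tsum fun n => (h.isPerturbation n).volume_J_le) ?_
      rw [Measure.restrict_apply measurableSet_Iic]
      calc volume (Set.Iic σ.toReal ∩ Set.Ioo 0 T) ≤ volume (Set.Ioc 0 σ.toReal) :=
            measure_mono fun t ht => ⟨ht.2.1, ht.1⟩
        _ = σ := by rw [Real.volume_Ioc, sub_zero, ofReal_toReal hσ]
    _ = 2 * σ := (two_mul σ).symm

end IsPerturbationSeq

/-! ### The iteration -/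

theorem l1Norm_le_add_l1Norm_sub (T : ℝ) (f g : SmoothPer d) :
    l1Norm T g ≤ l1Norm T f + l1Norm T (g - f) := by
  have hf : Measurable fun z : ℝ × Vec d => ENNReal.ofReal |f z| :=
    f.continuous.abs.measurable.ennreal_ofReal
  simp only [l1Norm]
  rw [← lintegral_add_left hf.lintegral_prod_right']
  refine lintegral_mono fun t => ?_
  rw [← lintegral_add_left (f := fun x => ENNReal.ofReal |f (t, x)|)
    (hf.comp measurable_prodMk_left)]
  refine lintegral_mono fun x => ?_
  rw [← ENNReal.ofReal_add (abs_nonneg _) (abs_nonneg _)]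
  refine ENNReal.ofReal_le_ofReal ?_
  have hle := abs_add_le (f (t, x)) (g (t, x) - f (t, x))
  rwa [add_sub_cancel] at hle

theorem l1Norm_zero (T : ℝ) : l1Norm T (0 : SmoothPer d) = 0 := by
  simp [l1Norm]

theorem IsPerturbation.swap_right {T : ℝ} {s p s' q : ℝ≥0∞} {D D' : DefectSolution d} {J : Set ℝ}
    {eρ eu δ : ℝ} (h : IsPerturbation T s p s' q D D' J eρ eu δ) :
    IsPerturbation T s p s' q D D'.swap J eρ eu δ where
  LsLpT_ρ_sub_le := h.LsLpT_ρ_sub_le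
  LsLpT_vel_sub_le := D'.vel_swap ▸ h.LsLpT_vel_sub_le
  LsW1qT_vel_sub_le := D'.vel_swap ▸ h.LsW1qT_vel_sub_le
  volume_J_le := h.volume_J_le
  vel_eq := D'.vel_swap ▸ h.vel_eq
  abs_ρ_sub_le := h.abs_ρ_sub_le

section Iterate

variable {T : ℝ} (hT : 0 < T) {s p s' q : ℝ≥0∞} (hs : s.HolderConjugate s') (hs' : s ≠ ∞)
  (hp : p.HolderConjugate q) (hp' : p ≠ ∞) (hq : q ≠ ∞)

include hT hs hs' hp hp' hq

-- The new defect is small in the direction just treated; exchanging the directions puts its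
-- large component, inherited from `S`, first again.
theorem exists_isPerturbation_l1Norm_lt (P : Profile) {D : DefectSolution d} {ε ε' l δ σ : ℝ}
    (hl : 0 < l) (hδ : 0 < δ) (hσ : 0 ≤ σ) (hε' : σ + δ < ε')
    (hR : l1Norm T D.R < ENNReal.ofReal ε) (hS : l1Norm T D.S ≤ ENNReal.ofReal σ) :
    ∃ (D' : DefectSolution d) (J : Set ℝ), IsPerturbation T s p s' q D D' J
        (4 * P.bound ^ 2 * l * (2 * ε) ^ s⁻¹.toReal + δ * T ^ s⁻¹.toReal)
        (8 * P.bound ^ 2 * l⁻¹ * (2 * ε) ^ s'⁻¹.toReal) δ ∧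
      l1Norm T D'.R < ENNReal.ofReal ε' ∧ l1Norm T D'.S ≤ ENNReal.ofReal δ := by
  obtain ⟨D', J, hD', hR', hS'⟩ := exists_isPerturbation hT hs hs' hp hp' hq P hl hδ hR
  refine ⟨D'.swap, J, hD'.swap_right, ?_, hR'⟩
  calc l1Norm T D'.S ≤ l1Norm T D.S + l1Norm T (D'.S - D.S) := l1Norm_le_add_l1Norm_sub T _ _
    _ ≤ ENNReal.ofReal σ + ENNReal.ofReal δ := add_le_add hS hS'
    _ = ENNReal.ofReal (σ + δ) := (ENNReal.ofReal_add hσ hδ.le).symm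
    _ < ENNReal.ofReal ε' :=
      (ENNReal.ofReal_lt_ofReal_iff ((add_pos_of_nonneg_of_pos hσ hδ).trans hε')).2 hε'

theorem exists_iterate_isPerturbation (P : Profile) {ε l σ : ℕ → ℝ} (hl : ∀ n, 0 < l n)
    (hσ : ∀ n, 0 < σ n) (hε : ∀ n, σ n + σ (n + 1) < ε (n + 1)) {D₀ : DefectSolution d}
    (hR : l1Norm T D₀.R < ENNReal.ofReal (ε 0)) (hS : l1Norm T D₀.S ≤ ENNReal.ofReal (σ 0)) :
    ∃ (D : ℕ → DefectSolution d) (J : ℕ → Set ℝ), D 0 = D₀ ∧ ∀ n,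
      IsPerturbation T s p s' q (D n) (D (n + 1)) (J n)
        (4 * P.bound ^ 2 * l n * (2 * ε n) ^ s⁻¹.toReal + σ (n + 1) * T ^ s⁻¹.toReal)
        (8 * P.bound ^ 2 * (l n)⁻¹ * (2 * ε n) ^ s'⁻¹.toReal) (σ (n + 1)) ∧
      l1Norm T (D n).R < ENNReal.ofReal (ε n) ∧ l1Norm T (D n).S ≤ ENNReal.ofReal (σ n) := by
  let Stage (n : ℕ) := {D : DefectSolution d //
    l1Norm T D.R < ENNReal.ofReal (ε n) ∧ l1Norm T D.S ≤ ENNReal.ofReal (σ n)}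
  have hstep (n : ℕ) (D : Stage n) : ∃ (D' : Stage (n + 1)) (J : Set ℝ),
      IsPerturbation T s p s' q D.1 D'.1 J
        (4 * P.bound ^ 2 * l n * (2 * ε n) ^ s⁻¹.toReal + σ (n + 1) * T ^ s⁻¹.toReal)
        (8 * P.bound ^ 2 * (l n)⁻¹ * (2 * ε n) ^ s'⁻¹.toReal) (σ (n + 1)) := by
    obtain ⟨D', J, hJ, hD'⟩ := exists_isPerturbation_l1Norm_lt hT hs hs' hp hp' hq P (hl n)
      (hσ (n + 1)) (hσ n).le (hε n) D.2.1 D.2.2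
    exact ⟨⟨D', hD'⟩, J, hJ⟩
  choose next J hnext using hstep
  let D (n : ℕ) : Stage n := Nat.rec ⟨D₀, hR, hS⟩ next n
  exact ⟨fun n => (D n).1, fun n => J n (D n), rfl, fun n => ⟨hnext n (D n), (D n).2⟩⟩

end Iterate

theorem exists_rpow_eq_quarter {a : ℝ} (ha : 0 < a) (ha' : a ≤ 1) :
    ∃ r : ℝ, 0 < r ∧ r ≤ 1 / 4 ∧ r ^ a = 1 / 4 := by
  refine ⟨(1 / 4) ^ a⁻¹, by positivity, ?_, Real.rpow_inv_rpow (by norm_num) ha.ne'⟩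
  simpa only [Real.rpow_one] using Real.rpow_le_rpow_of_exponent_ge (x := 1 / 4) (by norm_num)
    (by norm_num) ((one_le_inv₀ ha).2 ha')

theorem summable_two_pow_mul_rpow {E r a : ℝ} (hE : 0 ≤ E) (hr : 0 ≤ r) (hra : r ^ a = 1 / 4) :
    Summable fun n : ℕ => 2 ^ n * (E * r ^ n) ^ a := by
  refine (summable_geometric_two.mul_left (E ^ a)).congr fun n => ?_
  rw [Real.mul_rpow hE (by positivity), ← Real.rpow_pow_comm hr, hra, mul_left_comm, ← mul_pow]
  norm_num

theorem summable_two_pow_inv_mul_rpow {E r b : ℝ} (hE : 0 ≤ E) (hr : 0 ≤ r) (hr' : r ≤ 1)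
    (hb : 0 ≤ b) : Summable fun n : ℕ => (2 ^ n)⁻¹ * (E * r ^ n) ^ b := by
  refine (summable_geometric_two.mul_left (E ^ b)).of_nonneg_of_le (fun n => by positivity)
    fun n => ?_
  rw [mul_comm, one_div, inv_pow]
  gcongr
  exact mul_le_of_le_one_right hE (pow_le_one₀ hr hr')

theorem tsum_ofReal_mul_pow_succ_le {c r : ℝ} (hc : 0 ≤ c) (hr : 0 ≤ r) (hr' : r ≤ 1 / 2) :
    ∑' n : ℕ, ENNReal.ofReal (c * r ^ (n + 1)) ≤ ENNReal.ofReal c := by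
  have hr₁ : r < 1 := by linarith
  have hsum : HasSum (fun n : ℕ => c * r ^ (n + 1)) (c * (r * (1 - r)⁻¹)) := by
    simpa only [pow_succ'] using ((hasSum_geometric_of_lt_one hr hr₁).mul_left r).mul_left c
  rw [← ENNReal.ofReal_tsum_of_nonneg (fun n => by positivity) hsum.summable, hsum.tsum_eq]
  refine ENNReal.ofReal_le_ofReal (mul_le_of_le_one_right hc ?_)
  rw [← div_eq_mul_inv, div_le_one (by linarith)]
  linarith

theorem exists_isPerturbationSeq {T : ℝ} (hT : 0 < T) {s p s' q : ℝ≥0∞}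
    (hs : s.HolderConjugate s') (hs' : s ≠ ∞) (hp : p.HolderConjugate q) (hp' : p ≠ ∞)
    (hq : q ≠ ∞) {D₀ : DefectSolution d} (hS : D₀.S = 0) (hvel : D₀.vel = 0) {η : ℝ}
    (hη : 0 < η) : ∃ (D : ℕ → DefectSolution d) (J : ℕ → Set ℝ) (eρ eu δ : ℕ → ℝ),
      IsPerturbationSeq T s p s' q D J eρ eu δ ∧ D 0 = D₀ ∧
        ∑' n, ENNReal.ofReal (δ n) ≤ ENNReal.ofReal η := by
  obtain ⟨P⟩ := nonempty_profile
  obtain ⟨r, hr, hr', hra⟩ :=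
    exists_rpow_eq_quarter (toReal_inv_pos hs.ne_zero hs') (toReal_inv_le_one hs.one_le)
  obtain ⟨E, hE, hRE⟩ : ∃ E : ℝ, 0 < E ∧ l1Norm T D₀.R < ENNReal.ofReal E :=
    ⟨(l1Norm T D₀.R).toReal + 1, by positivity,
      (lt_ofReal_iff_toReal_lt (l1Norm_lt_top T _).ne).2 (lt_add_one _)⟩
  have hr₁ : r < 1 := by linarith
  set c : ℝ := min (E * r / 4) η
  have hc : 0 < c := by positivity
  have hcE : c ≤ E * r / 4 := min_le_left _ _
  have hgeom : Summable fun n : ℕ => c * r ^ (n + 1) :=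
    ((summable_nat_add_iff 1).2 (summable_geometric_of_lt_one hr.le hr₁)).mul_left c
  obtain ⟨D, J, hD₀, hD⟩ := exists_iterate_isPerturbation hT hs hs' hp hp' hq P
    (ε := fun n => E * r ^ n) (l := fun n => 2 ^ n) (σ := fun n => c * r ^ n) (D₀ := D₀)
    (fun n => by positivity) (fun n => by positivity)
    (fun n => by
      calc c * r ^ n + c * r ^ (n + 1) = r ^ n * (c * (1 + r)) := by ring
        _ ≤ r ^ n * (E * r / 4 * (1 + r)) := by gcongr
        _ < r ^ n * (E * r) :=
          mul_lt_mul_of_pos_left (by nlinarith [mul_pos hE hr]) (by positivity)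
        _ = E * r ^ (n + 1) := by ring)
    (by simpa using hRE) (by simp [hS, l1Norm_zero])
  have hgeom₀ (C : ℝ) : Tendsto (fun n => ENNReal.ofReal (C * r ^ n)) atTop (𝓝 0) := by
    simpa using tendsto_ofReal ((tendsto_pow_atTop_nhds_zero_of_lt_one hr.le hr₁).const_mul C)
  have heρ := ((summable_two_pow_mul_rpow (E := 2 * E) (by positivity) hr.le hra).mul_left
    (4 * P.bound ^ 2)).add (hgeom.mul_right (T ^ s⁻¹.toReal))
  have heu := (summable_two_pow_inv_mul_rpow (E := 2 * E) (by positivity) hr.le hr₁.le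
    (toReal_nonneg (a := s'⁻¹))).mul_left (8 * P.bound ^ 2)
  refine ⟨D, J, _, _, _, ⟨fun n => ?_, heρ, heu, hgeom,
    tendsto_of_tendsto_of_tendsto_of_le_of_le tendsto_const_nhds (hgeom₀ E) (fun _ => zero_le)
      fun n => (hD n).2.1.le,
    tendsto_of_tendsto_of_tendsto_of_le_of_le tendsto_const_nhds (hgeom₀ c) (fun _ => zero_le)
      fun n => (hD n).2.2, by rw [hD₀, hvel]⟩, hD₀, ?_⟩
  · simpa only [mul_assoc] using (hD n).1
  · exact (tsum_ofReal_mul_pow_succ_le hc.le hr.le (by linarith)).trans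
      (ENNReal.ofReal_le_ofReal (min_le_right _ _))

theorem periodic_deriv {q : ℝ → ℝ} {c : ℝ} (hq : q.Periodic c) : (deriv q).Periodic c := fun y => by
  rw [← deriv_comp_add_const, funext hq]

/-- The density `t q'(xᵢ)` with zero velocity, whose defect is `q(xᵢ) eᵢ`. -/
def staticSolution {i j : Fin d} (hij : i ≠ j) {q : ℝ → ℝ} (hq : ContDiff ℝ (⊤ : ℕ∞) q)
    (hper : q.Periodic 1) : DefectSolution d where
  i := i
  j := j
  i_ne_j := hij
  ρ := ofTime id contDiff_id * ofCoord i (deriv q) (contDiff_deriv hq) (periodic_deriv hper)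
  v := 0
  w := 0
  R := ofCoord i q hq hper
  S := 0
  eq := by
    ext z
    rw [mul_zero, map_zero, map_zero, add_zero, add_zero, add_zero, Derivation.leibniz,
      Dt_ofCoord, smul_zero, zero_add, Dx_ofCoord_self]
    change deriv q (z.2 i) * Dt (ofTime id contDiff_id) z = _
    rw [dirDeriv_ofTime, one_mul, deriv_id, mul_one]
  div_eq := by rw [map_zero, map_zero, add_zero]
  ρ_zero _ := zero_mul _

theorem exists_defectSolution_le_abs_ρ (hd : 2 ≤ d) : ∃ D : DefectSolution d, D.S = 0 ∧
    D.vel = 0 ∧ ∀ t, ∃ x ∈ fundCube d, t ≤ |D.ρ (t, x)| := by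
  let q (y : ℝ) : ℝ := Real.sin (2 * Real.pi * y) / (2 * Real.pi)
  have hq : ContDiff ℝ (⊤ : ℕ∞) q := by fun_prop
  have hper : q.Periodic 1 := fun y => by simp [q, mul_add]
  have hderiv : deriv q 0 = 1 := by
    have hsin := (((hasDerivAt_id (0 : ℝ)).const_mul (2 * Real.pi)).sin.div_const (2 * Real.pi))
    exact hsin.deriv.trans (by simp)
  have hij : (⟨0, by lia⟩ : Fin d) ≠ ⟨1, by lia⟩ := by simp
  refine ⟨staticSolution hij hq hper, rfl, ?_, fun t => ⟨0, ⟨le_rfl, zero_le_one⟩, ?_⟩⟩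
  · ext t x k
    change (0 : ℝ) * _ + 0 * _ = 0
    rw [zero_mul, zero_mul, add_zero]
  · change t ≤ |t * deriv _ 0|
    rw [hderiv, mul_one]
    exact le_abs_self t

theorem LsLpT_zero {T : ℝ} {s q : ℝ≥0∞} (hs : s ≠ 0) (hq : q ≠ 0) {E : Type*}
    [NormedAddCommGroup E] : LsLpT T s q (fun _ (_ : Vec d) => (0 : E)) = 0 :=
  le_zero_iff.1 <| (LsLpT_le_of_norm_le (c := 0) hs hq fun _ _ _ => norm_zero.le).trans (by simp)

theorem isWeakSolution_zero (T : ℝ) (u : ℝ → Vec d → Vec d) :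
    IsWeakSolution d T u (fun _ _ => 0) 0 := fun φ _ => by
  simp only [Pi.zero_apply, zero_mul, integral_zero]

theorem exists_isPerturbationSeq_LsLpT_ne_zero (hd : 2 ≤ d) {T : ℝ} (hT : 0 < T)
    {s p s' q : ℝ≥0∞} (hs : s.HolderConjugate s') (hs' : s ≠ ∞) (hp : p.HolderConjugate q)
    (hp' : p ≠ ∞) (hq : q ≠ ∞) :
    ∃ (D : ℕ → DefectSolution d) (J : ℕ → Set ℝ) (eρ eu δ : ℕ → ℝ),
      IsPerturbationSeq T s p s' q D J eρ eu δ ∧ LsLpT T s p (limitDensity D) ≠ 0 := by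
  obtain ⟨D₀, hS, hvel, h₀⟩ := exists_defectSolution_le_abs_ρ hd
  obtain ⟨D, J, eρ, eu, δ, h, rfl, hδ⟩ :=
    exists_isPerturbationSeq hT hs hs' hp hp' hq hS hvel (η := T / 3) (by positivity)
  refine ⟨D, J, eρ, eu, δ, h,
    h.LsLpT_limitDensity_ne_zero hs.ne_zero hp.ne_zero hp' (fun t _ => h₀ t) ?_⟩
  calc 2 * ∑' n, ENNReal.ofReal (δ n) ≤ ENNReal.ofReal 2 * ENNReal.ofReal (T / 3) := by
        rw [ofReal_ofNat]
        gcongr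
    _ = ENNReal.ofReal (2 * (T / 3)) := (ENNReal.ofReal_mul zero_le_two).symm
    _ < ENNReal.ofReal T := (ENNReal.ofReal_lt_ofReal_iff hT).2 (by linarith)

end TransportNonuniqueness

end

open TransportNonuniqueness in
theorem nonuniqueness_transport_L1W1p'_general
    (d : ℕ) (hd : 2 ≤ d)
    (p s : ℝ) (hp : 1 < p)
    (p' : ℝ) (hp' : p' = p / (p - 1))
    (s' : ℝ≥0∞) (hs' : 1 / ENNReal.ofReal s + 1 / s' = 1)
    (T : ℝ) (hT : 0 < T) :
    ∃ u : ℝ → Vec d → Vec d,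
      Measurable (Function.uncurry u) ∧
      (∀ t, ZPer (u t)) ∧
      WeaklyDivFree d T u ∧
      LsW1qT T 1 (ENNReal.ofReal p') u < ∞ ∧
      LsLpT T s' (ENNReal.ofReal p') u < ∞ ∧
      ∃ (ρ₁ ρ₂ : ℝ → Vec d → ℝ) (ρ₀ : Vec d → ℝ),
        Measurable (Function.uncurry ρ₁) ∧ Measurable (Function.uncurry ρ₂) ∧
        (∀ t, ZPer (ρ₁ t)) ∧ (∀ t, ZPer (ρ₂ t)) ∧
        LsLpT T (ENNReal.ofReal s) (ENNReal.ofReal p) ρ₁ < ∞ ∧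
        LsLpT T (ENNReal.ofReal s) (ENNReal.ofReal p) ρ₂ < ∞ ∧
        IsWeakSolution d T u ρ₁ ρ₀ ∧ IsWeakSolution d T u ρ₂ ρ₀ ∧
        LsLpT T (ENNReal.ofReal s) (ENNReal.ofReal p)
          (fun t x => ρ₁ t x - ρ₂ t x) ≠ 0 := by
  have hss' : (ENNReal.ofReal s).HolderConjugate s' :=
    ENNReal.holderConjugate_iff.2 (by simpa only [one_div] using hs')
  have hpp' : (ENNReal.ofReal p).HolderConjugate (ENNReal.ofReal p') := by
    rw [hp']
    exact (Real.HolderConjugate.conjExponent hp).ennrealOfReal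
  obtain ⟨D, J, eρ, eu, δ, h, hne⟩ := exists_isPerturbationSeq_LsLpT_ne_zero hd hT hss'
    ofReal_ne_top hpp' ofReal_ne_top ofReal_ne_top
  refine ⟨limitVel D, measurable_limitVel D, limitVel_zper D, h.weaklyDivFree_limitVel,
    h.LsW1qT_limitVel_lt_top hpp'.symm.one_le ofReal_ne_top,
    h.LsLpT_limitVel_lt_top hss'.symm.one_le hpp'.symm.one_le ofReal_ne_top,
    limitDensity D, fun _ _ => 0, 0, measurable_limitDensity D, measurable_const,
    limitDensity_zper D, fun _ _ _ => rfl,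
    h.LsLpT_limitDensity_lt_top hss'.one_le hpp'.one_le ofReal_ne_top,
    (LsLpT_zero hss'.ne_zero hpp'.ne_zero).trans_lt zero_lt_top,
    h.isWeakSolution_limitDensity hss' hpp' ofReal_ne_top ofReal_ne_top hT,
    isWeakSolution_zero T _, ?_⟩
  simpa only [sub_zero] using hne

/-- **Non-uniqueness for `u ∈ L^1(0,T;W^{1,p'}) ∩ L^{s'}(0,T;L^{p'})`**
(Corollary, part (i)): for `d ≥ 3`, `p ∈ (1,∞)`, `s ∈ [1,∞)`, there is a
divergence-free `u ∈ L^1(0,T;W^{1,p'}) ∩ L^{s'}(0,T;L^{p'})` such that uniqueness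
of weak solutions of the transport equation fails in `L^s(0,T;L^p)`. -/
theorem nonuniqueness_transport_L1W1p'
    (d : ℕ) (hd : 3 ≤ d)
    (p s : ℝ) (hp : 1 < p) (hs : 1 ≤ s)
    (p' : ℝ) (hp' : p' = p / (p - 1))
    (s' : ℝ≥0∞) (hs' : 1 / ENNReal.ofReal s + 1 / s' = 1)
    (T : ℝ) (hT : 0 < T) :
    ∃ u : ℝ → Vec d → Vec d,
      Measurable (Function.uncurry u) ∧
      (∀ t, ZPer (u t)) ∧
      WeaklyDivFree d T u ∧
      LsW1qT T 1 (ENNReal.ofReal p') u < ∞ ∧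
      LsLpT T s' (ENNReal.ofReal p') u < ∞ ∧
      ∃ (ρ₁ ρ₂ : ℝ → Vec d → ℝ) (ρ₀ : Vec d → ℝ),
        Measurable (Function.uncurry ρ₁) ∧ Measurable (Function.uncurry ρ₂) ∧
        (∀ t, ZPer (ρ₁ t)) ∧ (∀ t, ZPer (ρ₂ t)) ∧
        LsLpT T (ENNReal.ofReal s) (ENNReal.ofReal p) ρ₁ < ∞ ∧
        LsLpT T (ENNReal.ofReal s) (ENNReal.ofReal p) ρ₂ < ∞ ∧
        IsWeakSolution d T u ρ₁ ρ₀ ∧ IsWeakSolution d T u ρ₂ ρ₀ ∧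
        LsLpT T (ENNReal.ofReal s) (ENNReal.ofReal p)
          (fun t x => ρ₁ t x - ρ₂ t x) ≠ 0 :=
  nonuniqueness_transport_L1W1p'_general d (by lia) p s hp p' hp' s' hs' T hT
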